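/- arXiv:1611.10315 — 3 statements merged into one kernel-verified Lean document; each statement's English description precedes it below -/
import Mathlib

section
/- For every integer k ≥ 1 there is a constant C = C(k) such that the following holds for every bipartite graph H with bipartition (S,T), |S| = |T| = k, and all γ, δ ∈ (0,1/2): there is n₀ = n₀(k,δ,γ) such that every graph G on n ≥ n₀ vertices either contains at least (γδ)^C·n^{2k} induced bipartite copies of H, or there exist an equipartition Q = {Q₁,…,Q_q} of V(G) with δ^{-1} ≤ q ≤ δ^{-C} parts and subsets U_i ⊆ Q_i such that: (1) for all but at most δq² of the pairs 1 ≤ i < j ≤ q, the pair (Q_i,Q_j) is δ-homogeneous and the dominant value of (U_i,U_j) equals the dominant value of (Q_i,Q_j); (2) (U_i,U_j) is γ-homogeneous for every 1 ≤ i < j ≤ q; and (3) |U_i| ≥ (γδ)^C·n for every 1 ≤ i ≤ q. -/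
open scoped Classical
open Finset

noncomputable section

/-- Number of unordered vertex pairs on which two graphs on the same vertex set differ. -/
def editDist {n : ℕ} (G H : SimpleGraph (Fin n)) : ℕ :=
  Set.ncard {e : Sym2 (Fin n) | (e ∈ G.edgeSet ∧ e ∉ H.edgeSet) ∨ (e ∉ G.edgeSet ∧ e ∈ H.edgeSet)}

/-- `G` is `ε`-far from satisfying the graph property `P`. -/
def Far (P : ∀ n : ℕ, Set (SimpleGraph (Fin n))) {n : ℕ} (G : SimpleGraph (Fin n)) (ε : ℝ) : Prop :=
  ∀ H : SimpleGraph (Fin n), H ∈ P n → ε * (n : ℝ) ^ 2 ≤ (editDist G H : ℝ)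

/-- The subgraph induced by a vertex subset `Q` of size `m`, as a graph on `Fin m`. -/
def inducedOn {n : ℕ} (G : SimpleGraph (Fin n)) {m : ℕ} (Q : Finset (Fin n))
    (h : Q.card = m) : SimpleGraph (Fin m) :=
  G.comap fun i => ((Q.orderIsoOfFin h) i : Fin n)

/-- A graph property is easily testable if for some constant `c > 0`, for every `ε ∈ (0,1/2)`
and every graph on at least `ε ^ (-c)` vertices which is `ε`-far from `P`, at least a
`2/3`-fraction of the `⌈ε ^ (-c)⌉`-element vertex subsets induce a subgraph not satisfying `P`. -/
def EasilyTestable (P : ∀ n : ℕ, Set (SimpleGraph (Fin n))) : Prop :=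
  ∃ c : ℝ, 0 < c ∧ ∀ ε : ℝ, 0 < ε → ε < 1 / 2 → ∀ n : ℕ, ∀ G : SimpleGraph (Fin n),
    ε ^ (-c) ≤ (n : ℝ) → Far P G ε →
    (2 / 3 : ℝ) * (((Finset.univ : Finset (Fin n)).powersetCard ⌈ε ^ (-c)⌉₊).card : ℝ) ≤
      ((((Finset.univ : Finset (Fin n)).powersetCard ⌈ε ^ (-c)⌉₊).filter
        fun Q => ∃ h : Q.card = ⌈ε ^ (-c)⌉₊, inducedOn G Q h ∉ P ⌈ε ^ (-c)⌉₊).card : ℝ)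

/-- The property of being induced `𝓕`-free. -/
def InducedFree (𝓕 : Set (Σ k : ℕ, SimpleGraph (Fin k))) : ∀ n : ℕ, Set (SimpleGraph (Fin n)) :=
  fun n => {G | ∀ p ∈ 𝓕, IsEmpty (p.2 ↪g G)}

/-- A graph is bipartite: its vertex set can be partitioned into two independent sets. -/
def IsBipGraph {V : Type*} (H : SimpleGraph V) : Prop :=
  ∃ A : Set V, (∀ u ∈ A, ∀ v ∈ A, ¬ H.Adj u v) ∧ (∀ u ∉ A, ∀ v ∉ A, ¬ H.Adj u v)

/-- A graph is co-bipartite: its vertex set can be partitioned into two cliques. -/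
def IsCoBipGraph {V : Type*} (H : SimpleGraph V) : Prop :=
  ∃ A : Set V, (∀ u ∈ A, ∀ v ∈ A, u ≠ v → H.Adj u v) ∧ (∀ u ∉ A, ∀ v ∉ A, u ≠ v → H.Adj u v)

/-- A graph is split: its vertex set can be partitioned into a clique and an independent set. -/
def IsSplitGraph {V : Type*} (H : SimpleGraph V) : Prop :=
  ∃ A : Set V, (∀ u ∈ A, ∀ v ∈ A, u ≠ v → H.Adj u v) ∧ (∀ u ∉ A, ∀ v ∉ A, ¬ H.Adj u v)

/-- The number of induced bipartite copies in `G` of the bipartite graph with bipartition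
`(Fin k, Fin k)` and edge relation `B`: injections `φ` of the two sides into `V(G)` such that
for all `s ∈ S`, `t ∈ T` we have `B s t ↔ φ s ∼ φ t` (no condition inside the sides). -/
def bipCopyCount {k n : ℕ} (B : Fin k → Fin k → Prop) (G : SimpleGraph (Fin n)) : ℕ :=
  Set.ncard {φ : (Fin k ⊕ Fin k) ↪ Fin n |
    ∀ s t : Fin k, B s t ↔ G.Adj (φ (Sum.inl s)) (φ (Sum.inr t))}

/-- The edge density `d(X,Y)` between two (disjoint) vertex sets, as a real number. -/
def dens {n : ℕ} (G : SimpleGraph (Fin n)) (X Y : Finset (Fin n)) : ℝ :=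
  (G.edgeDensity X Y : ℝ)

/-- The pair `(X,Y)` is `δ`-homogeneous: `d(X,Y) ≥ 1 - δ` or `d(X,Y) ≤ δ`. -/
def HomPair {n : ℕ} (G : SimpleGraph (Fin n)) (δ : ℝ) (X Y : Finset (Fin n)) : Prop :=
  1 - δ ≤ dens G X Y ∨ dens G X Y ≤ δ

/-- The dominant value of the pair `(X,Y)` is `1` (it is `0` otherwise). -/
def DomOne {n : ℕ} (G : SimpleGraph (Fin n)) (X Y : Finset (Fin n)) : Prop :=
  1 / 2 ≤ dens G X Y

/-- `Q` is an equipartition: the parts are disjoint, cover everything, and their sizes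
differ by at most one. -/
def IsEquipartition {n q : ℕ} (Q : Fin q → Finset (Fin n)) : Prop :=
  (∀ i j : Fin q, i ≠ j → Disjoint (Q i) (Q j)) ∧ (∀ v : Fin n, ∃ i, v ∈ Q i) ∧
  (∀ i j : Fin q, (Q i).card ≤ (Q j).card + 1)



/-- adjacency indicator -/
def adjI {n : ℕ} (G : SimpleGraph (Fin n)) (u v : Fin n) : ℝ := if G.Adj u v then 1 else 0

/-- fibre of a labelling -/
def cls {n : ℕ} {L : Type*} (g : Fin n → L) (a : L) : Finset (Fin n) := univ.filter fun u => g u = a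

lemma mem_cls {n : ℕ} {L : Type*} (g : Fin n → L) (a : L) (u : Fin n) : u ∈ cls g a ↔ g u = a := by
  simp [cls]

lemma sum_cls {n : ℕ} {L : Type*} [Fintype L] (g : Fin n → L) (F : Fin n → ℝ) :
    ∑ a, ∑ u ∈ cls g a, F u = ∑ u, F u := by
  rw [← Finset.sum_fiberwise univ g F]
  refine Finset.sum_congr rfl fun a _ => Finset.sum_congr ?_ fun _ _ => rfl
  ext u; simp [cls]

/-- number of vertices distinguishing two vertices -/
def nbd {n : ℕ} (G : SimpleGraph (Fin n)) (u v : Fin n) : ℕ :=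
  ((univ : Finset (Fin n)).filter fun y => ¬ (G.Adj u y ↔ G.Adj v y)).card

lemma adjI_nonneg {n : ℕ} (G : SimpleGraph (Fin n)) (u v : Fin n) : 0 ≤ adjI G u v := by
  unfold adjI; split_ifs <;> norm_num

lemma adjI_le {n : ℕ} (G : SimpleGraph (Fin n)) (u v : Fin n) : adjI G u v ≤ 1 := by
  unfold adjI; split_ifs <;> norm_num

lemma adjI_comm {n : ℕ} (G : SimpleGraph (Fin n)) (u v : Fin n) : adjI G u v = adjI G v u := by
  unfold adjI; simp only [G.adj_comm]

lemma adjI_tri (a b c : ℝ) (ha : 0 ≤ a) (ha1 : a ≤ 1) (hb : 0 ≤ b) (hb1 : b ≤ 1)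
    (hc : 0 ≤ c) (hc1 : c ≤ 1) : a * (1 - b) ≤ a * (1 - c) + c * (1 - b) := by
  nlinarith [mul_nonneg ha hb, mul_nonneg (sub_nonneg.2 ha1) (mul_nonneg hc (sub_nonneg.2 hb1)), mul_nonneg (mul_nonneg ha hb) (sub_nonneg.2 hc1)]

lemma dens_eq {n : ℕ} (G : SimpleGraph (Fin n)) (X Y : Finset (Fin n)) :
    dens G X Y = (∑ u ∈ X, ∑ v ∈ Y, adjI G u v) / ((#X : ℝ) * #Y) := by
  unfold _root_.dens SimpleGraph.edgeDensity Rel.edgeDensity adjI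
  push_cast
  congr 1
  rw [Rel.interedges, Finset.card_filter, Finset.sum_product]
  push_cast
  rfl

lemma dens_nonneg {n : ℕ} (G : SimpleGraph (Fin n)) (X Y : Finset (Fin n)) : 0 ≤ dens G X Y := by
  unfold _root_.dens; exact_mod_cast G.edgeDensity_nonneg X Y

lemma dens_le {n : ℕ} (G : SimpleGraph (Fin n)) (X Y : Finset (Fin n)) : dens G X Y ≤ 1 := by
  unfold _root_.dens; exact_mod_cast G.edgeDensity_le_one X Y

lemma dens_mul {n : ℕ} (G : SimpleGraph (Fin n)) (X Y : Finset (Fin n)) :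
    (#X : ℝ) * #Y * dens G X Y = ∑ u ∈ X, ∑ v ∈ Y, adjI G u v := by
  rw [dens_eq]
  by_cases hX : X = ∅
  · simp [hX]
  by_cases hY : Y = ∅
  · simp [hY]
  have h1 : (#X : ℝ) ≠ 0 := by simpa using hX
  have h2 : (#Y : ℝ) ≠ 0 := by simpa using hY
  field_simp

lemma pair_defect {n : ℕ} (G : SimpleGraph (Fin n)) (X Y : Finset (Fin n)) :
    (#X : ℝ) * #Y * (dens G X Y * (1 - dens G X Y)) ≤
      (1 / (#X : ℝ)) * ∑ u ∈ X, ∑ u' ∈ X, ∑ v ∈ Y, adjI G u v * (1 - adjI G u' v) +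
      (1 / (#Y : ℝ)) * ∑ v ∈ Y, ∑ v' ∈ Y, ∑ u ∈ X, adjI G u v * (1 - adjI G u v') := by
  by_cases hX : X = ∅
  · simp [hX]
  by_cases hY : Y = ∅
  · simp [hY]
  have h1 : (0:ℝ) < #X := by simpa [Finset.card_pos, Finset.nonempty_iff_ne_empty] using hX
  have h2 : (0:ℝ) < #Y := by simpa [Finset.card_pos, Finset.nonempty_iff_ne_empty] using hY
  have key : (∑ u ∈ X, ∑ v ∈ Y, adjI G u v) * (∑ u ∈ X, ∑ v ∈ Y, (1 - adjI G u v)) ≤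
      (#Y : ℝ) * (∑ u ∈ X, ∑ u' ∈ X, ∑ v ∈ Y, adjI G u v * (1 - adjI G u' v)) +
      (#X : ℝ) * ∑ v ∈ Y, ∑ v' ∈ Y, ∑ u ∈ X, adjI G u v * (1 - adjI G u v') := by
    have e1 : (∑ u ∈ X, ∑ v ∈ Y, adjI G u v) * (∑ u ∈ X, ∑ v ∈ Y, (1 - adjI G u v)) =
        ∑ u ∈ X, ∑ u' ∈ X, ∑ v ∈ Y, ∑ v' ∈ Y, adjI G u v * (1 - adjI G u' v') := by
      rw [Finset.sum_mul_sum]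
      refine Finset.sum_congr rfl fun u _ => Finset.sum_congr rfl fun u' _ => ?_
      rw [Finset.sum_mul_sum]
    have e2 : (#Y : ℝ) * (∑ u ∈ X, ∑ u' ∈ X, ∑ v ∈ Y, adjI G u v * (1 - adjI G u' v)) =
        ∑ u ∈ X, ∑ u' ∈ X, ∑ v ∈ Y, ∑ v' ∈ Y, adjI G u v * (1 - adjI G u' v) := by
      simp only [Finset.sum_const, nsmul_eq_mul, Finset.mul_sum]
    have e3 : (#X : ℝ) * (∑ v ∈ Y, ∑ v' ∈ Y, ∑ u ∈ X, adjI G u v * (1 - adjI G u v')) =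
        ∑ u ∈ X, ∑ u' ∈ X, ∑ v ∈ Y, ∑ v' ∈ Y, adjI G u' v * (1 - adjI G u' v') := by
      rw [Finset.sum_const, nsmul_eq_mul]
      congr 1
      symm
      rw [Finset.sum_comm]
      refine Finset.sum_congr rfl fun v _ => ?_
      rw [Finset.sum_comm]
    rw [e1, e2, e3, ← Finset.sum_add_distrib]
    refine Finset.sum_le_sum fun u _ => ?_
    rw [← Finset.sum_add_distrib]
    refine Finset.sum_le_sum fun u' _ => ?_
    rw [← Finset.sum_add_distrib]
    refine Finset.sum_le_sum fun v _ => ?_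
    rw [← Finset.sum_add_distrib]
    refine Finset.sum_le_sum fun v' _ => ?_
    apply adjI_tri <;> first | apply adjI_nonneg | apply adjI_le
  have hd := dens_mul G X Y
  have hd' : (#X : ℝ) * #Y * (1 - dens G X Y) = ∑ u ∈ X, ∑ v ∈ Y, (1 - adjI G u v) := by
    simp only [Finset.sum_sub_distrib, ← hd]
    simp; ring
  rw [← hd, ← hd'] at key
  set P := ∑ u ∈ X, ∑ u' ∈ X, ∑ v ∈ Y, adjI G u v * (1 - adjI G u' v)
  set R := ∑ v ∈ Y, ∑ v' ∈ Y, ∑ u ∈ X, adjI G u v * (1 - adjI G u v')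
  have : (1 / (#X : ℝ)) * P + (1 / (#Y : ℝ)) * R = ((#Y : ℝ) * P + #X * R) / (#X * #Y) := by
    field_simp
  rw [this, le_div_iff₀ (by positivity)]
  calc _ = _ := by ring
    _ ≤ _ := key

lemma tsum_le_nbd {n : ℕ} (G : SimpleGraph (Fin n)) (u u' : Fin n) :
    ∑ v, adjI G u v * (1 - adjI G u' v) ≤ nbd G u u' := by
  unfold nbd
  rw [Finset.card_filter]
  push_cast
  refine Finset.sum_le_sum fun v _ => ?_
  unfold adjI
  by_cases h1 : G.Adj u v <;> by_cases h2 : G.Adj u' v <;> simp [h1, h2]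

lemma class_sum {n : ℕ} (G : SimpleGraph (Fin n)) {L : Type*} [Fintype L] (g : Fin n → L)
    (E : Finset (Fin n)) (ε : ℝ) (hE : (#E : ℝ) ≤ ε * n)
    (h : ∀ u, u ∉ E → ∀ v, v ∉ E → g u = g v → (nbd G u v : ℝ) ≤ ε * n) :
    ∑ a : L, (1 / (#(cls g a) : ℝ)) *
      (∑ u ∈ cls g a, ∑ u' ∈ cls g a,
        ∑ v, adjI G u v * (1 - adjI G u' v)) ≤ 3 * ε * (n : ℝ) ^ 2 := by
  have hε : 0 ≤ ε * n := le_trans (by positivity) hE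
  have main : ∀ a : L, (1 / (#(cls g a) : ℝ)) *
      (∑ u ∈ cls g a, ∑ u' ∈ cls g a,
        ∑ v, adjI G u v * (1 - adjI G u' v)) ≤
      (∑ u ∈ cls g a, (ε * n + 2 * n * (if u ∈ E then 1 else 0))) := by
    intro a
    set X := cls g a with hX
    by_cases hX0 : X = ∅
    · simp [hX0]
    have h1 : (0:ℝ) < #X := by simpa [Finset.card_pos, Finset.nonempty_iff_ne_empty] using hX0
    have : ∑ u ∈ X, ∑ u' ∈ X, ∑ v, adjI G u v * (1 - adjI G u' v) ≤
        ∑ u ∈ X, ∑ u' ∈ X, ((ε * n + (n * if u ∈ E then 1 else 0)) + (n * if u' ∈ E then 1 else 0)) := by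
      refine Finset.sum_le_sum fun u hu => Finset.sum_le_sum fun u' hu' => ?_
      refine (tsum_le_nbd G u u').trans ?_
      have hn : (nbd G u u' : ℝ) ≤ n := by
        unfold nbd
        exact_mod_cast (Finset.card_le_univ _).trans (by simp)
      have hn0 : (0:ℝ) ≤ n := by positivity
      by_cases hu1 : u ∈ E
      · simp only [hu1, if_true]; split_ifs <;> linarith
      by_cases hu2 : u' ∈ E
      · simp only [hu1, hu2, if_true, if_false]; linarith
      simp only [hu1, hu2, if_false]
      have := h u hu1 u' hu2 (by rw [hX, mem_cls] at hu hu'; rw [hu, hu'])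
      linarith
    rw [one_div, inv_mul_le_iff₀ h1]
    refine this.trans (le_of_eq ?_)
    simp only [Finset.sum_add_distrib, Finset.sum_const, nsmul_eq_mul, Finset.mul_sum]
    simp only [← Finset.mul_sum]
    ring
  refine (Finset.sum_le_sum fun a _ => main a).trans ?_
  rw [sum_cls]
  rw [Finset.sum_add_distrib]
  simp only [← Finset.mul_sum]
  simp
  nlinarith [hE, Nat.cast_nonneg (α := ℝ) n]

lemma defect_sum {n : ℕ} (G : SimpleGraph (Fin n)) {L : Type*} [Fintype L] (g : Fin n → L)
    (E : Finset (Fin n)) (ε : ℝ) (hE : (#E : ℝ) ≤ ε * n)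
    (h : ∀ u, u ∉ E → ∀ v, v ∉ E → g u = g v → (nbd G u v : ℝ) ≤ ε * n) :
    ∑ a : L, ∑ b : L, (#(cls g a) : ℝ) * #(cls g b) *
      (dens G (cls g a) (cls g b) *
        (1 - dens G (cls g a) (cls g b)))
      ≤ 6 * ε * (n : ℝ) ^ 2 := by
  refine (Finset.sum_le_sum fun a _ => Finset.sum_le_sum fun b _ => pair_defect G _ _).trans ?_
  have hc := class_sum G g E ε hE h
  simp only [Finset.sum_add_distrib]
  have s1 : ∑ a : L, ∑ b : L, (1 / (#(cls g a) : ℝ)) *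
      (∑ u ∈ cls g a, ∑ u' ∈ cls g a,
        ∑ v ∈ cls g b, adjI G u v * (1 - adjI G u' v)) =
     ∑ a : L, (1 / (#(cls g a) : ℝ)) *
      (∑ u ∈ cls g a, ∑ u' ∈ cls g a,
        ∑ v, adjI G u v * (1 - adjI G u' v)) := by
    refine Finset.sum_congr rfl fun a _ => ?_
    rw [← Finset.mul_sum]
    congr 1
    rw [Finset.sum_comm]
    refine Finset.sum_congr rfl fun u _ => ?_
    rw [Finset.sum_comm]
    refine Finset.sum_congr rfl fun u' _ => ?_
    rw [sum_cls]
  have s2 : ∑ a : L, ∑ b : L, (1 / (#(cls g b) : ℝ)) *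
      (∑ v ∈ cls g b, ∑ v' ∈ cls g b,
        ∑ u ∈ cls g a, adjI G u v * (1 - adjI G u v')) =
     ∑ a : L, (1 / (#(cls g a) : ℝ)) *
      (∑ u ∈ cls g a, ∑ u' ∈ cls g a,
        ∑ v, adjI G u v * (1 - adjI G u' v)) := by
    rw [Finset.sum_comm, ← s1]
    refine Finset.sum_congr rfl fun a _ => Finset.sum_congr rfl fun b _ => ?_
    congr 1
    refine Finset.sum_congr rfl fun u _ => Finset.sum_congr rfl fun v _ => Finset.sum_congr rfl fun w _ => ?_
    rw [adjI_comm G w u, adjI_comm G w v]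
  rw [s1, s2]
  linarith

lemma not_hom_defect {n : ℕ} (G : SimpleGraph (Fin n)) (γ : ℝ) (X Y : Finset (Fin n))
    (h : ¬ HomPair G γ X Y) : γ / 2 ≤ dens G X Y * (1 - dens G X Y) := by
  unfold HomPair at h
  push Not at h
  obtain ⟨h1, h2⟩ := h
  nlinarith [dens_nonneg G X Y, dens_le G X Y]


lemma find_copy {k M t : ℕ} (ht : 1 ≤ t) (B : Fin k → Fin k → Prop) (R : Fin M → Fin t → Prop)
    (N : Finset (Fin M)) (hinj : ∀ i ∈ N, ∀ j ∈ N, i ≠ j → ∃ b, ¬ (R i b ↔ R j b))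
    (hN : 2 * k * t ^ (2 * k) < #N) :
    ∃ I : Fin k → Fin M, ∃ J : Fin k → Fin t, Function.Injective I ∧ Function.Injective J ∧
      ∀ s u, B s u ↔ R (I s) (J u) := by
  set tr : Fin M → Finset (Fin t) := fun i => univ.filter fun b => R i b with htr
  set A : Finset (Finset (Fin t)) := N.image tr with hA
  have hcard : #A = #N := by
    apply Finset.card_image_of_injOn
    intro i hi j hj hij
    by_contra hne
    obtain ⟨b, hb⟩ := hinj i hi j hj hne
    apply hb
    have : b ∈ tr i ↔ b ∈ tr j := by rw [hij]
    simpa [htr] using this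
  have hv : 2 * k ≤ A.vcDim := by
    by_contra hlt
    push Not at hlt
    have h1 := (Finset.card_le_card_shatterer A).trans Finset.card_shatterer_le_sum_vcDim
    have h2 : ∑ i ∈ Finset.Iic A.vcDim, (Fintype.card (Fin t)).choose i ≤ 2 * k * t ^ (2 * k) := by
      calc _ ≤ ∑ i ∈ Finset.Iic A.vcDim, t ^ (2 * k) := by
            refine Finset.sum_le_sum fun i hi => ?_
            rw [Fintype.card_fin]
            refine (Nat.choose_le_pow t i).trans (Nat.pow_le_pow_right ht ?_)
            have := Finset.mem_Iic.1 hi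
            omega
        _ = (A.vcDim + 1) * t ^ (2 * k) := by simp
        _ ≤ _ := Nat.mul_le_mul_right _ (by omega)
    omega
  obtain ⟨S, hS, hSc⟩ : ∃ S, A.Shatters S ∧ 2 * k ≤ #S := by
    by_cases hk : k = 0
    · subst hk
      refine ⟨∅, ?_, by simp⟩
      rw [Finset.shatters_empty, ← Finset.card_pos, hcard]; omega
    · rw [Finset.vcDim] at hv
      obtain ⟨S, hS, h⟩ := (Finset.le_sup_iff (by show 0 < 2 * k; omega)).1 hv
      exact ⟨S, Finset.mem_shatterer.1 hS, h⟩
  obtain ⟨e⟩ : Nonempty ((Fin k ⊕ Fin k) ↪ S) := by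
    apply Function.Embedding.nonempty_of_card_le
    simp; omega
  have ex : ∀ s : Fin k, ∃ i : Fin M, ∀ c : Fin k ⊕ Fin k, R i (e c) ↔
      (∃ u, c = Sum.inl u ∧ B s u) ∨ c = Sum.inr s := by
    intro s
    set T : Finset (Fin t) := (univ.filter fun c : Fin k ⊕ Fin k =>
      (∃ u, c = Sum.inl u ∧ B s u) ∨ c = Sum.inr s).image fun c => (e c : Fin t) with hT
    have hTS : T ⊆ S := by
      intro b hb
      obtain ⟨c, _, rfl⟩ := Finset.mem_image.1 hb
      exact (e c).2
    obtain ⟨U, hU, hUT⟩ := hS hTS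
    obtain ⟨i, hi, rfl⟩ := Finset.mem_image.1 hU
    refine ⟨i, fun c => ?_⟩
    have h1 : (e c : Fin t) ∈ T ↔ (e c : Fin t) ∈ tr i := by
      rw [← hUT]; simp
    have h2 : (e c : Fin t) ∈ tr i ↔ R i (e c) := by simp [htr]
    rw [← h2, ← h1, hT]
    constructor
    · intro h
      obtain ⟨c', hc', heq⟩ := Finset.mem_image.1 h
      have : c' = c := e.injective (Subtype.ext heq)
      subst this
      exact (Finset.mem_filter.1 hc').2
    · intro h
      exact Finset.mem_image.2 ⟨c, Finset.mem_filter.2 ⟨Finset.mem_univ _, h⟩, rfl⟩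
  choose I hI using ex
  refine ⟨I, fun u => e (Sum.inl u), ?_, ?_, ?_⟩
  · intro s s' hss
    have h1 := (hI s (Sum.inr s)).2 (Or.inr rfl)
    rw [hss] at h1
    simpa using (hI s' (Sum.inr s)).1 h1
  · intro u u' h
    simpa using e.injective (Subtype.ext h)
  · intro s u
    rw [hI]
    simp

lemma fiber_card {n k M : ℕ} (I : Fin k → Fin M) (hI : Function.Injective I) (a : Fin k → Fin n) :
    #(univ.filter fun x : Fin M → Fin n => x ∘ I = a) * n ^ k = n ^ M := by
  have h1 : (univ.filter fun x : Fin M → Fin n => x ∘ I = a) =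
      Fintype.piFinset (fun i => if h : ∃ s, I s = i then {a h.choose} else univ) := by
    ext x
    simp only [Finset.mem_filter, Finset.mem_univ, true_and, Fintype.mem_piFinset]
    constructor
    · intro h i
      split_ifs with hi
      · rw [Finset.mem_singleton, ← h]
        simp [hi.choose_spec]
      · simp
    · intro h
      funext s
      have := h (I s)
      have hs : ∃ s', I s' = I s := ⟨s, rfl⟩
      rw [dif_pos hs, Finset.mem_singleton] at this
      rw [Function.comp, this, hI hs.choose_spec]
  rw [h1, Fintype.card_piFinset]
  have h2 : ∀ i : Fin M, #(if h : ∃ s, I s = i then ({a h.choose} : Finset (Fin n)) else univ) =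
      if i ∈ univ.image I then 1 else n := by
    intro i
    by_cases h : ∃ s, I s = i
    · rw [dif_pos h, if_pos (by simpa using h)]; simp
    · rw [dif_neg h, if_neg (by simpa using h)]; simp
  simp only [h2]
  have h3 : n ^ k = ∏ i : Fin M, if i ∈ univ.image I then n else 1 := by
    rw [Finset.prod_ite]
    simp only [Finset.prod_const, one_pow, mul_one]
    congr 1
    rw [Finset.filter_mem_eq_inter, Finset.univ_inter, Finset.card_image_of_injective _ hI]
    simp
  rw [h3, ← Finset.prod_mul_distrib]
  rw [Finset.prod_congr rfl (g := fun _ => n)]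
  · simp
  · intro i _; split_ifs <;> simp

/-- homomorphic bipartite copies -/
def homs {k n : ℕ} (B : Fin k → Fin k → Prop) (G : SimpleGraph (Fin n)) :
    Finset ((Fin k → Fin n) × (Fin k → Fin n)) :=
  univ.filter fun p => ∀ s t, B s t ↔ G.Adj (p.1 s) (p.2 t)

lemma homs_le {k n : ℕ} (B : Fin k → Fin k → Prop) (G : SimpleGraph (Fin n)) :
    #(homs B G) + n.descFactorial (2 * k) ≤ bipCopyCount B G + n ^ (2 * k) := by
  set S : Finset ((Fin k ⊕ Fin k) → Fin n) :=
    univ.filter fun z => ∀ s t, B s t ↔ G.Adj (z (Sum.inl s)) (z (Sum.inr t)) with hS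
  set J : Finset ((Fin k ⊕ Fin k) → Fin n) := univ.filter fun z => Function.Injective z with hJ
  have h1 : #(homs B G) = #S := by
    apply Finset.card_equiv (Equiv.sumArrowEquivProdArrow (Fin k) (Fin k) (Fin n)).symm
    intro p
    simp [homs, hS]
    exact Iff.rfl
  have h2 : #J = n.descFactorial (2 * k) := by
    have : n.descFactorial (2 * k) = Fintype.card ((Fin k ⊕ Fin k) ↪ Fin n) := by
      rw [Fintype.card_embedding_eq]; simp [two_mul]
    rw [this]
    rw [← Fintype.card_coe]
    apply Fintype.card_congr
    exact (Equiv.subtypeEquivRight (by intro x; simp [hJ])).trans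
      (Equiv.subtypeInjectiveEquivEmbedding _ _)
  have h3 : bipCopyCount B G = #(S ∩ J) := by
    unfold bipCopyCount
    rw [Set.ncard_eq_toFinset_card']
    apply Finset.card_bij (fun (φ : (Fin k ⊕ Fin k) ↪ Fin n) _ => (φ : (Fin k ⊕ Fin k) → Fin n))
    · intro φ hφ
      simp at hφ
      simp [hS, hJ, φ.injective]
      exact hφ
    · intro φ _ ψ _ h
      exact DFunLike.coe_injective h
    · intro z hz
      simp [hS, hJ] at hz
      exact ⟨⟨z, hz.2⟩, by simpa using hz.1, rfl⟩
  have h4 : #(S ∪ J) ≤ n ^ (2 * k) := by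
    refine (Finset.card_le_univ _).trans ?_
    simp [two_mul]
  have := Finset.card_union_add_card_inter S J
  omega

lemma homs_count {k n M t : ℕ} (B : Fin k → Fin k → Prop) (G : SimpleGraph (Fin n))
    (I : Fin k → Fin M) (J : Fin k → Fin t) (hI : Function.Injective I)
    (hJ : Function.Injective J) :
    #(univ.filter fun p : (Fin M → Fin n) × (Fin t → Fin n) =>
      ∀ s u, B s u ↔ G.Adj (p.1 (I s)) (p.2 (J u))) * n ^ (2 * k) = #(homs B G) * n ^ (M + t) := by
  have h1 : #(univ.filter fun p : (Fin M → Fin n) × (Fin t → Fin n) =>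
      ∀ s u, B s u ↔ G.Adj (p.1 (I s)) (p.2 (J u))) =
      ∑ ab ∈ homs B G, #(univ.filter fun x : Fin M → Fin n => x ∘ I = ab.1) *
        #(univ.filter fun x : Fin t → Fin n => x ∘ J = ab.2) := by
    rw [Finset.card_eq_sum_card_fiberwise (f := fun p => (p.1 ∘ I, p.2 ∘ J)) (t := homs B G)]
    · refine Finset.sum_congr rfl fun ab hab => ?_
      rw [← Finset.card_product]
      congr 1
      ext ⟨x, y⟩
      simp only [Finset.mem_filter, Finset.mem_univ, true_and, Finset.mem_product]
      constructor
      · rintro ⟨_, h⟩; exact ⟨congrArg Prod.fst h, congrArg Prod.snd h⟩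
      · rintro ⟨h1, h2⟩
        simp [homs] at hab
        rw [← h1, ← h2] at hab
        exact ⟨hab, Prod.ext h1 h2⟩
    · intro p hp
      simp [homs] at hp ⊢
      exact hp
  rw [h1, Finset.sum_mul, Finset.sum_congr rfl (g := fun _ => n ^ (M + t))]
  · simp
  · intro ab _
    have e1 := fiber_card I hI ab.1
    have e2 := fiber_card J hJ ab.2
    calc _ = (#(univ.filter fun x : Fin M → Fin n => x ∘ I = ab.1) * n ^ k) *
        (#(univ.filter fun x : Fin t → Fin n => x ∘ J = ab.2) * n ^ k) := by ring
      _ = _ := by rw [e1, e2]; ring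

lemma undist_count {n M t : ℕ} (G : SimpleGraph (Fin n)) (ε : ℝ) (hε1 : ε ≤ 1) (i j : Fin M) :
    (#(univ.filter fun p : (Fin M → Fin n) × (Fin t → Fin n) =>
      ε * n < nbd G (p.1 i) (p.1 j) ∧ ∀ b, (G.Adj (p.1 i) (p.2 b) ↔ G.Adj (p.1 j) (p.2 b))) : ℝ) ≤
      (1 - ε) ^ t * (n : ℝ) ^ (M + t) := by
  rw [Finset.card_eq_sum_card_fiberwise (f := fun p => p.1) (t := univ) (by intro x _; simp)]
  push_cast
  have : ∀ x : Fin M → Fin n, (#(((univ.filter fun p : (Fin M → Fin n) × (Fin t → Fin n) =>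
      ε * n < nbd G (p.1 i) (p.1 j) ∧ ∀ b, (G.Adj (p.1 i) (p.2 b) ↔ G.Adj (p.1 j) (p.2 b)))).filter
      fun p => p.1 = x) : ℝ) ≤ (1 - ε) ^ t * (n : ℝ) ^ t := by
    intro x
    by_cases hx : ε * n < nbd G (x i) (x j)
    · set W : Finset (Fin n) := univ.filter fun y => (G.Adj (x i) y ↔ G.Adj (x j) y) with hW
      have hWc : (#W : ℝ) ≤ (1 - ε) * n := by
        have := Finset.card_filter_add_card_filter_not (s := (univ : Finset (Fin n)))
          (fun y => (G.Adj (x i) y ↔ G.Adj (x j) y))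
        unfold nbd at hx
        rw [Finset.card_univ, Fintype.card_fin] at this
        have h2 : (#W : ℝ) + (#(univ.filter fun y => ¬ (G.Adj (x i) y ↔ G.Adj (x j) y)) : ℝ) = n := by
          exact_mod_cast this
        linarith
      have : (#(((univ.filter fun p : (Fin M → Fin n) × (Fin t → Fin n) =>
        ε * n < nbd G (p.1 i) (p.1 j) ∧ ∀ b, (G.Adj (p.1 i) (p.2 b) ↔ G.Adj (p.1 j) (p.2 b)))).filter
        fun p => p.1 = x)) ≤ #W ^ t := by
        have e : #W ^ t = #(Fintype.piFinset fun _ : Fin t => W) := by simp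
        rw [e]
        apply Finset.card_le_card_of_injOn (fun p => p.2)
        · intro p hp
          simp at hp
          obtain ⟨⟨_, h⟩, rfl⟩ := hp
          simp [hW]
          exact h
        · rintro ⟨p1, p2⟩ hp ⟨q1, q2⟩ hq h
          simp at hp hq h
          rw [hp.2, hq.2, h]
      calc _ ≤ ((#W ^ t : ℕ) : ℝ) := by exact_mod_cast this
        _ = (#W : ℝ) ^ t := by push_cast; rfl
        _ ≤ ((1 - ε) * n) ^ t := by gcongr
        _ = _ := by rw [mul_pow]
    · rw [Finset.filter_filter, Finset.filter_false_of_mem]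
      · have : 0 ≤ 1 - ε := by linarith
        simp; positivity
      · rintro p _ ⟨⟨h, _⟩, rfl⟩
        exact hx h
  refine (Finset.sum_le_sum fun x _ => this x).trans (le_of_eq ?_)
  simp
  ring


/-- `x j` is far from all earlier `x i` -/
def isNew {n M : ℕ} (G : SimpleGraph (Fin n)) (ε : ℝ) (x : Fin M → Fin n) (j : Fin M) : Prop :=
  ∀ i, i < j → ε * n < nbd G (x j) (x i)

lemma new_pointwise {n k M t : ℕ} (ht : 1 ≤ t) (B : Fin k → Fin k → Prop) (G : SimpleGraph (Fin n))
    (ε : ℝ) (x : Fin M → Fin n) (y : Fin t → Fin n) :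
    (#(univ.filter fun j => isNew G ε x j) : ℝ) ≤ 2 * k * (t : ℝ) ^ (2 * k) + M *
      ((∑ ij : Fin M × Fin M, if ε * n < nbd G (x ij.1) (x ij.2) ∧
          ∀ b, (G.Adj (x ij.1) (y b) ↔ G.Adj (x ij.2) (y b)) then (1:ℝ) else 0) +
       ∑ IJ ∈ univ.filter (fun IJ : (Fin k → Fin M) × (Fin k → Fin t) =>
          Function.Injective IJ.1 ∧ Function.Injective IJ.2),
          if ∀ s u, B s u ↔ G.Adj (x (IJ.1 s)) (y (IJ.2 u)) then (1:ℝ) else 0) := by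
  set N := univ.filter fun j => isNew G ε x j with hN
  have hNM : (#N : ℝ) ≤ M := by exact_mod_cast (Finset.card_le_univ N).trans (by simp)
  have p1 : (0:ℝ) ≤ ∑ ij : Fin M × Fin M, if ε * n < nbd G (x ij.1) (x ij.2) ∧
          ∀ b, (G.Adj (x ij.1) (y b) ↔ G.Adj (x ij.2) (y b)) then (1:ℝ) else 0 :=
    Finset.sum_nonneg fun _ _ => by split_ifs <;> norm_num
  have p2 : (0:ℝ) ≤ ∑ IJ ∈ univ.filter (fun IJ : (Fin k → Fin M) × (Fin k → Fin t) =>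
          Function.Injective IJ.1 ∧ Function.Injective IJ.2),
          if ∀ s u, B s u ↔ G.Adj (x (IJ.1 s)) (y (IJ.2 u)) then (1:ℝ) else 0 :=
    Finset.sum_nonneg fun _ _ => by split_ifs <;> norm_num
  by_cases h1 : ∃ ij : Fin M × Fin M, ε * n < nbd G (x ij.1) (x ij.2) ∧
          ∀ b, (G.Adj (x ij.1) (y b) ↔ G.Adj (x ij.2) (y b))
  · obtain ⟨ij, hij⟩ := h1
    have : (1:ℝ) ≤ ∑ ij : Fin M × Fin M, if ε * n < nbd G (x ij.1) (x ij.2) ∧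
          ∀ b, (G.Adj (x ij.1) (y b) ↔ G.Adj (x ij.2) (y b)) then (1:ℝ) else 0 := by
      have := Finset.single_le_sum (f := fun ij : Fin M × Fin M =>
        if ε * n < nbd G (x ij.1) (x ij.2) ∧
          ∀ b, (G.Adj (x ij.1) (y b) ↔ G.Adj (x ij.2) (y b)) then (1:ℝ) else 0)
          (fun _ _ => by split_ifs <;> norm_num) (Finset.mem_univ ij)
      simp only [if_pos hij] at this
      exact this
    have h0 : (0:ℝ) ≤ 2 * k * (t : ℝ) ^ (2 * k) := by positivity
    have hM : (0:ℝ) ≤ M := by positivity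
    nlinarith
  by_cases h2 : #N ≤ 2 * k * t ^ (2 * k)
  · have h2' : (#N : ℝ) ≤ 2 * k * (t : ℝ) ^ (2 * k) := by exact_mod_cast h2
    have hM : (0:ℝ) ≤ M := by positivity
    nlinarith [mul_nonneg hM (add_nonneg p1 p2)]
  push Not at h1 h2
  obtain ⟨I, J, hI, hJ, hIJ⟩ := find_copy ht B (fun i b => G.Adj (x i) (y b)) N (by
    intro i hi j hj hij
    simp only [hN, Finset.mem_filter, Finset.mem_univ, true_and] at hi hj
    rcases lt_or_gt_of_ne hij with h | h
    · obtain ⟨b, hb⟩ := h1 (j, i) (hj i h)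
      exact ⟨b, by tauto⟩
    · obtain ⟨b, hb⟩ := h1 (i, j) (hi j h)
      exact ⟨b, by tauto⟩) h2
  have : (1:ℝ) ≤ ∑ IJ ∈ univ.filter (fun IJ : (Fin k → Fin M) × (Fin k → Fin t) =>
          Function.Injective IJ.1 ∧ Function.Injective IJ.2),
          if ∀ s u, B s u ↔ G.Adj (x (IJ.1 s)) (y (IJ.2 u)) then (1:ℝ) else 0 := by
    have := Finset.single_le_sum (s := univ.filter (fun IJ : (Fin k → Fin M) × (Fin k → Fin t) =>
          Function.Injective IJ.1 ∧ Function.Injective IJ.2)) (f := fun IJ =>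
        if ∀ s u, B s u ↔ G.Adj (x (IJ.1 s)) (y (IJ.2 u)) then (1:ℝ) else 0)
          (fun _ _ => by split_ifs <;> norm_num) (a := (I, J)) (by simp [hI, hJ])
    simp only [if_pos hIJ] at this
    exact this
  have h0 : (0:ℝ) ≤ 2 * k * (t : ℝ) ^ (2 * k) := by positivity
  have hM : (0:ℝ) ≤ M := by positivity
  nlinarith

lemma new_total {n k M t : ℕ} (hn : 1 ≤ n) (ht : 1 ≤ t) (B : Fin k → Fin k → Prop)
    (G : SimpleGraph (Fin n))
    (ε η : ℝ) (hε1 : ε ≤ 1) (hη : (#(homs B G) : ℝ) ≤ η * (n : ℝ) ^ (2 * k)) :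
    ∑ p : (Fin M → Fin n) × (Fin t → Fin n), (#(univ.filter fun j => isNew G ε p.1 j) : ℝ) ≤
    (2 * k * (t : ℝ) ^ (2 * k) + M * ((M : ℝ) ^ 2 * (1 - ε) ^ t + (M : ℝ) ^ k * (t : ℝ) ^ k * η)) *
      (n : ℝ) ^ (M + t) := by
  refine (Finset.sum_le_sum fun p _ => new_pointwise ht B G ε p.1 p.2).trans ?_
  have hn' : (0:ℝ) < n := by exact_mod_cast hn
  have hη0 : 0 ≤ η := by
    have : (0:ℝ) ≤ η * (n : ℝ) ^ (2 * k) := le_trans (by positivity) hη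
    exact nonneg_of_mul_nonneg_left this (by positivity)
  have a1 : ∑ p : (Fin M → Fin n) × (Fin t → Fin n), (2 * k * (t : ℝ) ^ (2 * k)) =
      2 * k * (t : ℝ) ^ (2 * k) * (n : ℝ) ^ (M + t) := by
    simp; ring
  have a2 : ∑ ij : Fin M × Fin M, ∑ p : (Fin M → Fin n) × (Fin t → Fin n),
      (if ε * n < nbd G (p.1 ij.1) (p.1 ij.2) ∧
          ∀ b, (G.Adj (p.1 ij.1) (p.2 b) ↔ G.Adj (p.1 ij.2) (p.2 b)) then (1:ℝ) else 0) ≤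
      (M : ℝ) ^ 2 * (1 - ε) ^ t * (n : ℝ) ^ (M + t) := by
    calc _ ≤ ∑ ij : Fin M × Fin M, (1 - ε) ^ t * (n : ℝ) ^ (M + t) := by
          refine Finset.sum_le_sum fun ij _ => ?_
          rw [Finset.sum_boole]
          exact undist_count G ε hε1 ij.1 ij.2
      _ = _ := by simp; ring
  have a3 : ∑ IJ ∈ univ.filter (fun IJ : (Fin k → Fin M) × (Fin k → Fin t) =>
          Function.Injective IJ.1 ∧ Function.Injective IJ.2),
        ∑ p : (Fin M → Fin n) × (Fin t → Fin n),
          (if ∀ s u, B s u ↔ G.Adj (p.1 (IJ.1 s)) (p.2 (IJ.2 u)) then (1:ℝ) else 0) ≤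
        (M : ℝ) ^ k * (t : ℝ) ^ k * η * (n : ℝ) ^ (M + t) := by
    calc _ ≤ ∑ IJ ∈ univ.filter (fun IJ : (Fin k → Fin M) × (Fin k → Fin t) =>
          Function.Injective IJ.1 ∧ Function.Injective IJ.2), η * (n : ℝ) ^ (M + t) := by
          refine Finset.sum_le_sum fun IJ hIJ => ?_
          rw [Finset.mem_filter] at hIJ
          rw [Finset.sum_boole]
          have h := homs_count B G IJ.1 IJ.2 hIJ.2.1 hIJ.2.2
          have h' : (#(univ.filter fun p : (Fin M → Fin n) × (Fin t → Fin n) =>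
            ∀ s u, B s u ↔ G.Adj (p.1 (IJ.1 s)) (p.2 (IJ.2 u))) : ℝ) * (n : ℝ) ^ (2 * k) =
              #(homs B G) * (n : ℝ) ^ (M + t) := by exact_mod_cast h
          have hp : (0:ℝ) < (n : ℝ) ^ (2 * k) := by positivity
          refine le_of_mul_le_mul_right ?_ hp
          rw [h']
          calc _ ≤ η * (n : ℝ) ^ (2 * k) * (n : ℝ) ^ (M + t) := by gcongr
            _ = _ := by ring
      _ ≤ ∑ IJ : (Fin k → Fin M) × (Fin k → Fin t), η * (n : ℝ) ^ (M + t) :=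
          Finset.sum_le_sum_of_subset_of_nonneg (Finset.subset_univ _) (fun _ _ _ => by positivity)
      _ = _ := by simp; ring
  rw [Finset.sum_add_distrib, a1, ← Finset.mul_sum, Finset.sum_add_distrib]
  rw [Finset.sum_comm] at a2 a3
  have hM : (0:ℝ) ≤ M := by positivity
  nlinarith [mul_le_mul_of_nonneg_left (add_le_add a2 a3) hM]

lemma update_sum {n M : ℕ} (j : Fin M) (F : (Fin M → Fin n) → ℝ) :
    ∑ x, ∑ v, F (Function.update x j v) = n * ∑ x, F x := by
  have inv : Function.Involutive (fun p : (Fin M → Fin n) × Fin n =>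
      (Function.update p.1 j p.2, p.1 j)) := by
    rintro ⟨x, v⟩
    simp
  have := Equiv.sum_comp (inv.toPerm) (fun p : (Fin M → Fin n) × Fin n => F p.1)
  simp only [Function.Involutive.coe_toPerm] at this
  rw [Fintype.sum_prod_type, Fintype.sum_prod_type] at this
  rw [this]
  simp [Finset.mul_sum]

lemma exists_cover {n k M t : ℕ} (hn : 1 ≤ n) (ht : 1 ≤ t) (hM : 1 ≤ M) (B : Fin k → Fin k → Prop)
    (G : SimpleGraph (Fin n))
    (ε η : ℝ) (hε1 : ε ≤ 1) (hη : (#(homs B G) : ℝ) ≤ η * (n : ℝ) ^ (2 * k))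
    (hpar : 2 * k * (t : ℝ) ^ (2 * k) + M * ((M : ℝ) ^ 2 * (1 - ε) ^ t +
      (M : ℝ) ^ k * (t : ℝ) ^ k * η) ≤ ε * M) :
    ∃ x : Fin M → Fin n, (#(univ.filter fun v => ∀ i, ε * n < nbd G v (x i)) : ℝ) ≤ ε * n := by
  by_contra hcon
  push Not at hcon
  have htot := new_total (M := M) hn ht B G ε η hε1 hη
  have hn' : (0:ℝ) < n := by exact_mod_cast hn
  have hM' : (0:ℝ) < M := by exact_mod_cast hM
  have hne : Nonempty (Fin n) := ⟨⟨0, hn⟩⟩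
  have hj : ∀ j : Fin M, ε * (n : ℝ) ^ M < ∑ x : Fin M → Fin n, if isNew G ε x j then (1:ℝ) else 0 := by
    intro j
    have h := update_sum (n := n) j (fun x => if isNew G ε x j then (1:ℝ) else 0)
    have h2 : ∑ x : Fin M → Fin n, ε * (n : ℝ) <
        ∑ x : Fin M → Fin n, ∑ v, if isNew G ε (Function.update x j v) j then (1:ℝ) else 0 := by
      refine Finset.sum_lt_sum_of_nonempty Finset.univ_nonempty fun x _ => ?_
      rw [Finset.sum_boole]
      refine (hcon x).trans_le ?_
      norm_cast
      apply Finset.card_le_card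
      intro v hv
      simp only [Finset.mem_filter, Finset.mem_univ, true_and] at hv ⊢
      intro i hi
      rw [Function.update_self, Function.update_of_ne (ne_of_lt hi)]
      exact hv i
    rw [h] at h2
    simp only [Finset.sum_const, Finset.card_univ, Fintype.card_fun, Fintype.card_fin, nsmul_eq_mul,
      Nat.cast_pow] at h2
    refine lt_of_mul_lt_mul_left ?_ hn'.le
    calc _ = _ := by ring
      _ < _ := h2
  have hsum : ∑ p : (Fin M → Fin n) × (Fin t → Fin n), (#(univ.filter fun j => isNew G ε p.1 j) : ℝ) =
      ∑ j : Fin M, (n : ℝ) ^ t * ∑ x : Fin M → Fin n, if isNew G ε x j then (1:ℝ) else 0 := by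
    rw [Fintype.sum_prod_type]
    simp only [← Finset.sum_boole]
    simp only [Finset.sum_const, Finset.card_univ, Fintype.card_fun, Fintype.card_fin, nsmul_eq_mul,
      Nat.cast_pow]
    rw [← Finset.mul_sum, ← Finset.mul_sum, Finset.sum_comm]
  have hne2 : (univ : Finset (Fin M)).Nonempty := ⟨⟨0, hM⟩, Finset.mem_univ _⟩
  have : ∑ j : Fin M, (n : ℝ) ^ t * (ε * (n : ℝ) ^ M) <
      ∑ j : Fin M, (n : ℝ) ^ t * ∑ x : Fin M → Fin n, if isNew G ε x j then (1:ℝ) else 0 :=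
    Finset.sum_lt_sum_of_nonempty hne2 fun j _ => mul_lt_mul_of_pos_left (hj j) (by positivity)
  rw [← hsum] at this
  simp at this
  have h3 := mul_le_mul_of_nonneg_right hpar (by positivity : (0:ℝ) ≤ (n : ℝ) ^ (M + t))
  have h4 : (M : ℝ) * ((n : ℝ) ^ t * (ε * (n : ℝ) ^ M)) = ε * M * (n : ℝ) ^ (M + t) := by ring
  linarith

lemma nbd_tri {n : ℕ} (G : SimpleGraph (Fin n)) (u v w : Fin n) :
    nbd G u v ≤ nbd G u w + nbd G v w := by
  unfold nbd
  refine (Finset.card_le_card ?_).trans (Finset.card_union_le _ _)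
  intro y
  simp only [Finset.mem_filter, Finset.mem_univ, true_and, Finset.mem_union]
  tauto

lemma exists_label {n k M t : ℕ} (hn : 1 ≤ n) (ht : 1 ≤ t) (hM : 1 ≤ M) (B : Fin k → Fin k → Prop)
    (G : SimpleGraph (Fin n))
    (ε η : ℝ) (hε : 0 ≤ ε) (hε1 : ε ≤ 1) (hη : (#(homs B G) : ℝ) ≤ η * (n : ℝ) ^ (2 * k))
    (hpar : 2 * k * (t : ℝ) ^ (2 * k) + M * ((M : ℝ) ^ 2 * (1 - ε) ^ t +
      (M : ℝ) ^ k * (t : ℝ) ^ k * η) ≤ ε * M) :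
    ∃ f : Fin n → Fin M, ∃ E : Finset (Fin n), (#E : ℝ) ≤ 2 * ε * n ∧
      ∀ u, u ∉ E → ∀ v, v ∉ E → f u = f v → (nbd G u v : ℝ) ≤ 2 * ε * n := by
  obtain ⟨x, hx⟩ := exists_cover hn ht hM B G ε η hε1 hη hpar
  refine ⟨fun v => if h : ∃ i, (nbd G v (x i) : ℝ) ≤ ε * n then h.choose else ⟨0, hM⟩, _, hx.trans ?_, ?_⟩
  · nlinarith [mul_nonneg hε (Nat.cast_nonneg (α := ℝ) n)]
  · intro u hu v hv huv
    simp only [Finset.mem_filter, Finset.mem_univ, true_and, not_forall, not_lt] at hu hv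
    dsimp only at huv
    rw [dif_pos hu, dif_pos hv] at huv
    have h1 := hu.choose_spec
    have h2 := hv.choose_spec
    rw [huv] at h1
    have h3 := nbd_tri G u v (x hv.choose)
    have h4 : (nbd G u v : ℝ) ≤ nbd G u (x hv.choose) + nbd G v (x hv.choose) := by
      exact_mod_cast h3
    linarith


lemma desc_bound (n m : ℕ) (hm : m ≤ n) (hn : 1 ≤ n) (η : ℝ) (h : (m : ℝ) ^ 2 ≤ η * n) :
    (n : ℝ) ^ m ≤ n.descFactorial m + η * (n : ℝ) ^ m := by
  have hn' : (0:ℝ) < n := by exact_mod_cast hn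
  have h1 : (n - m) ^ m ≤ n.descFactorial m :=
    (Nat.pow_le_pow_left (by omega) m).trans (Nat.pow_sub_le_descFactorial n m)
  have h2 : ((n : ℝ) - m) ^ m ≤ n.descFactorial m := by
    rw [← Nat.cast_sub hm]; exact_mod_cast h1
  have hmn : (m : ℝ) / n ≤ 1 := by
    rw [div_le_one hn']; exact_mod_cast hm
  have h3 := one_add_mul_le_pow (a := -((m : ℝ) / n)) (by linarith) m
  have h4 : ((n : ℝ) - m) ^ m = (n : ℝ) ^ m * (1 + -((m : ℝ) / n)) ^ m := by
    rw [← mul_pow]; congr 1; field_simp; ring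
  have h5 : (m : ℝ) * (m / n) ≤ η := by
    rw [← mul_div_assoc, div_le_iff₀ hn']; nlinarith
  have hp : (0:ℝ) < (n : ℝ) ^ m := by positivity
  rw [h4] at h2
  nlinarith [mul_le_mul_of_nonneg_left h3 hp.le]

lemma cast_le_pow (Z : ℝ) (hZ : 2 ≤ Z) (K : ℕ) : (K : ℝ) ≤ Z ^ K := by
  calc (K : ℝ) ≤ (2:ℝ) ^ K := by exact_mod_cast K.lt_two_pow_self.le
    _ ≤ _ := by gcongr

set_option maxHeartbeats 1000000 in
lemma params (k : ℕ) (hk : 1 ≤ k) : ∃ A D : ℕ, ∀ ε : ℝ, 0 < ε → ε < 1 / 2 →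
    ∃ t M : ℕ, 1 ≤ t ∧ 1 ≤ M ∧ (M : ℝ) ≤ (1 / ε) ^ A ∧
      2 * k * (t : ℝ) ^ (2 * k) + M * ((M : ℝ) ^ 2 * (1 - ε / 2) ^ t +
      (M : ℝ) ^ k * (t : ℝ) ^ k * ε ^ D) ≤ (ε / 2) * M := by
  obtain ⟨Fa, hFa⟩ : ∃ F : ℕ, F = (4 * k + 1).factorial := ⟨_, rfl⟩
  obtain ⟨K, hK⟩ : ∃ K : ℕ, K = 192 * k ^ 2 * Fa := ⟨_, rfl⟩
  obtain ⟨T, hT⟩ : ∃ T : ℕ, T = 1 + K + 2 * (4 * k + 4) := ⟨_, rfl⟩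
  obtain ⟨A, hA⟩ : ∃ A : ℕ, A = 8 * k + 2 + 2 * k * T := ⟨_, rfl⟩
  refine ⟨A, k * A + k * T + 5, ?_⟩
  intro ε hε hε2
  set e := ε / 2 with he
  set Z := 1 / ε with hZ
  set z := 1 / e with hz
  have he0 : 0 < e := by positivity
  have hZ2 : 2 ≤ Z := by rw [hZ, le_div_iff₀ hε]; linarith
  have hzZ : z = 2 * Z := by rw [hz, hZ, he]; field_simp
  have hzZ2 : z ≤ Z ^ 2 := by rw [hzZ]; nlinarith
  have hz4 : 4 ≤ z := by linarith
  have hk' : (1:ℝ) ≤ k := by exact_mod_cast hk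
  have hKpos : 1 ≤ K := by
    have h1 : 0 < Fa := hFa ▸ Nat.factorial_pos (4 * k + 1)
    rw [hK]
    have : 0 < 192 * k ^ 2 * Fa := by positivity
    exact this
  have hKr : (1:ℝ) ≤ K := by exact_mod_cast hKpos
  set t := ⌈(K : ℝ) * z ^ (4 * k + 4)⌉₊ with ht
  have hz1 : 1 ≤ z ^ (4 * k + 4) := one_le_pow₀ (by linarith)
  have ht1 : (K : ℝ) * z ^ (4 * k + 4) ≤ t := Nat.le_ceil _
  have ht1' : (1:ℝ) ≤ t := by nlinarith
  have ht2 : (t : ℝ) ≤ Z ^ T := by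
    have h1 : (t : ℝ) < K * z ^ (4 * k + 4) + 1 := Nat.ceil_lt_add_one (by positivity)
    have h2 : (t : ℝ) ≤ 2 * (K * z ^ (4 * k + 4)) := by nlinarith
    refine h2.trans ?_
    have e1 : Z ^ T = Z * (Z ^ K * (Z ^ 2) ^ (4 * k + 4)) := by rw [hT]; ring
    rw [e1]
    have := cast_le_pow Z hZ2 K
    gcongr
  set R : ℝ := 2 * k * (t : ℝ) ^ (2 * k) with hR
  have hR1 : 1 ≤ R := by
    have : (1:ℝ) ≤ (t : ℝ) ^ (2 * k) := one_le_pow₀ ht1'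
    nlinarith
  set M := ⌈3 * R * z⌉₊ with hM
  have hM1 : 3 * R * z ≤ M := Nat.le_ceil _
  have hRz : 1 ≤ R * z := by nlinarith
  have hM2 : (M : ℝ) ≤ 4 * R * z := by
    have : (M : ℝ) < 3 * R * z + 1 := Nat.ceil_lt_add_one (by positivity)
    nlinarith
  have hM1' : (1:ℝ) ≤ M := by nlinarith
  have hMA : (M : ℝ) ≤ Z ^ A := by
    have e1 : (4 * R * z) = (8 * k : ℕ) * z * (t : ℝ) ^ (2 * k) := by rw [hR]; push_cast; ring
    refine hM2.trans ?_
    rw [e1, hA, pow_add, pow_add, mul_comm (2 * k) T, pow_mul Z T]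
    have := cast_le_pow Z hZ2 (8 * k)
    gcongr
  have hez : e * z = 1 := by rw [hz]; field_simp
  have hεZ : ε * Z = 1 := by rw [hZ]; field_simp
  have s1 : R ≤ e * M / 3 := by
    nlinarith [mul_le_mul_of_nonneg_left hM1 he0.le]
  have s2 : (M : ℝ) ^ 2 * (1 - e) ^ t ≤ e / 3 := by
    have h1 : (1 - e) ^ t ≤ Real.exp (-(e * t)) := by
      have : 1 - e ≤ Real.exp (-e) := by linarith [Real.add_one_le_exp (-e)]
      calc (1 - e) ^ t ≤ (Real.exp (-e)) ^ t := by
            apply pow_le_pow_left₀ (by linarith) this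
        _ = _ := by rw [← Real.exp_nat_mul]; congr 1; ring
    have h2 := Real.pow_div_factorial_le_exp (e * t) (by positivity) (4 * k + 1)
    rw [← hFa] at h2
    have hfp : (0:ℝ) < Fa := by exact_mod_cast hFa ▸ Nat.factorial_pos (4 * k + 1)
    have h3 : Real.exp (-(e * t)) ≤ Fa / (e * t) ^ (4 * k + 1) := by
      rw [Real.exp_neg, inv_le_comm₀ (Real.exp_pos _) (by positivity), inv_div]
      exact h2
    have h4 : (M : ℝ) ^ 2 ≤ (4 * R * z) ^ 2 := by gcongr
    have h5 : (Fa : ℝ) / (e * t) ^ (4 * k + 1) =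
        Fa * z ^ (4 * k + 1) / (t : ℝ) ^ (4 * k + 1) := by
      have : e = 1 / z := by rw [hz]; field_simp
      rw [this, mul_pow, div_pow, one_pow]; field_simp
    have ht0 : (0:ℝ) < t := by linarith
    calc (M : ℝ) ^ 2 * (1 - e) ^ t ≤ (4 * R * z) ^ 2 *
          (Fa * z ^ (4 * k + 1) / (t : ℝ) ^ (4 * k + 1)) := by
          rw [← h5]
          apply mul_le_mul h4 (h1.trans h3) (pow_nonneg (by linarith) _) (by positivity)
      _ = 64 * k ^ 2 * Fa * z ^ (4 * k + 3) / t := by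
          rw [hR]
          have : (t : ℝ) ^ (4 * k + 1) = ((t : ℝ) ^ (2 * k)) ^ 2 * t := by ring
          rw [this]
          have h7 : z ^ (4 * k + 3) = z ^ (4 * k + 1) * z ^ 2 := by ring
          rw [h7]
          field_simp
          ring
      _ ≤ e / 3 := by
          rw [div_le_iff₀ ht0]
          have h8 : e / 3 * (K * z ^ (4 * k + 4)) ≤ e / 3 * t := by gcongr
          refine le_trans (le_of_eq ?_) h8
          have h9 : e / 3 * (K * z ^ (4 * k + 4)) = (e * z) * (K / 3 * z ^ (4 * k + 3)) := by ring
          rw [h9, hez, hK]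
          push_cast
          ring
  have s3 : (M : ℝ) ^ k * (t : ℝ) ^ k * ε ^ (k * A + k * T + 5) ≤ e / 3 := by
    have hZ0 : 0 < Z := by linarith
    calc (M : ℝ) ^ k * (t : ℝ) ^ k * ε ^ (k * A + k * T + 5) ≤
        (Z ^ A) ^ k * (Z ^ T) ^ k * ε ^ (k * A + k * T + 5) := by gcongr
      _ = (ε * Z) ^ (k * A + k * T) * ε ^ 5 := by rw [mul_pow]; ring
      _ = ε ^ 5 := by rw [hεZ, one_pow, one_mul]
      _ ≤ e / 3 := by
        rw [he]
        have : ε ^ 4 ≤ (1/2) ^ 4 := by gcongr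
        have h5 : ε ^ 5 = ε ^ 4 * ε := by ring
        rw [h5]
        nlinarith
  refine ⟨t, M, by exact_mod_cast ht1', by exact_mod_cast hM1', hMA, ?_⟩
  have hM0 : (0:ℝ) ≤ M := by positivity
  nlinarith [mul_le_mul_of_nonneg_left (add_le_add s2 s3) hM0]

lemma cluster (k : ℕ) (hk : 1 ≤ k) : ∃ c : ℕ, ∀ ε : ℝ, 0 < ε → ε < 1 / 2 →
    ∃ s n₀ : ℕ, 1 ≤ s ∧ (s : ℝ) ≤ (1 / ε) ^ c ∧ ∀ n : ℕ, n₀ ≤ n →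
      ∀ (B : Fin k → Fin k → Prop) (G : SimpleGraph (Fin n)),
      ε ^ c * (n : ℝ) ^ (2 * k) ≤ bipCopyCount B G ∨
      ∃ f : Fin n → Fin s, ∃ E : Finset (Fin n), (#E : ℝ) ≤ ε * n ∧
      ∀ u, u ∉ E → ∀ v, v ∉ E → f u = f v → (nbd G u v : ℝ) ≤ ε * n := by
  obtain ⟨A, D, hAD⟩ := params k hk
  refine ⟨A + D + 1, ?_⟩
  intro ε hε hε2
  obtain ⟨t, M, ht, hM, hMA, hpar⟩ := hAD ε hε hε2
  have hZ1 : 1 ≤ 1 / ε := by rw [le_div_iff₀ hε]; linarith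
  refine ⟨M, 2 * k + ⌈2 * ((2 * k : ℕ) : ℝ) ^ 2 / ε ^ D⌉₊, hM,
    hMA.trans (pow_le_pow_right₀ hZ1 (by omega)), ?_⟩
  intro n hn B G
  by_cases hc : ε ^ (A + D + 1) * (n : ℝ) ^ (2 * k) ≤ bipCopyCount B G
  · exact Or.inl hc
  right
  push Not at hc
  have hn1 : 1 ≤ n := by omega
  have hn2 : 2 * ((2 * k : ℕ) : ℝ) ^ 2 / ε ^ D ≤ n := by
    refine (Nat.le_ceil _).trans ?_
    exact Nat.cast_le.2 (by omega)
  have hεD : 0 < ε ^ D := by positivity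
  have hdesc := desc_bound n (2 * k) (by omega) hn1 (ε ^ D / 2) (by
    rw [div_le_iff₀ hεD] at hn2; linarith)
  have hh : (#(homs B G) : ℝ) + n.descFactorial (2 * k) ≤ bipCopyCount B G + (n : ℝ) ^ (2 * k) := by
    exact_mod_cast homs_le B G
  have hpow : ε ^ (A + D + 1) ≤ ε ^ D / 2 := by
    have h1 : ε ^ (A + D + 1) = ε ^ A * ε ^ D * ε := by ring
    have h2 : ε ^ A ≤ 1 := pow_le_one₀ hε.le (by linarith)
    rw [h1]
    have h3 : ε ^ A * ε ^ D ≤ ε ^ D := by nlinarith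
    nlinarith
  have hη : (#(homs B G) : ℝ) ≤ ε ^ D * (n : ℝ) ^ (2 * k) := by
    have : ε ^ (A + D + 1) * (n : ℝ) ^ (2 * k) ≤ ε ^ D / 2 * (n : ℝ) ^ (2 * k) := by gcongr
    linarith
  have := exists_label hn1 ht hM B G (ε / 2) (ε ^ D) (by positivity) (by linarith) hη hpar
  have h2 : 2 * (ε / 2) = ε := by ring
  rwa [h2] at this


lemma equi {n q s : ℕ} (hq : 1 ≤ q) (hqn : q ≤ n) (f : Fin n → Fin s) :
    ∃ g : Fin n → Fin q, (∀ i, #(cls g i) = n / q ∨ #(cls g i) = n / q + 1) ∧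
      ∃ R : Finset (Fin n), #R ≤ s * (n / q) ∧
        ∀ u, u ∉ R → ∀ v, v ∉ R → g u = g v → f u = f v := by
  set m := n / q with hm
  have hm0 : m ≠ 0 := by
    have := Nat.div_pos hqn hq
    omega
  let P : Finpartition (univ : Finset (Fin n)) := Finpartition.ofErase (univ.image (cls f))
    (by
      rw [Finset.supIndep_iff_pairwiseDisjoint]
      intro x hx y hy hxy
      simp only [Finset.coe_image, Finset.coe_univ, Set.image_univ, Set.mem_range] at hx hy
      obtain ⟨a, rfl⟩ := hx
      obtain ⟨b, rfl⟩ := hy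
      simp only [Function.onFun, id]
      rw [Finset.disjoint_left]
      intro v hv hv'
      rw [mem_cls] at hv hv'
      subst hv
      subst hv'
      exact hxy rfl)
    (by
      ext v
      simp only [Finset.mem_sup, Finset.mem_univ, iff_true]
      exact ⟨cls f (f v), by simp, by simp [mem_cls]⟩)
  have hP : ∀ v, cls f (f v) ∈ P.parts := by
    intro v
    show _ ∈ (univ.image (cls f)).erase ⊥
    rw [Finset.mem_erase]
    refine ⟨?_, by simp⟩
    intro h
    have : v ∈ cls f (f v) := by simp [mem_cls]
    rw [h] at this
    simp at this
  have hab : (q - n % q) * m + (n % q) * (m + 1) = #(univ : Finset (Fin n)) := by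
    have h1 := Nat.div_add_mod n q
    have h2 := Nat.mod_lt n hq
    obtain ⟨r, hr⟩ : ∃ r, q = n % q + r := ⟨q - n % q, by omega⟩
    have h3 : q - n % q = r := by omega
    rw [h3, Finset.card_univ, Fintype.card_fin]
    have h4 : q * m = (n % q + r) * m := by rw [← hr]
    rw [← hm] at h1
    linarith
  set Q := P.equitabilise hab with hQ
  have hcard : #Q.parts = q := by
    rw [hQ, P.card_parts_equitabilise hab hm0]
    have h2 := Nat.mod_lt n hq
    omega
  let e := Finset.equivFinOfCardEq hcard
  have hpm : ∀ v, Q.part v ∈ Q.parts := fun v => Q.part_mem.2 (Finset.mem_univ v)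
  refine ⟨fun v => e ⟨Q.part v, hpm v⟩, ?_, univ.biUnion fun a =>
    (cls f a \ (Q.parts.filter fun y => y ⊆ cls f a).biUnion id), ?_, ?_⟩
  · intro i
    have : cls (fun v => e ⟨Q.part v, hpm v⟩) i = (e.symm i).1 := by
      ext v
      rw [mem_cls, Equiv.apply_eq_iff_eq_symm_apply, Subtype.ext_iff]
      constructor
      · intro h
        rw [← h]; exact Q.mem_part (Finset.mem_univ v)
      · intro h
        exact Q.part_eq_of_mem (e.symm i).2 h
    rw [this]
    exact Finpartition.card_eq_of_mem_parts_equitabilise (e.symm i).2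
  · refine (Finset.card_biUnion_le_card_mul _ _ m ?_).trans (by simp)
    intro a _
    by_cases ha : ∃ v, f v = a
    · obtain ⟨v, rfl⟩ := ha
      convert P.card_parts_equitabilise_subset_le hab (hP v)
    · have : cls f a = ∅ := by
        ext v
        rw [mem_cls]
        simp only [Finset.notMem_empty, iff_false]
        exact fun h => ha ⟨v, h⟩
      simp [this]
  · intro u hu v _ huv
    have h1 : Q.part u = Q.part v := by
      have := e.injective huv
      simpa using this
    simp only [Finset.mem_biUnion, Finset.mem_univ, true_and, Finset.mem_sdiff, not_exists, not_and,
      not_not, Finset.mem_filter, id] at hu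
    have hu' := hu (f u) (by rw [mem_cls])
    push Not at hu'
    obtain ⟨y, ⟨hy1, hy2⟩, hy3⟩ := hu'
    have h2 := Q.part_eq_of_mem hy1 hy3
    have h3 : v ∈ cls f (f u) := by
      apply hy2
      rw [← h2, h1]
      exact Q.mem_part (Finset.mem_univ v)
    rw [mem_cls] at h3
    exact h3.symm

lemma marg {q n : ℕ} (Q : Fin q → Finset (Fin n)) (i j : Fin q) (hij : i ≠ j)
    (hi : (Q i).Nonempty) (hj : (Q j).Nonempty)
    (F : Fin n → Fin n → ℝ) :
    ∑ w ∈ Fintype.piFinset Q, F (w i) (w j) =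
      #(Fintype.piFinset Q) * ((∑ u ∈ Q i, ∑ v ∈ Q j, F u v) / (#(Q i) * #(Q j))) := by
  have h1 : ∀ u ∈ Q i, ∀ v ∈ Q j,
      #((Fintype.piFinset Q).filter fun w => (w i, w j) = (u, v)) * (#(Q i) * #(Q j)) =
        #(Fintype.piFinset Q) := by
    intro u hu v hv
    have e : ((Fintype.piFinset Q).filter fun w => (w i, w j) = (u, v)) =
        Fintype.piFinset (fun l => if l = i then {u} else if l = j then {v} else Q l) := by
      ext w
      simp only [Finset.mem_filter, Fintype.mem_piFinset, Prod.mk.injEq]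
      constructor
      · rintro ⟨h, h1, h2⟩ l
        by_cases hl : l = i
        · subst hl; simp [h1]
        by_cases hl' : l = j
        · subst hl'; simp [h2, hl]
        simp [hl, hl', h l]
      · intro h
        have hi' : w i = u := by simpa using h i
        have hj' : w j = v := by simpa [hij.symm] using h j
        refine ⟨fun l => ?_, hi', hj'⟩
        by_cases hl : l = i
        · subst hl; rw [hi']; exact hu
        by_cases hl' : l = j
        · subst hl'; rw [hj']; exact hv
        simpa [hl, hl'] using h l
    rw [e, Fintype.card_piFinset, Fintype.card_piFinset]
    have e2 : #(Q i) * #(Q j) = ∏ l, if l = i then #(Q i) else if l = j then #(Q j) else 1 := by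
      rw [← Finset.mul_prod_erase univ _ (Finset.mem_univ i), if_pos rfl,
        ← Finset.mul_prod_erase (univ.erase i) _ (Finset.mem_erase.2 ⟨hij.symm, Finset.mem_univ j⟩),
        if_neg hij.symm, if_pos rfl, Finset.prod_eq_one, mul_one]
      intro l hl
      simp only [Finset.mem_erase] at hl
      rw [if_neg hl.2.1, if_neg hl.1]
    rw [e2, ← Finset.prod_mul_distrib]
    refine Finset.prod_congr rfl fun l _ => ?_
    by_cases hl : l = i
    · subst hl; simp
    by_cases hl' : l = j
    · subst hl'; simp [hl]
    simp [hl, hl']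
  have hpi : (0:ℝ) < #(Q i) := by exact_mod_cast hi.card_pos
  have hpj : (0:ℝ) < #(Q j) := by exact_mod_cast hj.card_pos
  rw [← Finset.sum_fiberwise_of_maps_to (s := Fintype.piFinset Q) (t := Q i ×ˢ Q j)
    (g := fun w => (w i, w j))
    (by
      intro w hw
      rw [Fintype.mem_piFinset] at hw
      exact Finset.mem_product.2 ⟨hw i, hw j⟩), Finset.sum_product, Finset.sum_div, Finset.mul_sum]
  refine Finset.sum_congr rfl fun u hu => ?_
  rw [Finset.sum_div, Finset.mul_sum]
  refine Finset.sum_congr rfl fun v hv => ?_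
  have h2 : (#((Fintype.piFinset Q).filter fun w => (w i, w j) = (u, v)) : ℝ) * (#(Q i) * #(Q j)) =
        #(Fintype.piFinset Q) := by exact_mod_cast h1 u hu v hv
  rw [Finset.sum_congr rfl (g := fun _ => F u v)]
  · rw [Finset.sum_const, nsmul_eq_mul, ← h2]
    field_simp
  · intro w hw
    rw [Finset.mem_filter, Prod.mk.injEq] at hw
    rw [hw.2.1, hw.2.2]

/-- choice of representatives by averaging -/
lemma choose_rep {q n : ℕ} (Q : Fin q → Finset (Fin n)) (hQ : ∀ i, (Q i).Nonempty)
    (F : Fin q → Fin q → Fin n → Fin n → ℝ) (c : Fin q → Fin q → ℝ)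
    (h : ∀ i j, i ≠ j → ∑ u ∈ Q i, ∑ v ∈ Q j, F i j u v ≤ c i j * (#(Q i) * #(Q j))) :
    ∃ w : Fin q → Fin n, (∀ i, w i ∈ Q i) ∧
      ∑ p ∈ univ.filter (fun p : Fin q × Fin q => p.1 ≠ p.2), F p.1 p.2 (w p.1) (w p.2) ≤
      ∑ p ∈ univ.filter (fun p : Fin q × Fin q => p.1 ≠ p.2), c p.1 p.2 := by
  have hne : (Fintype.piFinset Q).Nonempty := by
    rw [Fintype.piFinset_nonempty]; exact hQ
  have hs : ∑ w ∈ Fintype.piFinset Q,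
      ∑ p ∈ univ.filter (fun p : Fin q × Fin q => p.1 ≠ p.2), F p.1 p.2 (w p.1) (w p.2) ≤
      ∑ w ∈ Fintype.piFinset Q, ∑ p ∈ univ.filter (fun p : Fin q × Fin q => p.1 ≠ p.2), c p.1 p.2 := by
    rw [Finset.sum_comm]
    conv_rhs => rw [Finset.sum_const, nsmul_eq_mul, Finset.mul_sum]
    refine Finset.sum_le_sum fun p hp => ?_
    rw [Finset.mem_filter] at hp
    rw [marg Q p.1 p.2 hp.2 (hQ _) (hQ _) (F p.1 p.2)]
    have hpi : (0:ℝ) < #(Q p.1) := by exact_mod_cast (hQ p.1).card_pos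
    have hpj : (0:ℝ) < #(Q p.2) := by exact_mod_cast (hQ p.2).card_pos
    gcongr
    rw [div_le_iff₀ (by positivity)]
    exact h _ _ hp.2
  obtain ⟨w, hw, hle⟩ := Finset.exists_le_of_sum_le hne hs
  exact ⟨w, Fintype.mem_piFinset.1 hw, hle⟩


def indi (p : Prop) : ℝ := if p then 1 else 0

lemma indi_pos {p : Prop} (h : p) : indi p = 1 := if_pos h

lemma indi_neg {p : Prop} (h : ¬ p) : indi p = 0 := if_neg h

lemma indi_nonneg (p : Prop) : 0 ≤ indi p := by
  unfold indi
  split_ifs <;> norm_num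

lemma sum_ref {n q s : ℕ} (g : Fin n → Fin q) (f : Fin n → Fin s) (i : Fin q) (F : Fin n → ℝ) :
    ∑ u ∈ cls g i, F u = ∑ b, ∑ u ∈ cls (fun u => (g u, f u)) (i, b), F u := by
  have h := sum_cls f (fun u => if g u = i then F u else 0)
  have h1 : ∑ u ∈ cls g i, F u = ∑ u, if g u = i then F u else 0 := by
    unfold cls
    rw [Finset.sum_filter]
    refine Finset.sum_congr rfl fun u _ => ?_
    congr
  rw [h1, ← h]
  refine Finset.sum_congr rfl fun b _ => ?_
  unfold cls
  rw [← Finset.sum_filter, Finset.filter_filter]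
  refine Finset.sum_congr ?_ fun _ _ => rfl
  ext u
  simp [and_comm]

lemma sum_ref_const {n q s : ℕ} (g : Fin n → Fin q) (f : Fin n → Fin s) (i : Fin q)
    (F : Fin s → ℝ) :
    ∑ u ∈ cls g i, F (f u) = ∑ b, (#(cls (fun u => (g u, f u)) (i, b)) : ℝ) * F b := by
  rw [sum_ref g f i]
  refine Finset.sum_congr rfl fun b _ => ?_
  rw [Finset.sum_congr rfl (g := fun _ => F b), Finset.sum_const, nsmul_eq_mul]
  intro u hu
  rw [mem_cls, Prod.mk.injEq] at hu
  rw [hu.2]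

lemma sum_ref_two {n q s : ℕ} (g : Fin n → Fin q) (f : Fin n → Fin s) (i j : Fin q)
    (F : Fin s → Fin s → ℝ) :
    ∑ u ∈ cls g i, ∑ v ∈ cls g j, F (f u) (f v) =
      ∑ b, ∑ b', (#(cls (fun u => (g u, f u)) (i, b)) : ℝ) *
        #(cls (fun u => (g u, f u)) (j, b')) * F b b' := by
  rw [sum_ref_const g f i (fun b => ∑ v ∈ cls g j, F b (f v))]
  refine Finset.sum_congr rfl fun b _ => ?_
  rw [sum_ref_const g f j, Finset.mul_sum]
  refine Finset.sum_congr rfl fun b' _ => ?_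
  ring

lemma dens_ref {n q s : ℕ} (G : SimpleGraph (Fin n)) (g : Fin n → Fin q) (f : Fin n → Fin s)
    (i j : Fin q) :
    ∑ b, ∑ b', (#(cls (fun u => (g u, f u)) (i, b)) : ℝ) *
        #(cls (fun u => (g u, f u)) (j, b')) *
        dens G (cls (fun u => (g u, f u)) (i, b)) (cls (fun u => (g u, f u)) (j, b')) =
      (#(cls g i) : ℝ) * #(cls g j) * dens G (cls g i) (cls g j) := by
  rw [dens_mul, sum_ref g f i]
  refine Finset.sum_congr rfl fun b _ => ?_
  simp_rw [dens_mul]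
  rw [Finset.sum_comm]
  refine Finset.sum_congr rfl fun u _ => ?_
  rw [sum_ref g f j]

lemma card_ref {n q s : ℕ} (g : Fin n → Fin q) (f : Fin n → Fin s)
    (i j : Fin q) :
    ∑ b, ∑ b', (#(cls (fun u => (g u, f u)) (i, b)) : ℝ) *
        #(cls (fun u => (g u, f u)) (j, b')) =
      (#(cls g i) : ℝ) * #(cls g j) := by
  have h := sum_ref_two g f i j (fun _ _ => 1)
  simp only [mul_one] at h
  rw [← h]
  simp

lemma mismatch {n q s : ℕ} (G : SimpleGraph (Fin n)) (g : Fin n → Fin q) (f : Fin n → Fin s)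
    (i j : Fin q) (η : ℝ) (hη : η < 1 / 2) (h : HomPair G η (cls g i) (cls g j)) :
    ∑ b, ∑ b', (#(cls (fun u => (g u, f u)) (i, b)) : ℝ) *
        #(cls (fun u => (g u, f u)) (j, b')) *
        indi (¬ (DomOne G (cls (fun u => (g u, f u)) (i, b)) (cls (fun u => (g u, f u)) (j, b')) ↔
          DomOne G (cls g i) (cls g j))) ≤
      2 * η * ((#(cls g i) : ℝ) * #(cls g j)) := by
  rcases h with h | h
  · calc _ ≤ ∑ b, ∑ b', (2 * ((#(cls (fun u => (g u, f u)) (i, b)) : ℝ) *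
        #(cls (fun u => (g u, f u)) (j, b'))) - 2 * ((#(cls (fun u => (g u, f u)) (i, b)) : ℝ) *
        #(cls (fun u => (g u, f u)) (j, b')) *
        dens G (cls (fun u => (g u, f u)) (i, b)) (cls (fun u => (g u, f u)) (j, b')))) := by
          refine Finset.sum_le_sum fun b _ => Finset.sum_le_sum fun b' _ => ?_
          have h1 := dens_le G (cls (fun u => (g u, f u)) (i, b)) (cls (fun u => (g u, f u)) (j, b'))
          have h2 : (0:ℝ) ≤ (#(cls (fun u => (g u, f u)) (i, b)) : ℝ) *
            #(cls (fun u => (g u, f u)) (j, b')) := by positivity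
          have hd : DomOne G (cls g i) (cls g j) := by unfold DomOne; linarith
          by_cases h3 : ¬ (DomOne G (cls (fun u => (g u, f u)) (i, b))
            (cls (fun u => (g u, f u)) (j, b')) ↔ DomOne G (cls g i) (cls g j))
          · rw [indi_pos h3]
            have h4 : dens G (cls (fun u => (g u, f u)) (i, b))
              (cls (fun u => (g u, f u)) (j, b')) < 1 / 2 := by
              by_contra h5
              exact h3 ⟨fun _ => hd, fun _ => not_lt.1 h5⟩
            nlinarith
          · rw [indi_neg h3]
            nlinarith
      _ = 2 * ((#(cls g i) : ℝ) * #(cls g j)) -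
          2 * ((#(cls g i) : ℝ) * #(cls g j) * dens G (cls g i) (cls g j)) := by
          rw [← dens_ref G g f, ← card_ref g f]
          simp only [Finset.sum_sub_distrib, Finset.mul_sum]
      _ ≤ _ := by
          have h2 : (0:ℝ) ≤ (#(cls g i) : ℝ) * #(cls g j) := by positivity
          nlinarith
  · calc _ ≤ ∑ b, ∑ b', (2 * ((#(cls (fun u => (g u, f u)) (i, b)) : ℝ) *
        #(cls (fun u => (g u, f u)) (j, b')) *
        dens G (cls (fun u => (g u, f u)) (i, b)) (cls (fun u => (g u, f u)) (j, b')))) := by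
          refine Finset.sum_le_sum fun b _ => Finset.sum_le_sum fun b' _ => ?_
          have h1 := dens_nonneg G (cls (fun u => (g u, f u)) (i, b))
            (cls (fun u => (g u, f u)) (j, b'))
          have h2 : (0:ℝ) ≤ (#(cls (fun u => (g u, f u)) (i, b)) : ℝ) *
            #(cls (fun u => (g u, f u)) (j, b')) := by positivity
          have hd : ¬ DomOne G (cls g i) (cls g j) := by unfold DomOne; linarith
          by_cases h3 : ¬ (DomOne G (cls (fun u => (g u, f u)) (i, b))
            (cls (fun u => (g u, f u)) (j, b')) ↔ DomOne G (cls g i) (cls g j))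
          · rw [indi_pos h3]
            have h4 : 1 / 2 ≤ dens G (cls (fun u => (g u, f u)) (i, b))
              (cls (fun u => (g u, f u)) (j, b')) := by
              by_contra h5
              exact h3 ⟨fun h6 => absurd h6 h5, fun h6 => absurd h6 hd⟩
            nlinarith
          · rw [indi_neg h3]
            have := mul_nonneg h2 h1
            linarith
      _ = 2 * ((#(cls g i) : ℝ) * #(cls g j) * dens G (cls g i) (cls g j)) := by
          simp_rw [← Finset.mul_sum]
          rw [dens_ref]
      _ ≤ _ := by
          have h2 : (0:ℝ) ≤ (#(cls g i) : ℝ) * #(cls g j) := by positivity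
          nlinarith

lemma nonhom_ref {n q s : ℕ} (G : SimpleGraph (Fin n)) (g : Fin n → Fin q) (f : Fin n → Fin s)
    (i j : Fin q) (γ ε : ℝ) (hγ : 0 < γ)
    (h : ∑ a, ∑ b, (#(cls (fun u => (g u, f u)) a):ℝ) * #(cls (fun u => (g u, f u)) b) *
      (dens G (cls (fun u => (g u, f u)) a) (cls (fun u => (g u, f u)) b) *
        (1 - dens G (cls (fun u => (g u, f u)) a) (cls (fun u => (g u, f u)) b)))
      ≤ 6 * ε * (n:ℝ) ^ 2) :
    ∑ b, ∑ b', (#(cls (fun u => (g u, f u)) (i, b)) : ℝ) *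
        #(cls (fun u => (g u, f u)) (j, b')) *
        indi (¬ HomPair G γ (cls (fun u => (g u, f u)) (i, b)) (cls (fun u => (g u, f u)) (j, b'))) ≤ 12 * ε / γ * (n:ℝ) ^ 2 := by
  set g2 : Fin n → Fin q × Fin s := fun u => (g u, f u) with hg2
  have h0 : ∀ a b, 0 ≤ (#(cls g2 a):ℝ) * #(cls g2 b) *
      (dens G (cls g2 a) (cls g2 b) * (1 - dens G (cls g2 a) (cls g2 b))) := by
    intro a b
    have h1 := dens_le G (cls g2 a) (cls g2 b)
    have h2 := dens_nonneg G (cls g2 a) (cls g2 b)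
    have h3 : 0 ≤ 1 - dens G (cls g2 a) (cls g2 b) := by linarith
    positivity
  have h1 : γ / 2 * ∑ b, ∑ b', (#(cls g2 (i, b)) : ℝ) * #(cls g2 (j, b')) *
        indi (¬ HomPair G γ (cls g2 (i, b)) (cls g2 (j, b'))) ≤ 6 * ε * (n:ℝ) ^ 2 := by
    refine le_trans ?_ h
    rw [Fintype.sum_prod_type, Finset.mul_sum]
    refine le_trans ?_ (Finset.single_le_sum
      (f := fun x => ∑ y, ∑ b, (#(cls g2 (x, y)):ℝ) * #(cls g2 b) *
      (dens G (cls g2 (x, y)) (cls g2 b) * (1 - dens G (cls g2 (x, y)) (cls g2 b))))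
      (fun x _ => Finset.sum_nonneg fun y _ => Finset.sum_nonneg fun b _ => h0 (x, y) b)
      (Finset.mem_univ i))
    refine Finset.sum_le_sum fun b _ => ?_
    rw [Fintype.sum_prod_type, Finset.mul_sum]
    refine le_trans ?_ (Finset.single_le_sum
      (f := fun x => ∑ y, (#(cls g2 (i, b)):ℝ) * #(cls g2 (x, y)) *
      (dens G (cls g2 (i, b)) (cls g2 (x, y)) * (1 - dens G (cls g2 (i, b)) (cls g2 (x, y)))))
      (fun x _ => Finset.sum_nonneg fun y _ => h0 (i, b) (x, y)) (Finset.mem_univ j))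
    refine Finset.sum_le_sum fun b' _ => ?_
    by_cases h3 : ¬ HomPair G γ (cls g2 (i, b)) (cls g2 (j, b'))
    · rw [indi_pos h3]
      have h4 := not_hom_defect G γ _ _ h3
      have h2 : (0:ℝ) ≤ (#(cls g2 (i, b)) : ℝ) * #(cls g2 (j, b')) := by positivity
      nlinarith
    · rw [indi_neg h3, mul_zero, mul_zero]
      exact h0 _ _
  rw [show 12 * ε / γ * (n:ℝ) ^ 2 = (6 * ε * (n:ℝ) ^ 2) / (γ / 2) by field_simp; ring,
    le_div_iff₀ (by positivity)]
  linarith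

lemma nonhom_count {n q : ℕ} (G : SimpleGraph (Fin n)) (g : Fin n → Fin q) (hn : 0 < n)
    (hq : 0 < q) (hsz : ∀ i, (n:ℝ) / (2 * q) ≤ #(cls g i)) (η ε : ℝ) (hη : 0 < η)
    (h : ∑ a, ∑ b, (#(cls g a):ℝ) * #(cls g b) *
      (dens G (cls g a) (cls g b) * (1 - dens G (cls g a) (cls g b))) ≤ 6 * ε * (n:ℝ) ^ 2) :
    (#(univ.filter fun p : Fin q × Fin q => ¬ HomPair G η (cls g p.1) (cls g p.2)) : ℝ) ≤
      48 * ε / η * q ^ 2 := by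
  have hn' : (0:ℝ) < n := by exact_mod_cast hn
  have hq' : (0:ℝ) < q := by exact_mod_cast hq
  have h1 : (#(univ.filter fun p : Fin q × Fin q => ¬ HomPair G η (cls g p.1) (cls g p.2)) : ℝ) *
      (((n:ℝ) / (2 * q)) ^ 2 * (η / 2)) ≤ 6 * ε * (n:ℝ) ^ 2 := by
    refine le_trans ?_ h
    rw [← Fintype.sum_prod_type' (f := fun a b => (#(cls g a):ℝ) * #(cls g b) *
      (dens G (cls g a) (cls g b) * (1 - dens G (cls g a) (cls g b)))), ← nsmul_eq_mul,
      ← Finset.sum_const]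
    have h0 : ∀ p : Fin q × Fin q, 0 ≤ dens G (cls g p.1) (cls g p.2) *
        (1 - dens G (cls g p.1) (cls g p.2)) := by
      intro p
      have h1 := dens_le G (cls g p.1) (cls g p.2)
      exact mul_nonneg (dens_nonneg _ _ _) (by linarith)
    refine le_trans (Finset.sum_le_sum (g := fun p : Fin q × Fin q =>
      (#(cls g p.1):ℝ) * #(cls g p.2) *
      (dens G (cls g p.1) (cls g p.2) * (1 - dens G (cls g p.1) (cls g p.2)))) ?_)
      (Finset.sum_le_sum_of_subset_of_nonneg (Finset.filter_subset _ _) ?_)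
    · intro p hp
      rw [Finset.mem_filter] at hp
      have h4 := not_hom_defect G η _ _ hp.2
      rw [pow_two]
      gcongr
      · exact hsz _
      · exact hsz _
    · intro p _ _
      exact mul_nonneg (by positivity) (h0 p)
  have h2 : (0:ℝ) < ((n:ℝ) / (2 * q)) ^ 2 * (η / 2) := by positivity
  rw [← le_div_iff₀ h2] at h1
  refine h1.trans (le_of_eq ?_)
  field_simp
  ring


lemma small_ref {n q s : ℕ} (g : Fin n → Fin q) (f : Fin n → Fin s) (i : Fin q) (t : ℝ)
    (ht : 0 ≤ t) :
    ∑ u ∈ cls g i, indi ((#(cls (fun u => (g u, f u)) (i, f u)) : ℝ) < t) ≤ s * t := by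
  rw [sum_ref_const g f i (fun b => indi ((#(cls (fun u => (g u, f u)) (i, b)) : ℝ) < t))]
  refine (Finset.sum_le_sum (g := fun _ => t) fun b _ => ?_).trans (by simp)
  by_cases h : (#(cls (fun u => (g u, f u)) (i, b)) : ℝ) < t
  · rw [indi_pos h]; linarith
  · rw [indi_neg h]; linarith

set_option maxHeartbeats 1000000 in
lemma select {n q s : ℕ} (G : SimpleGraph (Fin n)) (g : Fin n → Fin q) (f : Fin n → Fin s)
    (hn : 0 < n) (hq : 2 ≤ q) (hs : 1 ≤ s) (hsz : ∀ i, (n:ℝ) / (2 * q) ≤ #(cls g i))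
    (γ δ ε : ℝ) (hγ : 0 < γ) (hδ : 0 < δ) (hδ2 : δ < 1 / 2) (hε : ε ≤ γ / (400 * q ^ 4))
    (h : ∑ a, ∑ b, (#(cls (fun u => (g u, f u)) a):ℝ) * #(cls (fun u => (g u, f u)) b) *
      (dens G (cls (fun u => (g u, f u)) a) (cls (fun u => (g u, f u)) b) *
        (1 - dens G (cls (fun u => (g u, f u)) a) (cls (fun u => (g u, f u)) b)))
      ≤ 6 * ε * (n:ℝ) ^ 2) :
    ∃ U : Fin q → Finset (Fin n), (∀ i, U i ⊆ cls g i) ∧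
      (∀ i j, i ≠ j → HomPair G γ (U i) (U j)) ∧
      (∀ i, (n:ℝ) / (16 * q ^ 3 * s) ≤ #(U i)) ∧
      (#(univ.filter fun p : Fin q × Fin q => p.1 ≠ p.2 ∧
        (HomPair G (δ / 8) (cls g p.1) (cls g p.2) ∧
        ¬ (DomOne G (U p.1) (U p.2) ↔ DomOne G (cls g p.1) (cls g p.2)))) : ℝ) ≤
        δ / 2 * q ^ 2 := by
  have hn' : (0:ℝ) < n := by exact_mod_cast hn
  have hq' : (0:ℝ) < q := by exact_mod_cast (by omega : 0 < q)
  have hs' : (0:ℝ) < s := by exact_mod_cast hs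
  have hpos : ∀ i, (0:ℝ) < #(cls g i) := fun i =>
    lt_of_lt_of_le (by positivity) (hsz i)
  have hne : ∀ i, (cls g i).Nonempty := fun i => Finset.card_pos.1 (by exact_mod_cast hpos i)
  set A : Fin q → Fin s → Finset (Fin n) := fun i b => cls (fun u => (g u, f u)) (i, b) with hA
  set t : ℝ := (n:ℝ) / (16 * q ^ 3 * s) with ht
  have ht0 : 0 ≤ t := by positivity
  set M : Fin q → Fin q → Fin s → Fin s → Prop := fun i j b b' =>
    HomPair G (δ / 8) (cls g i) (cls g j) ∧
        ¬ (DomOne G (A i b) (A j b') ↔ DomOne G (cls g i) (cls g j)) with hM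
  obtain ⟨w, hw, hle⟩ := choose_rep (cls g) hne
    (fun i j u v => indi (¬ HomPair G γ (A i (f u)) (A j (f v))) +
      indi ((#(A i (f u)) : ℝ) < t) + 2 / (δ * q ^ 2) * indi (M i j (f u) (f v)))
    (fun _ _ => 3 / (4 * q ^ 2)) (by
      intro i j hij
      have hQ : ((n:ℝ) / (2 * q)) * (n / (2 * q)) ≤ (#(cls g i) : ℝ) * #(cls g j) :=
        mul_le_mul (hsz i) (hsz j) (by positivity) (by positivity)
      simp_rw [Finset.sum_add_distrib, ← Finset.mul_sum]
      have h1 : ∑ u ∈ cls g i, ∑ v ∈ cls g j, indi (¬ HomPair G γ (A i (f u)) (A j (f v))) ≤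
          1 / (8 * q ^ 2) * ((#(cls g i) : ℝ) * #(cls g j)) := by
        rw [sum_ref_two g f i j (fun b b' => indi (¬ HomPair G γ (A i b) (A j b')))]
        refine (nonhom_ref G g f i j γ ε hγ h).trans ?_
        calc 12 * ε / γ * (n:ℝ) ^ 2 ≤ 12 * (γ / (400 * q ^ 4)) / γ * (n:ℝ) ^ 2 := by gcongr
          _ = (12 * 4 / 400) / q ^ 2 * (((n:ℝ) / (2 * q)) * (n / (2 * q))) := by
            field_simp
            ring
          _ ≤ 1 / (8 * q ^ 2) * (((n:ℝ) / (2 * q)) * (n / (2 * q))) := by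
            gcongr ?_ * _
            rw [div_le_div_iff₀ (by positivity) (by positivity)]
            have : (0:ℝ) < q ^ 2 := by positivity
            linarith
          _ ≤ _ := by gcongr
      have h2 : ∑ u ∈ cls g i, ∑ v ∈ cls g j, indi ((#(A i (f u)) : ℝ) < t) ≤
          1 / (8 * q ^ 2) * ((#(cls g i) : ℝ) * #(cls g j)) := by
        simp_rw [Finset.sum_const, nsmul_eq_mul]
        rw [← Finset.mul_sum]
        have h3 := small_ref g f i t ht0
        calc (#(cls g j) : ℝ) * ∑ u ∈ cls g i, indi ((#(A i (f u)) : ℝ) < t) ≤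
            #(cls g j) * (s * t) := by gcongr
          _ = #(cls g j) * (1 / (8 * q ^ 2) * ((n:ℝ) / (2 * q))) := by
            rw [ht]; field_simp; ring
          _ ≤ #(cls g j) * (1 / (8 * q ^ 2) * #(cls g i)) := by
            gcongr
            exact hsz i
          _ = _ := by ring
      have h3 : ∑ u ∈ cls g i, ∑ v ∈ cls g j, indi (M i j (f u) (f v)) ≤
          δ / 4 * ((#(cls g i) : ℝ) * #(cls g j)) := by
        rw [sum_ref_two g f i j (fun b b' => indi (M i j b b'))]
        by_cases hh : HomPair G (δ / 8) (cls g i) (cls g j)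
        · have h4 := mismatch G g f i j (δ / 8) (by linarith) hh
          simp only [hM, hh, true_and]
          refine h4.trans (le_of_eq ?_)
          ring
        · have : ∀ b b', indi (M i j b b') = 0 := fun b b' => indi_neg fun h5 => hh h5.1
          simp only [this, mul_zero, Finset.sum_const_zero]
          positivity
      have h4 : 2 / (δ * q ^ 2) * ∑ u ∈ cls g i, ∑ v ∈ cls g j, indi (M i j (f u) (f v)) ≤
          1 / (2 * q ^ 2) * ((#(cls g i) : ℝ) * #(cls g j)) := by
        calc _ ≤ 2 / (δ * q ^ 2) * (δ / 4 * ((#(cls g i) : ℝ) * #(cls g j))) := by gcongr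
          _ = _ := by field_simp; ring
      have h5 : (3 / (4 * q ^ 2) : ℝ) = 1 / (8 * q ^ 2) + 1 / (8 * q ^ 2) + 1 / (2 * q ^ 2) := by
        field_simp; ring
      rw [h5]
      linarith)
  have htot : ∑ p ∈ univ.filter (fun p : Fin q × Fin q => p.1 ≠ p.2), (3 / (4 * (q:ℝ) ^ 2)) < 1 := by
    have h1 : (#(univ.filter fun p : Fin q × Fin q => p.1 ≠ p.2) : ℝ) ≤ q ^ 2 := by
      have := Finset.card_filter_le (univ : Finset (Fin q × Fin q)) (fun p => p.1 ≠ p.2)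
      simp only [Finset.card_univ, Fintype.card_prod, Fintype.card_fin] at this
      rw [pow_two]
      exact_mod_cast this
    rw [Finset.sum_const, nsmul_eq_mul]
    calc _ ≤ (q:ℝ) ^ 2 * (3 / (4 * (q:ℝ) ^ 2)) := by gcongr
      _ = 3 / 4 := by field_simp
      _ < 1 := by norm_num
  obtain ⟨T, hT⟩ : ∃ T : Fin q × Fin q → ℝ, ∀ p, T p =
      indi (¬ HomPair G γ (A p.1 (f (w p.1))) (A p.2 (f (w p.2)))) +
      indi ((#(A p.1 (f (w p.1))) : ℝ) < t) +
        2 / (δ * q ^ 2) * indi (M p.1 p.2 (f (w p.1)) (f (w p.2))) := ⟨_, fun _ => rfl⟩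
  have hlt : ∑ p ∈ univ.filter (fun p : Fin q × Fin q => p.1 ≠ p.2), T p < 1 := by
    refine lt_of_le_of_lt (le_trans (le_of_eq ?_) hle) htot
    exact Finset.sum_congr rfl fun p _ => hT p
  have hterm0 : ∀ p : Fin q × Fin q, 0 ≤ T p := by
    intro p
    rw [hT]
    have h1 := indi_nonneg (¬ HomPair G γ (A p.1 (f (w p.1))) (A p.2 (f (w p.2))))
    have h2 := indi_nonneg ((#(A p.1 (f (w p.1))) : ℝ) < t)
    have h3 := indi_nonneg (M p.1 p.2 (f (w p.1)) (f (w p.2)))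
    positivity
  have hterm : ∀ i j : Fin q, i ≠ j →
      indi (¬ HomPair G γ (A i (f (w i))) (A j (f (w j)))) +
      indi ((#(A i (f (w i))) : ℝ) < t) +
        2 / (δ * q ^ 2) * indi (M i j (f (w i)) (f (w j))) < 1 := by
    intro i j hij
    have h1 := hT (i, j)
    simp only at h1
    rw [← h1]
    refine lt_of_le_of_lt ?_ hlt
    exact Finset.single_le_sum
      (fun p _ => hterm0 p) (Finset.mem_filter.2 ⟨Finset.mem_univ (i, j), hij⟩)
  refine ⟨fun i => A i (f (w i)), ?_, ?_, ?_, ?_⟩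
  · intro i u hu
    rw [hA, mem_cls, Prod.mk.injEq] at hu
    rw [mem_cls]
    exact hu.1
  · intro i j hij
    by_contra hc
    have h1 := hterm i j hij
    rw [indi_pos hc] at h1
    have h2 := indi_nonneg ((#(A i (f (w i))) : ℝ) < t)
    have h3 : 0 ≤ 2 / (δ * q ^ 2) * indi (M i j (f (w i)) (f (w j))) :=
      mul_nonneg (by positivity) (indi_nonneg _)
    linarith
  · intro i
    by_contra hc
    obtain ⟨j, hij⟩ : ∃ j : Fin q, i ≠ j := by
      haveI : Nontrivial (Fin q) := Fin.nontrivial_iff_two_le.2 hq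
      obtain ⟨j, hj⟩ := exists_ne i
      exact ⟨j, hj.symm⟩
    have h1 := hterm i j hij
    rw [indi_pos (not_le.1 hc)] at h1
    have h2 := indi_nonneg (¬ HomPair G γ (A i (f (w i))) (A j (f (w j))))
    have h3 : 0 ≤ 2 / (δ * q ^ 2) * indi (M i j (f (w i)) (f (w j))) :=
      mul_nonneg (by positivity) (indi_nonneg _)
    linarith
  · set W := univ.filter fun p : Fin q × Fin q => p.1 ≠ p.2 ∧
        (HomPair G (δ / 8) (cls g p.1) (cls g p.2) ∧
        ¬ (DomOne G (A p.1 (f (w p.1))) (A p.2 (f (w p.2))) ↔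
          DomOne G (cls g p.1) (cls g p.2))) with hW
    have h1 : (#W : ℝ) * (2 / (δ * q ^ 2)) < 1 := by
      refine lt_of_le_of_lt ?_ hlt
      rw [← nsmul_eq_mul, ← Finset.sum_const]
      refine le_trans (Finset.sum_le_sum (g := T) ?_)
        (Finset.sum_le_sum_of_subset_of_nonneg ?_ (fun p _ _ => hterm0 p))
      · intro p hp
        rw [hW, Finset.mem_filter] at hp
        have h1 := indi_nonneg (¬ HomPair G γ (A p.1 (f (w p.1))) (A p.2 (f (w p.2))))
        have h2 := indi_nonneg ((#(A p.1 (f (w p.1))) : ℝ) < t)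
        have h3 : indi (M p.1 p.2 (f (w p.1)) (f (w p.2))) = 1 := indi_pos hp.2.2
        rw [hT, h3]
        linarith
      · intro p hp
        rw [hW, Finset.mem_filter] at hp
        exact Finset.mem_filter.2 ⟨hp.1, hp.2.1⟩
    rw [← lt_div_iff₀ (by positivity)] at h1
    refine h1.le.trans (le_of_eq ?_)
    field_simp


lemma final_aux (c : ℕ) (γ δ : ℝ) (hγ : 0 < γ) (hγ2 : γ < 1 / 2) (hδ : 0 < δ) (hδ2 : δ < 1 / 2)
    (s1 q s2 : ℕ) (hs1 : 1 ≤ s1) (hs1' : (s1 : ℝ) ≤ (1 / δ ^ 13) ^ c)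
    (hq : q = ⌈2 * (s1 : ℝ) / δ ^ 13⌉₊)
    (hs2' : (s2 : ℝ) ≤ (1 / (γ * δ) ^ (4 * (13 * c + 15) + 6)) ^ c) :
    δ⁻¹ ≤ (q : ℝ) ∧ 2 ≤ q ∧ (q : ℝ) ≤ (1 / δ) ^ (13 * c + 15) ∧
    (s1 : ℝ) ≤ δ ^ 13 * q ∧
    (γ * δ) ^ (4 * (13 * c + 15) + 6) ≤ γ / (400 * (q : ℝ) ^ 4) ∧
    16 * (q : ℝ) ^ 3 * s2 ≤ (1 / (γ * δ)) ^
      (2 + 3 * (13 * c + 15) + (4 * (13 * c + 15) + 6) * c) := by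
  obtain ⟨D, hD⟩ : ∃ D : ℝ, D = 1 / δ := ⟨_, rfl⟩
  obtain ⟨Z, hZ⟩ : ∃ Z : ℝ, Z = 1 / (γ * δ) := ⟨_, rfl⟩
  have hD2 : 2 ≤ D := by
    rw [hD, le_div_iff₀ hδ]; linarith
  have hG2 : 2 ≤ 1 / γ := by
    rw [le_div_iff₀ hγ]; linarith
  have hZD : Z = 1 / γ * D := by rw [hZ, hD]; field_simp
  have hDZ : D ≤ Z := by rw [hZD]; nlinarith
  have hGZ : 1 / γ ≤ Z := by rw [hZD]; nlinarith
  have hZ4 : 4 ≤ Z := by rw [hZD]; nlinarith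
  have hd13 : 0 < δ ^ 13 := by positivity
  have hs1D : (s1 : ℝ) ≤ D ^ (13 * c) := by
    refine hs1'.trans (le_of_eq ?_)
    rw [hD, pow_mul, one_div_pow δ]
  have hs1r : (1:ℝ) ≤ s1 := by exact_mod_cast hs1
  have hq1 : 2 * (s1 : ℝ) / δ ^ 13 ≤ q := by rw [hq]; exact Nat.le_ceil _
  have hq1' : 2 * (s1 : ℝ) ≤ q * δ ^ 13 := by rwa [div_le_iff₀ hd13] at hq1
  have hqe : 2 * (s1 : ℝ) / δ ^ 13 = 2 * s1 * D ^ 13 := by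
    rw [hD, one_div_pow]; ring
  have hD13 : D ≤ D ^ 13 := le_self_pow₀ (by linarith) (by norm_num)
  have hqD : 2 * D ≤ q := by
    refine le_trans ?_ (hqe ▸ hq1)
    nlinarith
  have hq2 : (q : ℝ) ≤ D ^ (13 * c + 15) := by
    have h1 : (q : ℝ) < 2 * (s1 : ℝ) / δ ^ 13 + 1 := by
      rw [hq]; exact Nat.ceil_lt_add_one (by positivity)
    rw [hqe] at h1
    have h2 : 2 * (s1:ℝ) * D ^ 13 ≤ D * D ^ (13 * c) * D ^ 13 := by gcongr
    have h3 : (1:ℝ) ≤ D * D ^ (13 * c) * D ^ 13 := by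
      have : D * D ^ (13 * c) * D ^ 13 = D ^ (13 * c + 14) := by ring
      rw [this]
      exact one_le_pow₀ (by linarith)
    have h4 : D ^ (13 * c + 15) = D * (D * D ^ (13 * c) * D ^ 13) := by ring
    rw [h4]
    nlinarith
  have hq0 : (0:ℝ) < q := by linarith
  have hgd : 0 < γ * δ := by positivity
  have hZ0 : 0 < Z := by linarith
  have hqZ : (q : ℝ) ≤ Z ^ (13 * c + 15) := hq2.trans (by gcongr)
  have hgZ : γ * δ = 1 / Z := by rw [hZ]; simp
  refine ⟨?_, ?_, ?_, ?_, ?_, ?_⟩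
  · rw [← one_div, ← hD]; linarith
  · have : (2:ℝ) ≤ q := by linarith
    exact_mod_cast this
  · rw [← hD]; exact hq2
  · linarith
  · rw [hgZ, one_div_pow, div_le_div_iff₀ (by positivity) (by positivity), one_mul]
    have h5 : (400:ℝ) ≤ Z ^ 5 := by
      calc (400:ℝ) ≤ 4 ^ 5 := by norm_num
        _ ≤ _ := by gcongr
    have h6 : 1 ≤ γ * Z := by
      rw [div_le_iff₀ hγ] at hGZ
      linarith
    calc 400 * (q:ℝ) ^ 4 ≤ Z ^ 5 * (Z ^ (13 * c + 15)) ^ 4 := by gcongr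
      _ ≤ (γ * Z) * (Z ^ 5 * (Z ^ (13 * c + 15)) ^ 4) := le_mul_of_one_le_left (by positivity) h6
      _ = _ := by ring
  · rw [← hZ]
    have h5 : (16:ℝ) ≤ Z ^ 2 := by nlinarith
    have h6 : (s2 : ℝ) ≤ Z ^ ((4 * (13 * c + 15) + 6) * c) := by
      refine hs2'.trans (le_of_eq ?_)
      rw [hZ, pow_mul, one_div_pow (γ * δ)]
    calc 16 * (q : ℝ) ^ 3 * s2 ≤ Z ^ 2 * (Z ^ (13 * c + 15)) ^ 3 *
          Z ^ ((4 * (13 * c + 15) + 6) * c) := by gcongr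
      _ = _ := by ring

lemma HomPair.mono {n : ℕ} {G : SimpleGraph (Fin n)} {η δ : ℝ} {X Y : Finset (Fin n)}
    (h : HomPair G η X Y) (hle : η ≤ δ) : HomPair G δ X Y := by
  rcases h with h | h
  · left; linarith
  · right; linarith

set_option maxHeartbeats 1000000 in
/-- Lemma 2.5 of the paper. -/
theorem strong_regularity (k : ℕ) (hk : 1 ≤ k) :
    ∃ C : ℝ, 0 < C ∧
      ∀ B : Fin k → Fin k → Prop, ∀ γ δ : ℝ, 0 < γ → γ < 1 / 2 → 0 < δ → δ < 1 / 2 →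
        ∃ n₀ : ℕ, ∀ n : ℕ, n₀ ≤ n → ∀ G : SimpleGraph (Fin n),
          (γ * δ) ^ C * (n : ℝ) ^ (2 * k) ≤ (bipCopyCount B G : ℝ) ∨
          ∃ q : ℕ, δ⁻¹ ≤ (q : ℝ) ∧ (q : ℝ) ≤ δ ^ (-C) ∧
            ∃ Q : Fin q → Finset (Fin n), IsEquipartition Q ∧
            ∃ U : Fin q → Finset (Fin n), (∀ i, U i ⊆ Q i) ∧
              ((Set.ncard {ij : Fin q × Fin q | ij.1 < ij.2 ∧
                ¬ (HomPair G δ (Q ij.1) (Q ij.2) ∧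
                    (DomOne G (U ij.1) (U ij.2) ↔ DomOne G (Q ij.1) (Q ij.2)))} : ℝ)
                  ≤ δ * (q : ℝ) ^ 2) ∧
              (∀ i j : Fin q, i < j → HomPair G γ (U i) (U j)) ∧
              (∀ i : Fin q, (γ * δ) ^ C * (n : ℝ) ≤ ((U i).card : ℝ)) := by
  obtain ⟨c, hc⟩ := cluster k hk
  obtain ⟨C₀, hC₀⟩ : ∃ C₀ : ℕ, C₀ = 2 + 3 * (13 * c + 15) + (4 * (13 * c + 15) + 6) * c := ⟨_, rfl⟩
  refine ⟨(C₀ : ℝ), by rw [hC₀]; positivity, ?_⟩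
  intro B γ δ hγ hγ2 hδ hδ2
  have hgd : 0 < γ * δ := by positivity
  have hgd1 : γ * δ ≤ δ := by nlinarith
  have hgd2 : γ * δ ≤ 1 / 2 := by linarith
  have hd1 : δ ≤ 1 := by linarith
  have hε1 : δ ^ 13 ≤ δ ^ 2 / 2048 := by
    have : δ ^ 11 ≤ (1 / 2) ^ 11 := by gcongr
    calc δ ^ 13 = δ ^ 2 * δ ^ 11 := by ring
      _ ≤ δ ^ 2 * (1 / 2) ^ 11 := by gcongr
      _ = _ := by norm_num; ring
  obtain ⟨s1, n1, hs1, hs1', hcl1⟩ := hc (δ ^ 13) (by positivity) (by nlinarith)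
  obtain ⟨s2, n2, hs2, hs2', hcl2⟩ := hc ((γ * δ) ^ (4 * (13 * c + 15) + 6)) (by positivity) (by
    have h1 : (γ * δ) ^ (4 * (13 * c + 15) + 6) ≤ γ * δ :=
      pow_le_of_le_one hgd.le (by linarith) (by omega)
    linarith)
  obtain ⟨q, hq⟩ : ∃ q : ℕ, q = ⌈2 * (s1 : ℝ) / δ ^ 13⌉₊ := ⟨_, rfl⟩
  obtain ⟨hqD, hq2, hqub, hs1q, hε2, hsize⟩ :=
    final_aux c γ δ hγ hγ2 hδ hδ2 s1 q s2 hs1 hs1' hq hs2'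
  rw [← hC₀] at hsize
  have hq0 : (0:ℝ) < q := by exact_mod_cast (by omega : 0 < q)
  refine ⟨q + n1 + n2, fun n hn G => ?_⟩
  have hqn : q ≤ n := by omega
  have hn0 : 0 < n := by omega
  have hn0' : (0:ℝ) < n := by exact_mod_cast hn0
  simp only [Real.rpow_natCast, Real.rpow_neg hδ.le]
  rcases hcl1 n (by omega) B G with h1 | ⟨f1, E1, hE1, hf1⟩
  · left
    refine le_trans ?_ h1
    gcongr
    rw [← pow_mul]
    calc (γ * δ) ^ C₀ ≤ (γ * δ) ^ (13 * c) :=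
          pow_le_pow_of_le_one hgd.le (by linarith) (by rw [hC₀]; nlinarith)
      _ ≤ _ := by gcongr
  rcases hcl2 n (by omega) B G with h1 | ⟨f2, E2, hE2, hf2⟩
  · left
    refine le_trans ?_ h1
    gcongr
    rw [← pow_mul]
    exact pow_le_pow_of_le_one hgd.le (by linarith) (by rw [hC₀]; omega)
  right
  obtain ⟨g, hg, R, hR, hgR⟩ := equi (by omega : 1 ≤ q) hqn f1
  have hsz : ∀ i, (n:ℝ) / (2 * q) ≤ #(cls g i) := by
    intro i
    have h1 : n / q ≤ #(cls g i) := by rcases hg i with h | h <;> omega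
    have h2 : n < q * (n / q) + q := Nat.lt_mul_div_succ n (by omega)
    have h3 : 1 ≤ n / q := Nat.div_pos hqn (by omega)
    have h4 : n ≤ #(cls g i) * (2 * q) := by nlinarith
    rw [div_le_iff₀ (by positivity)]
    exact_mod_cast h4
  have hRn : (#R : ℝ) ≤ δ ^ 13 * n := by
    have h1 : (#R : ℝ) ≤ s1 * ((n / q : ℕ) : ℝ) := by exact_mod_cast hR
    have h2 : ((n / q : ℕ) : ℝ) ≤ (n:ℝ) / q := Nat.cast_div_le
    calc (#R : ℝ) ≤ s1 * ((n:ℝ) / q) := h1.trans (by gcongr)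
      _ ≤ (δ ^ 13 * q) * ((n:ℝ) / q) := by gcongr
      _ = _ := by field_simp
  have hdef1 := defect_sum G g (E1 ∪ R) (2 * δ ^ 13) (by
      have h1 : (#(E1 ∪ R) : ℝ) ≤ #E1 + #R := by exact_mod_cast Finset.card_union_le _ _
      linarith) (by
      intro u hu v hv huv
      rw [Finset.mem_union, not_or] at hu hv
      have h1 := hf1 u hu.1 v hv.1 (hgR u hu.2 v hv.2 huv)
      have h2 : 0 ≤ δ ^ 13 * n := by positivity
      linarith)
  have hcnt := nonhom_count G g hn0 (by omega) hsz (δ / 8) _ (by positivity) hdef1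
  have hdef2 := defect_sum G (fun u => (g u, f2 u)) E2 _ hE2 (by
      intro u hu v hv huv
      rw [Prod.mk.injEq] at huv
      exact hf2 u hu v hv huv.2)
  obtain ⟨U, hU1, hU2, hU3, hU4⟩ := select G g f2 hn0 hq2 hs2 hsz γ δ _ hγ hδ hδ2 hε2 hdef2
  refine ⟨q, hqD, ?_, cls g, ⟨?_, ?_, ?_⟩, U, hU1, ?_, ?_, ?_⟩
  · refine hqub.trans ?_
    rw [one_div, ← inv_pow]
    exact pow_le_pow_right₀ (by rw [← one_div, le_div_iff₀ hδ]; linarith) (by rw [hC₀]; omega)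
  · intro i j hij
    rw [Finset.disjoint_left]
    intro u hu hu'
    rw [mem_cls] at hu hu'
    exact hij (hu.symm.trans hu')
  · exact fun v => ⟨g v, by rw [mem_cls]⟩
  · intro i j
    rcases hg i with h | h <;> rcases hg j with h' | h' <;> omega
  · have hsub : {ij : Fin q × Fin q | ij.1 < ij.2 ∧
                ¬ (HomPair G δ (cls g ij.1) (cls g ij.2) ∧
                    (DomOne G (U ij.1) (U ij.2) ↔ DomOne G (cls g ij.1) (cls g ij.2)))} ⊆
        (((univ.filter fun p : Fin q × Fin q => ¬ HomPair G (δ / 8) (cls g p.1) (cls g p.2)) ∪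
        (univ.filter fun p : Fin q × Fin q => p.1 ≠ p.2 ∧
        (HomPair G (δ / 8) (cls g p.1) (cls g p.2) ∧
        ¬ (DomOne G (U p.1) (U p.2) ↔ DomOne G (cls g p.1) (cls g p.2)))) :
          Finset (Fin q × Fin q)) : Set (Fin q × Fin q)) := by
      rintro p ⟨hp1, hp2⟩
      rw [Finset.mem_coe, Finset.mem_union, Finset.mem_filter, Finset.mem_filter]
      by_cases hh : HomPair G (δ / 8) (cls g p.1) (cls g p.2)
      · right
        refine ⟨Finset.mem_univ _, hp1.ne, hh, fun hd => hp2 ⟨hh.mono (by linarith), hd⟩⟩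
      · left
        exact ⟨Finset.mem_univ _, hh⟩
    have h1 := Set.ncard_le_ncard hsub (Finset.finite_toSet _)
    rw [Set.ncard_coe_finset] at h1
    have h2 := h1.trans (Finset.card_union_le _ _)
    have h3 : 48 * (2 * δ ^ 13) / (δ / 8) * (q:ℝ) ^ 2 ≤ δ / 2 * q ^ 2 := by
      refine mul_le_mul_of_nonneg_right ?_ (by positivity)
      rw [div_le_iff₀ (by positivity)]
      nlinarith [sq_nonneg δ]
    calc _ ≤ _ := Nat.cast_le.2 h2
      _ ≤ δ / 2 * (q:ℝ) ^ 2 + δ / 2 * q ^ 2 := by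
        rw [Nat.cast_add]
        exact add_le_add (hcnt.trans h3) hU4
      _ = _ := by ring
  · exact fun i j hij => hU2 i j hij.ne
  · intro i
    refine le_trans ?_ (hU3 i)
    have hs20 : (0:ℝ) < s2 := by exact_mod_cast hs2
    rw [le_div_iff₀ (by positivity)]
    rw [one_div_pow, le_div_iff₀ (by positivity)] at hsize
    nlinarith

end
end

section
/- For every integer k ≥ 1 there is a constant C = C(k) such that the following holds for every bipartite graph H with bipartition (S,T), |S| = |T| = k, every integer m ≥ 1 and every α ∈ (0,1/2): there is n₀ = n₀(k,m,α) such that every graph G on n ≥ n₀ vertices either contains at least α^C·2^{-Cm}·n^{2k} induced bipartite copies of H, or there are pairwise disjoint subsets W₁,…,W_m ⊆ V(G) such that (1) either d(W_i,W_j) ≥ 1−α for every 1 ≤ i < j ≤ m, or d(W_i,W_j) ≤ α for every 1 ≤ i < j ≤ m, and (2) |W_i| ≥ α^C·2^{-Cm}·n for every 1 ≤ i ≤ m. -/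
open scoped Classical
open Finset

noncomputable section

lemma homs_le_s10 {k n : ℕ} (B : Fin k → Fin k → Prop) (G : SimpleGraph (Fin n)) :
    (univ.filter fun φ : (Fin k ⊕ Fin k) → Fin n =>
      ∀ s t, B s t ↔ G.Adj (φ (Sum.inl s)) (φ (Sum.inr t))).card ≤
    bipCopyCount B G + (2 * k) ^ 2 * n ^ (2 * k - 1) := by
  have h1 : (univ.filter fun φ : (Fin k ⊕ Fin k) → Fin n =>
      ∀ s t, B s t ↔ G.Adj (φ (Sum.inl s)) (φ (Sum.inr t))) ⊆
      ((univ.filter fun φ : (Fin k ⊕ Fin k) ↪ Fin n =>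
      ∀ s t, B s t ↔ G.Adj (φ (Sum.inl s)) (φ (Sum.inr t))).image
        (fun φ : (Fin k ⊕ Fin k) ↪ Fin n => (⇑φ))) ∪
      (univ : Finset ((Fin k ⊕ Fin k) × (Fin k ⊕ Fin k))).biUnion (fun q =>
        univ.filter fun φ : (Fin k ⊕ Fin k) → Fin n => q.1 ≠ q.2 ∧ φ q.1 = φ q.2) := by
    intro φ hφ
    simp only [mem_filter, mem_univ, true_and] at hφ
    simp only [mem_union, mem_image, mem_biUnion, mem_filter, mem_univ, true_and]
    by_cases hi : Function.Injective φ
    · left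
      exact ⟨⟨φ, hi⟩, hφ, rfl⟩
    · right
      simp only [Function.Injective, not_forall] at hi
      obtain ⟨a, b, hab, hne⟩ := hi
      exact ⟨(a, b), hne, hab⟩
  refine (card_le_card h1).trans ((card_union_le _ _).trans ?_)
  refine Nat.add_le_add ?_ ?_
  · refine card_image_le.trans ?_
    rw [bipCopyCount, ← Set.ncard_coe_finset]
    simp
  · have h2 := card_biUnion_le_card_mul (univ : Finset ((Fin k ⊕ Fin k) × (Fin k ⊕ Fin k)))
      (fun q => univ.filter fun φ : (Fin k ⊕ Fin k) → Fin n => q.1 ≠ q.2 ∧ φ q.1 = φ q.2)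
      (n ^ (2 * k - 1)) ?_
    · refine h2.trans (le_of_eq ?_)
      simp [Fintype.card_prod, two_mul, sq]
    · rintro ⟨a, b⟩ -
      by_cases hab : a = b
      · simp [hab]
      have : (n ^ (2 * k - 1)) = (univ : Finset ({i : Fin k ⊕ Fin k // i ≠ a} → Fin n)).card := by
        simp [Fintype.card_subtype_compl, two_mul]
      rw [this]
      refine card_le_card_of_injOn (fun φ i => φ i.1) (by simp) ?_
      intro φ hφ ψ hψ h
      simp only [coe_filter, mem_univ, true_and, Set.mem_ofPred_eq] at hφ hψ
      have h' : ∀ i, i ≠ a → φ i = ψ i := fun i hi => congrFun h ⟨i, hi⟩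
      funext i
      by_cases hi : i = a
      · subst hi
        rw [hφ.2, hψ.2]
        exact h' b (Ne.symm hab)
      · exact h' i hi

lemma good_le {k n : ℕ} (B : Fin k → Fin k → Prop) (G : SimpleGraph (Fin n))
    (X : Finset (Fin n)) (T : ℝ) (hT : 0 ≤ T) (Good : Finset (Fin k → Fin n))
    (hG : ∀ g ∈ Good, ∀ P : Fin k → Prop,
      T ≤ ((X.filter fun x => ∀ j, P j ↔ G.Adj x (g j)).card : ℝ)) :
    (Good.card : ℝ) * T ^ k ≤ ((univ.filter fun φ : (Fin k ⊕ Fin k) → Fin n =>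
      ∀ s t, B s t ↔ G.Adj (φ (Sum.inl s)) (φ (Sum.inr t))).card : ℝ) := by
  let F : (Fin k → Fin n) → Finset (Fin k → Fin n) := fun g =>
    Fintype.piFinset fun s => X.filter fun x => ∀ j, B s j ↔ G.Adj x (g j)
  have h1 : (Good.sigma F).card ≤ (univ.filter fun φ : (Fin k ⊕ Fin k) → Fin n =>
      ∀ s t, B s t ↔ G.Adj (φ (Sum.inl s)) (φ (Sum.inr t))).card := by
    refine card_le_card_of_injOn (fun p => Sum.elim p.2 p.1) ?_ ?_
    · rintro ⟨g, f⟩ h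
      simp only [coe_sigma, Set.mem_sigma_iff, mem_coe, F, Fintype.mem_piFinset, mem_filter] at h
      simp only [coe_filter, mem_univ, true_and, Set.mem_ofPred_eq, Sum.elim_inl, Sum.elim_inr]
      exact fun s t => (h.2 s).2 t
    · rintro ⟨g, f⟩ - ⟨g', f'⟩ - h
      have h1 : g = g' := funext fun i => congrFun h (Sum.inr i)
      have h2 : f = f' := funext fun i => congrFun h (Sum.inl i)
      subst h1 h2
      rfl
  refine le_trans ?_ (Nat.cast_le.mpr h1)
  rw [card_sigma, Nat.cast_sum, ← nsmul_eq_mul]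
  refine card_nsmul_le_sum _ _ _ ?_
  intro g hg
  simp only [F, Fintype.card_piFinset, Nat.cast_prod]
  calc T ^ k = ∏ _s : Fin k, T := by simp
    _ ≤ _ := prod_le_prod (fun _ _ => hT) (fun s _ => hG g hg (B s))

lemma sauer_step {k s n : ℕ} (hk : 1 ≤ k) (hs : 2 ≤ s) (G : SimpleGraph (Fin n))
    (X : Finset (Fin n)) (T : ℝ) (c : Fin s → Fin n)
    (hb : ∀ b : Fin k ↪ Fin s, ∃ P : Fin k → Prop,
      ((X.filter fun x => ∀ j, P j ↔ G.Adj x (c (b j))).card : ℝ) < T)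
    (hT0 : 0 ≤ T) (hT : (s : ℝ) ^ k * T ≤ (X.card : ℝ) / 2) :
    ((X.card : ℝ) / 2 / (s : ℝ) ^ k) ^ 2 ≤
      (((X ×ˢ X).filter fun q => ∀ i, G.Adj q.1 (c i) ↔ G.Adj q.2 (c i)).card : ℝ) := by
  choose P hP using hb
  let Del : Finset (Fin n) := (univ : Finset (Fin k ↪ Fin s)).biUnion fun b =>
    X.filter fun x => ∀ j, P b j ↔ G.Adj x (c (b j))
  have hDel : (Del.card : ℝ) ≤ (X.card : ℝ) / 2 := by
    have h1 : (Del.card : ℝ) ≤ ∑ b : Fin k ↪ Fin s,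
        ((X.filter fun x => ∀ j, P b j ↔ G.Adj x (c (b j))).card : ℝ) := by
      exact_mod_cast card_biUnion_le
    have h2 := sum_le_card_nsmul (univ : Finset (Fin k ↪ Fin s)) _ T (fun b _ => (hP b).le)
    have h3 : ((univ : Finset (Fin k ↪ Fin s)).card : ℝ) ≤ (s : ℝ) ^ k := by
      rw [card_univ, Fintype.card_embedding_eq]
      exact_mod_cast (Nat.descFactorial_le_pow _ _).trans (by simp)
    rw [nsmul_eq_mul] at h2
    exact h1.trans (h2.trans ((mul_le_mul_of_nonneg_right h3 hT0).trans hT))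
  let X' := X \ Del
  have hX' : (X.card : ℝ) / 2 ≤ (X'.card : ℝ) := by
    have h : X.card ≤ X'.card + Del.card := by
      have := card_le_card_sdiff_add_card (s := X) (t := Del)
      omega
    have h' : (X.card : ℝ) ≤ X'.card + Del.card := by exact_mod_cast h
    linarith
  let pat : Fin n → Finset (Fin s) := fun x => univ.filter fun i => G.Adj x (c i)
  let A : Finset (Finset (Fin s)) := X'.image pat
  have hns : ∀ S : Finset (Fin s), A.Shatters S → S.card < k := by
    intro S hS
    by_contra hlt
    push Not at hlt
    obtain ⟨S', hS', hc⟩ := exists_subset_card_eq hlt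
    have hS2 : A.Shatters S' := hS.mono_right hS'
    let b : Fin k ↪ Fin s := (S'.orderEmbOfFin hc).toEmbedding
    have hbS : ∀ j, b j ∈ S' := fun j => orderEmbOfFin_mem S' hc j
    obtain ⟨u, hu, hu2⟩ := hS2 (t := (univ.filter (P b)).image b) (by
      intro i hi
      simp only [mem_image] at hi
      obtain ⟨j, -, rfl⟩ := hi
      exact hbS j)
    simp only [A, mem_image] at hu
    obtain ⟨x, hx, rfl⟩ := hu
    have hx2 : x ∈ Del := by
      simp only [Del, mem_biUnion, mem_filter, mem_univ, true_and]
      refine ⟨b, (mem_sdiff.mp hx).1, ?_⟩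
      intro j
      have h1 : b j ∈ S' ∩ pat x ↔ b j ∈ (univ.filter (P b)).image b := by rw [hu2]
      simp only [mem_inter, hbS j, true_and, pat, mem_filter, mem_univ, mem_image] at h1
      rw [h1]
      constructor
      · intro h
        exact ⟨j, h, rfl⟩
      · rintro ⟨j', h, e⟩
        rwa [b.injective e] at h
    exact (mem_sdiff.mp hx).2 hx2
  have hA : A.card ≤ s ^ k := by
    refine (card_le_card_shatterer A).trans ?_
    have h1 : A.shatterer ⊆ (range k).biUnion fun i => powersetCard i univ := by
      intro S hS
      simp only [mem_biUnion, mem_range, mem_powersetCard, subset_univ, true_and]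
      exact ⟨_, hns S (mem_shatterer.mp hS), rfl⟩
    refine (card_le_card h1).trans (card_biUnion_le.trans ?_)
    calc ∑ i ∈ range k, (powersetCard i (univ : Finset (Fin s))).card
        ≤ ∑ i ∈ range k, s ^ i := by
          refine sum_le_sum fun i _ => ?_
          simpa using Nat.choose_le_pow s i
      _ ≤ s ^ k := (Nat.geomSum_lt hs (by simp)).le
  have hspos : (0 : ℝ) < (s : ℝ) ^ k := by positivity
  by_cases hX0 : X.card = 0
  · simp [hX0]
  have hXpos : (0 : ℝ) < X.card := by exact_mod_cast Nat.pos_of_ne_zero hX0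
  have hX'ne : X'.Nonempty := by
    rw [← card_pos]
    have : (0 : ℝ) < X'.card := by linarith
    exact_mod_cast this
  obtain ⟨S, hS, hS2⟩ := exists_le_card_fiber_of_nsmul_le_card_of_maps_to
    (s := X') (t := A) (f := pat) (b := (X.card : ℝ) / 2 / (s : ℝ) ^ k)
    (fun x hx => mem_image_of_mem _ hx) (hX'ne.image _) (by
      rw [nsmul_eq_mul]
      have : (A.card : ℝ) ≤ (s : ℝ) ^ k := by exact_mod_cast hA
      calc (A.card : ℝ) * ((X.card : ℝ) / 2 / (s : ℝ) ^ k)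
          ≤ (s : ℝ) ^ k * ((X.card : ℝ) / 2 / (s : ℝ) ^ k) := by gcongr
        _ = (X.card : ℝ) / 2 := by field_simp
        _ ≤ _ := hX')
  calc ((X.card : ℝ) / 2 / (s : ℝ) ^ k) ^ 2
      ≤ ((X'.filter fun x => pat x = S).card : ℝ) ^ 2 := by gcongr
    _ = (((X'.filter fun x => pat x = S) ×ˢ (X'.filter fun x => pat x = S)).card : ℝ) := by
        rw [card_product]; push_cast; ring
    _ ≤ _ := by
        refine Nat.cast_le.mpr (card_le_card ?_)
        rintro ⟨x, y⟩ h
        simp only [mem_product, mem_filter] at h ⊢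
        refine ⟨⟨(mem_sdiff.mp h.1.1).1, (mem_sdiff.mp h.2.1).1⟩, fun i => ?_⟩
        have : i ∈ pat x ↔ i ∈ pat y := by rw [h.1.2, h.2.2]
        simpa [pat] using this

lemma count_comp {k s n : ℕ} (b : Fin k ↪ Fin s) (Good : Finset (Fin k → Fin n)) :
    (univ.filter fun c : Fin s → Fin n => (fun j => c (b j)) ∈ Good).card * n ^ k ≤
      Good.card * n ^ s := by
  have hks : k ≤ s := by simpa using Fintype.card_le_of_embedding b
  have h1 : (univ.filter fun c : Fin s → Fin n => (fun j => c (b j)) ∈ Good).card ≤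
      (Good ×ˢ (univ : Finset ({i : Fin s // ¬ i ∈ Set.range b} → Fin n))).card := by
    refine card_le_card_of_injOn (fun c => (fun j => c (b j), fun i => c i.1)) ?_ ?_
    · intro c hc
      simpa using hc
    · intro c _ c' _ h
      have h1 := (Prod.ext_iff.mp h).1
      have h2 := (Prod.ext_iff.mp h).2
      funext i
      by_cases hi : i ∈ Set.range b
      · obtain ⟨j, rfl⟩ := hi
        exact congrFun h1 j
      · exact congrFun h2 ⟨i, hi⟩
  have h2 : (univ : Finset ({i : Fin s // ¬ i ∈ Set.range b} → Fin n)).card = n ^ (s - k) := by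
    rw [card_univ, Fintype.card_fun, Fintype.card_fin, Fintype.card_subtype_compl]
    congr 1
    rw [Fintype.card_fin]
    congr 1
    rw [← Fintype.card_congr (Equiv.ofInjective b b.injective), Fintype.card_fin]
  rw [card_product, h2] at h1
  calc _ ≤ (Good.card * n ^ (s - k)) * n ^ k := Nat.mul_le_mul_right _ h1
    _ = Good.card * n ^ s := by rw [mul_assoc, ← pow_add, Nat.sub_add_cancel hks]

lemma sum_same {D n : ℕ} (hD : 1 ≤ D) (G : SimpleGraph (Fin n))
    (X : Finset (Fin n)) (L : ℝ) 
    (hX : ∀ x ∈ X, ((X.filter fun y =>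
      ((univ.filter fun v => ¬ (G.Adj x v ↔ G.Adj y v)).card : ℝ) ≤ n / D).card : ℝ) ≤ L) :
    ∑ c : Fin (D ^ 2) → Fin n,
      (((X ×ˢ X).filter fun q => ∀ i, G.Adj q.1 (c i) ↔ G.Adj q.2 (c i)).card : ℝ) ≤
    (n : ℝ) ^ (D ^ 2) * (X.card * L + X.card ^ 2 * Real.exp (-D)) := by
  have hD0 : (0 : ℝ) < D := by exact_mod_cast hD
  have h1 : ∑ c : Fin (D ^ 2) → Fin n,
      (((X ×ˢ X).filter fun q => ∀ i, G.Adj q.1 (c i) ↔ G.Adj q.2 (c i)).card : ℝ) =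
      ∑ q ∈ X ×ˢ X, (((univ.filter fun v => (G.Adj q.1 v ↔ G.Adj q.2 v)).card : ℝ)) ^ (D ^ 2) := by
    simp_rw [card_filter, Nat.cast_sum]
    rw [sum_comm]
    refine sum_congr rfl fun q _ => ?_
    rw [← Nat.cast_sum, ← card_filter, ← Nat.cast_sum, ← card_filter, ← Nat.cast_pow,
      ← Fintype.card_fin (D ^ 2)]
    congr 1
    have := Fintype.card_piFinset_const (univ.filter fun v => (G.Adj q.1 v ↔ G.Adj q.2 v)) (D ^ 2)
    rw [Fintype.card_fin, ← this]
    congr 1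
    ext c
    simp [Fintype.mem_piFinset]
  rw [h1]
  have h2 : ∀ q ∈ X ×ˢ X,
      (((univ.filter fun v => (G.Adj q.1 v ↔ G.Adj q.2 v)).card : ℝ)) ^ (D ^ 2) ≤
      (n : ℝ) ^ (D ^ 2) * ((if ((univ.filter fun v => ¬ (G.Adj q.1 v ↔ G.Adj q.2 v)).card : ℝ)
        ≤ n / D then 1 else 0) + Real.exp (-D)) := by
    intro q _
    have hsum : ((univ.filter fun v => (G.Adj q.1 v ↔ G.Adj q.2 v)).card : ℝ) +
        ((univ.filter fun v => ¬ (G.Adj q.1 v ↔ G.Adj q.2 v)).card : ℝ) = n := by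
      have := card_filter_add_card_filter_not (s := (univ : Finset (Fin n)))
        (fun v => (G.Adj q.1 v ↔ G.Adj q.2 v))
      rw [card_univ, Fintype.card_fin] at this
      exact_mod_cast this
    set a := ((univ.filter fun v => (G.Adj q.1 v ↔ G.Adj q.2 v)).card : ℝ)
    set b := ((univ.filter fun v => ¬ (G.Adj q.1 v ↔ G.Adj q.2 v)).card : ℝ)
    have ha : 0 ≤ a := Nat.cast_nonneg _
    have hb : 0 ≤ b := Nat.cast_nonneg _
    split_ifs with h
    · calc a ^ (D ^ 2) ≤ (n : ℝ) ^ (D ^ 2) * 1 := by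
            rw [mul_one]; exact pow_le_pow_left₀ ha (by linarith) _
        _ ≤ _ := by
            gcongr
            linarith [Real.exp_pos (-(D : ℝ))]
    · push Not at h
      have h3 : a ≤ n * Real.exp (-(1 / D)) := by
        have := Real.add_one_le_exp (-(1 / (D : ℝ)))
        calc a ≤ n * (-(1 / (D : ℝ)) + 1) := by
              have : (n : ℝ) * (-(1 / (D : ℝ)) + 1) = n - n / D := by ring
              rw [this]; linarith
          _ ≤ _ := by gcongr
      calc a ^ (D ^ 2) ≤ (n * Real.exp (-(1 / D))) ^ (D ^ 2) := pow_le_pow_left₀ ha h3 _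
        _ = (n : ℝ) ^ (D ^ 2) * (0 + Real.exp (-D)) := by
            rw [mul_pow, ← Real.exp_nat_mul, zero_add]
            congr 2
            push_cast
            field_simp
  refine (sum_le_sum h2).trans ?_
  rw [← mul_sum, sum_add_distrib]
  refine mul_le_mul_of_nonneg_left ?_ (by positivity)
  refine add_le_add ?_ ?_
  · rw [sum_product]
    have := sum_le_card_nsmul X (fun x => ∑ y ∈ X,
      (if ((univ.filter fun v => ¬ (G.Adj x v ↔ G.Adj y v)).card : ℝ)
        ≤ n / D then (1 : ℝ) else 0)) L (by
        intro x hx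
        simp only [sum_boole]
        exact hX x hx)
    rwa [nsmul_eq_mul] at this
  · rw [sum_const, card_product, nsmul_eq_mul]
    push_cast
    rw [sq]

lemma piece {k n D : ℕ} (hk : 1 ≤ k) (hD : 2 ≤ D) (hn : 0 < n)
    (hexp : 16 * (D : ℝ) ^ (4 * k) * Real.exp (-D) ≤ 1 / 4)
    (B : Fin k → Fin k → Prop) (G : SimpleGraph (Fin n)) (X : Finset (Fin n))
    (hX : (n : ℝ) / 2 ≤ X.card) (L : ℝ) (hL : L ≤ n / (64 * (D : ℝ) ^ (4 * k)))
    (hhom : ((univ.filter fun φ : (Fin k ⊕ Fin k) → Fin n =>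
      ∀ s t, B s t ↔ G.Adj (φ (Sum.inl s)) (φ (Sum.inr t))).card : ℝ) <
      (n : ℝ) ^ (2 * k) / (2 * 4 ^ k * (D : ℝ) ^ (2 * k + 2 * k ^ 2))) :
    ∃ x ∈ X, L ≤ ((X.filter fun y =>
      ((univ.filter fun v => ¬ (G.Adj x v ↔ G.Adj y v)).card : ℝ) ≤ n / D).card : ℝ) := by
  by_contra hcon
  simp only [not_exists, not_and, not_le] at hcon
  have hD0 : (0 : ℝ) < D := by exact_mod_cast (by omega : 0 < D)
  have hn0 : (0 : ℝ) < n := by exact_mod_cast hn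
  have hXn : (X.card : ℝ) ≤ n := by
    exact_mod_cast (card_le_univ X).trans (by simp)
  set s := D ^ 2 with hs
  have hs2 : 2 ≤ s := by nlinarith
  have hsr : (s : ℝ) = (D : ℝ) ^ 2 := by rw [hs]; push_cast; rfl
  have hs0 : (0 : ℝ) < s := by rw [hsr]; positivity
  set T : ℝ := n / (4 * (s : ℝ) ^ k) with hT
  have hT0 : 0 ≤ T := by positivity
  let Good : Finset (Fin k → Fin n) := univ.filter fun g => ∀ P : Fin k → Prop,
      T ≤ ((X.filter fun x => ∀ j, P j ↔ G.Adj x (g j)).card : ℝ)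
  have hgood := good_le B G X T hT0 Good (by
    intro g hg
    simpa [Good] using hg)
  let CA : Finset (Fin s → Fin n) := univ.filter fun c =>
    ∃ b : Fin k ↪ Fin s, (fun j => c (b j)) ∈ Good
  let CB : Finset (Fin s → Fin n) := univ.filter fun c =>
    ¬ ∃ b : Fin k ↪ Fin s, (fun j => c (b j)) ∈ Good
  have hAB : (CA.card : ℝ) + CB.card = (n : ℝ) ^ s := by
    have := card_filter_add_card_filter_not (s := (univ : Finset (Fin s → Fin n)))
      (fun c => ∃ b : Fin k ↪ Fin s, (fun j => c (b j)) ∈ Good)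
    rw [card_univ, Fintype.card_fun, Fintype.card_fin, Fintype.card_fin] at this
    exact_mod_cast this
  have hA : (CA.card : ℝ) * (n : ℝ) ^ k ≤ (s : ℝ) ^ k * (Good.card * (n : ℝ) ^ s) := by
    have h1 : CA ⊆ (univ : Finset (Fin k ↪ Fin s)).biUnion fun b =>
        univ.filter fun c : Fin s → Fin n => (fun j => c (b j)) ∈ Good := by
      intro c hc
      simpa [CA] using hc
    have h2 : CA.card * n ^ k ≤ s ^ k * (Good.card * n ^ s) := by
      calc CA.card * n ^ k ≤ (∑ b : Fin k ↪ Fin s,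
            (univ.filter fun c : Fin s → Fin n => (fun j => c (b j)) ∈ Good).card) * n ^ k :=
            Nat.mul_le_mul_right _ ((card_le_card h1).trans card_biUnion_le)
        _ = ∑ b : Fin k ↪ Fin s,
            (univ.filter fun c : Fin s → Fin n => (fun j => c (b j)) ∈ Good).card * n ^ k :=
            sum_mul _ _ _
        _ ≤ ∑ b : Fin k ↪ Fin s, Good.card * n ^ s := sum_le_sum fun b _ => count_comp b Good
        _ = Fintype.card (Fin k ↪ Fin s) * (Good.card * n ^ s) := by simp
        _ ≤ _ := by
          refine Nat.mul_le_mul_right _ ?_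
          rw [Fintype.card_embedding_eq]
          exact (Nat.descFactorial_le_pow _ _).trans (by simp)
    exact_mod_cast h2
  have hB : (CB.card : ℝ) * ((n : ℝ) / 4 / (s : ℝ) ^ k) ^ 2 ≤
      (n : ℝ) ^ s * (n * (n / (64 * (D : ℝ) ^ (4 * k))) + n ^ 2 * Real.exp (-D)) := by
    have h1 := sum_same (by omega : 1 ≤ D) G X L (fun x hx => (hcon x hx).le)
    have h2 : (CB.card : ℝ) * ((n : ℝ) / 4 / (s : ℝ) ^ k) ^ 2 ≤ ∑ c : Fin s → Fin n,
      (((X ×ˢ X).filter fun q => ∀ i, G.Adj q.1 (c i) ↔ G.Adj q.2 (c i)).card : ℝ) := by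
      refine le_trans ?_ (sum_le_sum_of_subset_of_nonneg (subset_univ CB)
        (fun _ _ _ => Nat.cast_nonneg _))
      rw [← nsmul_eq_mul]
      refine card_nsmul_le_sum _ _ _ ?_
      intro c hc
      refine le_trans ?_ (sauer_step hk hs2 G X T c ?_ hT0 ?_)
      · have : (n : ℝ) / 4 ≤ X.card / 2 := by linarith
        gcongr
      · intro b
        simp only [CB, mem_filter, mem_univ, true_and, not_exists] at hc
        have := hc b
        simp only [Good, mem_filter, mem_univ, true_and, not_forall, not_le] at this
        exact this
      · have : (s : ℝ) ^ k * T = n / 4 := by rw [hT]; field_simp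
        rw [this]; linarith
    have hL0 : 0 ≤ L := by
      have : X.Nonempty := by
        rw [← card_pos]
        have : (0 : ℝ) < X.card := by linarith
        exact_mod_cast this
      obtain ⟨x, hx⟩ := this
      exact (Nat.cast_nonneg _).trans (hcon x hx).le
    refine h2.trans (h1.trans ?_)
    gcongr
  have hs4 : ((s : ℝ) ^ k) ^ 2 = (D : ℝ) ^ (4 * k) := by
    rw [hsr, ← pow_mul, ← pow_mul]; congr 1; ring
  have hB2 : (CB.card : ℝ) ≤ (n : ℝ) ^ s / 2 := by
    have e1 : ((n : ℝ) / 4 / (s : ℝ) ^ k) ^ 2 = n ^ 2 / (16 * (D : ℝ) ^ (4 * k)) := by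
      rw [div_pow, hs4]; field_simp; norm_num
    rw [e1] at hB
    have hQ : (0 : ℝ) < (D : ℝ) ^ (4 * k) := by positivity
    set Q := (D : ℝ) ^ (4 * k)
    have e2 : (CB.card : ℝ) = (CB.card : ℝ) * (n ^ 2 / (16 * Q)) * (16 * Q / n ^ 2) := by
      field_simp
    have e3 : (n : ℝ) ^ s * (n * (n / (64 * Q)) + n ^ 2 * Real.exp (-D)) * (16 * Q / n ^ 2) =
      (n : ℝ) ^ s * (1 / 4 + 16 * Q * Real.exp (-D)) := by
      field_simp; ring
    rw [e2]
    calc _ ≤ (n : ℝ) ^ s * (n * (n / (64 * Q)) + n ^ 2 * Real.exp (-D)) * (16 * Q / n ^ 2) := by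
          gcongr
      _ = (n : ℝ) ^ s * (1 / 4 + 16 * Q * Real.exp (-D)) := e3
      _ ≤ (n : ℝ) ^ s * (1 / 4 + 1 / 4) := by gcongr
      _ = _ := by ring
  have hA2 : (n : ℝ) ^ k / (2 * (s : ℝ) ^ k) ≤ Good.card := by
    have h1 : (n : ℝ) ^ s / 2 ≤ CA.card := by linarith
    have h2 : (n : ℝ) ^ s / 2 * (n : ℝ) ^ k ≤ (s : ℝ) ^ k * (Good.card * (n : ℝ) ^ s) :=
      (mul_le_mul_of_nonneg_right h1 (by positivity)).trans hA
    rw [div_le_iff₀ (by positivity)]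
    have h3 : (0 : ℝ) < (n : ℝ) ^ s := by positivity
    refine le_of_mul_le_mul_left ?_ h3
    linarith
  have hfin : (n : ℝ) ^ (2 * k) / (2 * 4 ^ k * (D : ℝ) ^ (2 * k + 2 * k ^ 2)) ≤
      Good.card * T ^ k := by
    calc _ = (n : ℝ) ^ k / (2 * (s : ℝ) ^ k) * T ^ k := by
          rw [hT, hsr, div_pow, mul_pow, div_mul_div_comm]
          congr 1
          · rw [← pow_add]; congr 1; ring
          · rw [← pow_mul, ← pow_mul, pow_add]; ring
      _ ≤ _ := by gcongr
  linarith

lemma ramsey_bad (bad red blue : ℕ → ℕ → Prop)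
    (hcov : ∀ i j, ¬ bad i j → ¬ bad j i → red i j ∨ blue i j)
    (hred : ∀ i j, red i j → red j i) (hblue : ∀ i j, blue i j → blue j i)
    (D : ℝ) (hD0 : 0 ≤ D) (Z : Finset ℕ)
    (hD : ∀ i ∈ Z, ((Z.filter fun j => bad i j).card : ℝ) ≤ D) :
    ∀ N a b : ℕ, a + b = N → ∀ X ⊆ Z, (2 : ℝ) ^ (a + b) * (2 * D + 1) ≤ X.card + (2 * D + 1) →
      (∃ Y ⊆ X, Y.card = a ∧ ∀ i ∈ Y, ∀ j ∈ Y, i ≠ j → red i j) ∨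
      (∃ Y ⊆ X, Y.card = b ∧ ∀ i ∈ Y, ∀ j ∈ Y, i ≠ j → blue i j) := by
  intro N
  induction N with
  | zero =>
    intro a b hab X _ _
    left
    exact ⟨∅, by simp, by simp; omega, by simp⟩
  | succ N ih =>
    intro a b hab X hXZ hX
    rcases a with _ | a
    · left
      exact ⟨∅, by simp, by simp, by simp⟩
    rcases b with _ | b
    · right
      exact ⟨∅, by simp, by simp, by simp⟩
    have hXpos : (0 : ℝ) < X.card := by
      have h1 : (4 : ℝ) ≤ 2 ^ (a + 1 + (b + 1)) := by
        calc (4 : ℝ) = 2 ^ 2 := by norm_num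
          _ ≤ _ := pow_le_pow_right₀ (by norm_num) (by omega)
      nlinarith
    have hne : X.Nonempty := by
      rw [← card_pos]; exact_mod_cast hXpos
    obtain ⟨v, hv, hvdeg⟩ : ∃ v ∈ X, ((X.filter fun j => bad v j).card : ℝ) +
        ((X.filter fun j => bad j v).card : ℝ) ≤ 2 * D := by
      refine exists_le_of_sum_le hne ?_
      rw [sum_add_distrib]
      have h1 : ∑ i ∈ X, ((X.filter fun j => bad i j).card : ℝ) ≤ X.card * D := by
        rw [← nsmul_eq_mul]
        refine sum_le_card_nsmul _ _ _ fun i hi => le_trans ?_ (hD i (hXZ hi))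
        exact_mod_cast card_le_card (filter_subset_filter _ hXZ)
      have h2 : ∑ i ∈ X, ((X.filter fun j => bad j i).card : ℝ) =
          ∑ i ∈ X, ((X.filter fun j => bad i j).card : ℝ) := by
        simp_rw [card_filter, Nat.cast_sum]
        rw [sum_comm]
      rw [h2, sum_const, nsmul_eq_mul]
      linarith
    let R := X.filter fun j => j ≠ v ∧ red v j
    let Bl := X.filter fun j => j ≠ v ∧ blue v j
    have hcovX : X ⊆ ((R ∪ Bl) ∪ ((X.filter fun j => bad v j) ∪ (X.filter fun j => bad j v))) ∪ {v} := by
      intro j hj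
      simp only [mem_union, mem_filter, R, Bl, mem_singleton, hj, true_and]
      by_cases h1 : j = v
      · simp [h1]
      · by_cases h2 : bad v j
        · simp [h2]
        · by_cases h3 : bad j v
          · simp [h3]
          · have := hcov v j h2 h3
            tauto
    have hcard : (X.card : ℝ) ≤ R.card + Bl.card + (2 * D + 1) := by
      have h1 := card_le_card hcovX
      have h2 := card_union_le ((R ∪ Bl) ∪ ((X.filter fun j => bad v j) ∪ (X.filter fun j => bad j v))) {v}
      have h3 := card_union_le (R ∪ Bl) ((X.filter fun j => bad v j) ∪ (X.filter fun j => bad j v))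
      have h4 := card_union_le (X.filter fun j => bad v j) (X.filter fun j => bad j v)
      have h5 := card_union_le R Bl
      rw [card_singleton] at h2
      have h6 : X.card ≤ R.card + Bl.card + ((X.filter fun j => bad v j).card +
        (X.filter fun j => bad j v).card) + 1 := by omega
      have h7 : (X.card : ℝ) ≤ R.card + Bl.card + (((X.filter fun j => bad v j).card : ℝ) +
        (X.filter fun j => bad j v).card) + 1 := by exact_mod_cast h6
      linarith
    have hext : ∀ (rel : ℕ → ℕ → Prop) (_ : ∀ i j, rel i j → rel j i) (c : ℕ),
        (∃ Y ⊆ X.filter (fun j => j ≠ v ∧ rel v j), Y.card = c ∧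
          ∀ i ∈ Y, ∀ j ∈ Y, i ≠ j → rel i j) →
        ∃ Y ⊆ X, Y.card = c + 1 ∧ ∀ i ∈ Y, ∀ j ∈ Y, i ≠ j → rel i j := by
      rintro rel hrel c ⟨Y, hY, hc, hY2⟩
      have hvY : v ∉ Y := fun h => (mem_filter.mp (hY h)).2.1 rfl
      refine ⟨insert v Y, ?_, by rw [card_insert_of_notMem hvY, hc], ?_⟩
      · intro i hi
        rcases mem_insert.mp hi with rfl | hi
        · exact hv
        · exact (mem_filter.mp (hY hi)).1
      · intro i hi j hj hij
        rcases mem_insert.mp hi with h1 | h1 <;> rcases mem_insert.mp hj with h2 | h2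
        · exact absurd (h1.trans h2.symm) hij
        · subst h1
          exact (mem_filter.mp (hY h2)).2.2
        · subst h2
          exact hrel _ _ (mem_filter.mp (hY h1)).2.2
        · exact hY2 i h1 j h2 hij
    have hpow : (2 : ℝ) ^ (a + 1 + (b + 1)) = 2 * 2 ^ (a + (b + 1)) := by
      rw [← pow_succ']; congr 1; ring
    have hpow2 : (2 : ℝ) ^ (a + 1 + b) = 2 ^ (a + (b + 1)) := by
      congr 1; ring
    rw [hpow] at hX
    by_cases hR : (2 : ℝ) ^ (a + (b + 1)) * (2 * D + 1) ≤ R.card + (2 * D + 1)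
    · rcases ih a (b + 1) (by omega) R ((filter_subset _ _).trans hXZ) hR with h | h
      · left
        exact hext red hred a h
      · right
        obtain ⟨Y, hY, h⟩ := h
        exact ⟨Y, hY.trans (filter_subset _ _), h⟩
    · have hB : (2 : ℝ) ^ (a + 1 + b) * (2 * D + 1) ≤ Bl.card + (2 * D + 1) := by
        rw [hpow2]
        push Not at hR
        linarith
      rcases ih (a + 1) b (by omega) Bl ((filter_subset _ _).trans hXZ) hB with h | h
      · left
        obtain ⟨Y, hY, h⟩ := h
        exact ⟨Y, hY.trans (filter_subset _ _), h⟩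
      · right
        exact hext blue hblue b h

/-- Number of triples `x, x' ∈ V`, `y ∈ W` on which adjacency disagrees. -/
def disU {n : ℕ} (G : SimpleGraph (Fin n)) (V W : Finset (Fin n)) : ℝ :=
  ∑ x ∈ V, ∑ x' ∈ V, ((W.filter fun y => ¬ (G.Adj x y ↔ G.Adj x' y)).card : ℝ)

lemma hom_of_disU {n L : ℕ} (hL : 0 < L) (G : SimpleGraph (Fin n)) (V W : Finset (Fin n))
    (hV : V.card = L) (hW : W.card = L) (α : ℝ) (hα : 0 < α) (hα2 : α < 1 / 2)
    (h1 : disU G V W ≤ α / 2 * (L : ℝ) ^ 3) (h2 : disU G W V ≤ α / 2 * (L : ℝ) ^ 3) :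
    1 - α ≤ dens G V W ∨ dens G V W ≤ α := by
  have hL0 : (0 : ℝ) < L := by exact_mod_cast hL
  let a : Fin n → Fin n → ℝ := fun x y => if G.Adj x y then 1 else 0
  have ha : ∀ x y, a x y = 0 ∨ a x y = 1 := by
    intro x y; simp only [a]; split_ifs <;> simp
  have hsym : ∀ x y, a x y = a y x := by
    intro x y; simp only [a, G.adj_comm]
  have hsq : ∀ x y x' y', (if ¬ (G.Adj x y ↔ G.Adj x' y') then (1 : ℝ) else 0) =
      (a x y - a x' y') ^ 2 := by
    intro x y x' y'
    simp only [a]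
    by_cases h : G.Adj x y <;> by_cases h' : G.Adj x' y' <;> simp [h, h']
  have hU : ∀ V W, disU G V W = ∑ x ∈ V, ∑ x' ∈ V, ∑ y ∈ W, (a x y - a x' y) ^ 2 := by
    intro V W
    unfold disU
    refine sum_congr rfl fun x _ => sum_congr rfl fun x' _ => ?_
    rw [card_filter, Nat.cast_sum]
    refine sum_congr rfl fun y _ => ?_
    rw [← hsq]; push_cast; rfl
  set e : ℝ := ∑ x ∈ V, ∑ y ∈ W, a x y with he
  have hdens : dens G V W = e / (L : ℝ) ^ 2 := by
    unfold _root_.dens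
    rw [SimpleGraph.edgeDensity_def, hV, hW]
    push_cast
    rw [sq]
    congr 1
    rw [he, ← sum_product', SimpleGraph.interedges_def, card_filter]
    push_cast
    rfl
  have key : ∑ x ∈ V, ∑ y ∈ W, ∑ x' ∈ V, ∑ y' ∈ W, (a x y - a x' y') ^ 2 ≤
      L * disU G V W + L * disU G W V := by
    calc _ ≤ ∑ x ∈ V, ∑ y ∈ W, ∑ x' ∈ V, ∑ y' ∈ W,
          ((a x y - a x' y) ^ 2 + (a x' y - a x' y') ^ 2) := by
          refine sum_le_sum fun x _ => sum_le_sum fun y _ => sum_le_sum fun x' _ =>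
            sum_le_sum fun y' _ => ?_
          rcases ha x y with h | h <;> rcases ha x' y with h' | h' <;>
            rcases ha x' y' with h'' | h'' <;> rw [h, h', h''] <;> norm_num
      _ = _ := by
          simp only [sum_add_distrib, sum_const, hV, hW, nsmul_eq_mul]
          rw [hU, hU]
          congr 1
          · rw [mul_sum]
            refine sum_congr rfl fun x _ => ?_
            rw [sum_comm, mul_sum]
            refine sum_congr rfl fun x' _ => ?_
            rw [mul_sum]
          · congr 1
            refine sum_congr rfl fun y _ => ?_
            rw [sum_comm]
            refine sum_congr rfl fun y' _ => sum_congr rfl fun x' _ => ?_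
            rw [hsym x' y, hsym x' y']
  have key2 : ∑ x ∈ V, ∑ y ∈ W, ∑ x' ∈ V, ∑ y' ∈ W, (a x y - a x' y') ^ 2 =
      2 * (L : ℝ) ^ 2 * e - 2 * e ^ 2 := by
    have hp : ∀ x y x' y', (a x y - a x' y') ^ 2 = a x y + a x' y' - 2 * a x y * a x' y' := by
      intro x y x' y'
      rcases ha x y with h | h <;> rcases ha x' y' with h' | h' <;> rw [h, h'] <;> norm_num
    simp only [hp, sum_add_distrib, sum_sub_distrib, sum_const, hV, hW, nsmul_eq_mul, ← mul_sum,
      ← sum_mul, ← he]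
    ring
  rw [key2] at key
  have hd : e = dens G V W * (L : ℝ) ^ 2 := by rw [hdens]; field_simp
  set d := dens G V W
  have hfin : d * (1 - d) ≤ α / 2 := by
    rw [hd] at key
    have hL4 : (0 : ℝ) < (L : ℝ) ^ 4 := by positivity
    refine le_of_mul_le_mul_right ?_ hL4
    have := mul_le_mul_of_nonneg_left h1 hL0.le
    have := mul_le_mul_of_nonneg_left h2 hL0.le
    nlinarith
  by_contra hcon
  push Not at hcon
  nlinarith [mul_pos (sub_pos.mpr hcon.2) (sub_pos.mpr hcon.1)]

lemma pieces {n D L : ℕ} (G : SimpleGraph (Fin n))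
    (hp : ∀ X : Finset (Fin n), (n : ℝ) / 2 ≤ X.card → ∃ x ∈ X, (L : ℝ) ≤ ((X.filter fun y =>
      ((univ.filter fun v => ¬ (G.Adj x v ↔ G.Adj y v)).card : ℝ) ≤ n / D).card : ℝ)) :
    ∀ p : ℕ, 2 * p * L ≤ n → ∃ P : ℕ → Finset (Fin n),
      (∀ i < p, (P i).card = L ∧ ∀ x ∈ P i, ∀ y ∈ P i,
        ((univ.filter fun v => ¬ (G.Adj x v ↔ G.Adj y v)).card : ℝ) ≤ 2 * (n / D)) ∧
      ∀ i < p, ∀ j < p, i ≠ j → Disjoint (P i) (P j) := by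
  intro p
  induction p with
  | zero => intro _; exact ⟨fun _ => ∅, by simp, by simp⟩
  | succ p ih =>
    intro hpL
    obtain ⟨P, hP1, hP2⟩ := ih (by nlinarith)
    let U := (range p).biUnion P
    have hU : U.card ≤ p * L := by
      have := card_biUnion_le_card_mul (range p) P L (fun i hi => (hP1 i (mem_range.mp hi)).1.le)
      simpa using this
    obtain ⟨x, hx, hxL⟩ := hp Uᶜ (by
      have h1 : 2 * Uᶜ.card ≥ n := by
        rw [card_compl, Fintype.card_fin]
        have : 2 * (p * L) ≤ n := by nlinarith
        omega
      have h2 : (n : ℝ) ≤ 2 * Uᶜ.card := by exact_mod_cast h1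
      linarith)
    obtain ⟨Q, hQ, hQc⟩ := exists_subset_card_eq (Nat.cast_le.mp hxL)
    have hQU : ∀ i < p, Disjoint (P i) Q := by
      intro i hi
      rw [disjoint_left]
      intro y hy hyQ
      have h1 := (mem_filter.mp (hQ hyQ)).1
      rw [mem_compl] at h1
      exact h1 (mem_biUnion.mpr ⟨i, mem_range.mpr hi, hy⟩)
    refine ⟨Function.update P p Q, ?_, ?_⟩
    · intro i hi
      by_cases hip : i = p
      · subst hip
        rw [Function.update_self]
        refine ⟨hQc, fun y hy z hz => ?_⟩
        have h1 := (mem_filter.mp (hQ hy)).2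
        have h2 := (mem_filter.mp (hQ hz)).2
        have h3 : (univ.filter fun v => ¬ (G.Adj y v ↔ G.Adj z v)) ⊆
            (univ.filter fun v => ¬ (G.Adj x v ↔ G.Adj y v)) ∪
            (univ.filter fun v => ¬ (G.Adj x v ↔ G.Adj z v)) := by
          intro v hv
          simp only [mem_filter, mem_univ, true_and, mem_union] at hv ⊢
          tauto
        have h4 := (card_le_card h3).trans (card_union_le _ _)
        have h5 : ((univ.filter fun v => ¬ (G.Adj y v ↔ G.Adj z v)).card : ℝ) ≤
            ((univ.filter fun v => ¬ (G.Adj x v ↔ G.Adj y v)).card : ℝ) +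
            ((univ.filter fun v => ¬ (G.Adj x v ↔ G.Adj z v)).card : ℝ) := by exact_mod_cast h4
        linarith
      · rw [Function.update_of_ne hip]
        exact hP1 i (by omega)
    · intro i hi j hj hij
      by_cases hip : i = p
      · subst hip
        rw [Function.update_self, Function.update_of_ne (Ne.symm hij)]
        exact (hQU j (by omega)).symm
      · rw [Function.update_of_ne hip]
        by_cases hjp : j = p
        · subst hjp
          rw [Function.update_self]
          exact hQU i (by omega)
        · rw [Function.update_of_ne hjp]
          exact hP2 i (by omega) j (by omega) hij

lemma outdeg {n D L p : ℕ} (hL : 0 < L) (G : SimpleGraph (Fin n)) (P : ℕ → Finset (Fin n))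
    (hP1 : ∀ i < p, (P i).card = L ∧ ∀ x ∈ P i, ∀ y ∈ P i,
        ((univ.filter fun v => ¬ (G.Adj x v ↔ G.Adj y v)).card : ℝ) ≤ 2 * (n / D))
    (hP2 : ∀ i < p, ∀ j < p, i ≠ j → Disjoint (P i) (P j)) (α : ℝ) (hα : 0 < α)
    (i : ℕ) (hi : i < p) :
    (((range p).filter fun j => ¬ disU G (P i) (P j) ≤ α / 2 * (L : ℝ) ^ 3).card : ℝ) ≤
      4 * n / (D * α * L) := by
  have hL0 : (0 : ℝ) < L := by exact_mod_cast hL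
  set J := (range p).filter fun j => ¬ disU G (P i) (P j) ≤ α / 2 * (L : ℝ) ^ 3
  have h1 : (J.card : ℝ) * (α / 2 * (L : ℝ) ^ 3) ≤ ∑ j ∈ J, disU G (P i) (P j) := by
    rw [← nsmul_eq_mul]
    refine card_nsmul_le_sum _ _ _ fun j hj => ?_
    exact (not_le.mp (mem_filter.mp hj).2).le
  have h2 : ∑ j ∈ J, disU G (P i) (P j) ≤ (L : ℝ) ^ 2 * (2 * (n / D)) := by
    unfold disU
    rw [sum_comm]
    have h3 : ∀ x ∈ P i, ∑ j ∈ J, ∑ x' ∈ P i,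
        (((P j).filter fun y => ¬ (G.Adj x y ↔ G.Adj x' y)).card : ℝ) ≤
        L * (2 * (n / D)) := by
      intro x hx
      rw [sum_comm]
      have h4 : ∀ x' ∈ P i, ∑ j ∈ J,
        (((P j).filter fun y => ¬ (G.Adj x y ↔ G.Adj x' y)).card : ℝ) ≤ 2 * (n / D) := by
        intro x' hx'
        refine le_trans ?_ ((hP1 i hi).2 x hx x' hx')
        rw [← Nat.cast_sum, ← card_biUnion]
        · refine Nat.cast_le.mpr (card_le_card ?_)
          intro y hy
          simp only [mem_biUnion, mem_filter] at hy
          obtain ⟨_, _, _, h⟩ := hy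
          simpa using h
        · intro j hj j' hj' hjj
          exact disjoint_filter_filter (hP2 j (mem_range.mp (mem_filter.mp hj).1) j'
            (mem_range.mp (mem_filter.mp hj').1) hjj)
      have := sum_le_card_nsmul _ _ _ h4
      rwa [nsmul_eq_mul, (hP1 i hi).1] at this
    have := sum_le_card_nsmul _ _ _ h3
    rw [nsmul_eq_mul, (hP1 i hi).1] at this
    linarith
  have h5 := h1.trans h2
  have h6 : (J.card : ℝ) = (J.card : ℝ) * (α / 2 * (L : ℝ) ^ 3) * (2 / (α * (L : ℝ) ^ 3)) := by
    field_simp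
  rw [h6]
  calc _ ≤ (L : ℝ) ^ 2 * (2 * (n / D)) * (2 / (α * (L : ℝ) ^ 3)) := by gcongr
    _ = 4 * n / (D * α * L) := by
      by_cases hD : (D : ℝ) = 0
      · simp [hD]
      · field_simp; ring

lemma core {k n D m : ℕ} (hk : 1 ≤ k) (hD : 2 ≤ D)
    (hexp : 16 * (D : ℝ) ^ (4 * k) * Real.exp (-D) ≤ 1 / 4) (α : ℝ) (hα : 0 < α) (hα2 : α < 1 / 2)
    (hDm : 128 * (4 : ℝ) ^ m ≤ α * D) (hn : 64 * D ^ (4 * k) ≤ n)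
    (B : Fin k → Fin k → Prop) (G : SimpleGraph (Fin n))
    (hhom : ((univ.filter fun φ : (Fin k ⊕ Fin k) → Fin n =>
      ∀ s t, B s t ↔ G.Adj (φ (Sum.inl s)) (φ (Sum.inr t))).card : ℝ) <
      (n : ℝ) ^ (2 * k) / (2 * 4 ^ k * (D : ℝ) ^ (2 * k + 2 * k ^ 2))) :
    ∃ W : Fin m → Finset (Fin n),
            (∀ i j : Fin m, i ≠ j → Disjoint (W i) (W j)) ∧
            ((∀ i j : Fin m, i < j → 1 - α ≤ dens G (W i) (W j)) ∨
              (∀ i j : Fin m, i < j → dens G (W i) (W j) ≤ α)) ∧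
            (∀ i : Fin m, (n : ℝ) / (128 * (D : ℝ) ^ (4 * k)) ≤ ((W i).card : ℝ)) := by
  have hD0 : (0 : ℝ) < D := by exact_mod_cast (by omega : 0 < D)
  have hQ0 : 0 < D ^ (4 * k) := by positivity
  have hQD : D ≤ D ^ (4 * k) := by
    calc D = D ^ 1 := (pow_one _).symm
      _ ≤ _ := Nat.pow_le_pow_right (by omega) (by omega)
  have hQr : ((D ^ (4 * k) : ℕ) : ℝ) = (D : ℝ) ^ (4 * k) := by push_cast; rfl
  obtain ⟨Q, hQ⟩ : ∃ Q, Q = D ^ (4 * k) := ⟨_, rfl⟩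
  rw [← hQ] at hQ0 hQD hQr hn
  have hQ0r : (0 : ℝ) < Q := by exact_mod_cast hQ0
  have hQDr : (D : ℝ) ≤ Q := by exact_mod_cast hQD
  obtain ⟨L, hLdef⟩ : ∃ L, L = n / (64 * Q) := ⟨_, rfl⟩
  have hL : 0 < L := hLdef ▸ Nat.div_pos hn (by omega)
  have hL0 : (0 : ℝ) < L := by exact_mod_cast hL
  have hLn : 64 * Q * L ≤ n := hLdef ▸ Nat.mul_div_le _ _
  have hnL : n ≤ 128 * Q * L := by
    have : n < 64 * Q * (L + 1) := hLdef ▸ Nat.lt_mul_div_succ n (by omega)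
    nlinarith
  have hLnr : 64 * (Q : ℝ) * L ≤ n := by exact_mod_cast hLn
  have hnLr : (n : ℝ) ≤ 128 * (Q : ℝ) * L := by exact_mod_cast hnL
  rw [← hQr] at hexp ⊢
  obtain ⟨P, hP1, hP2⟩ := pieces (D := D) (L := L) G (by
    intro X hX
    refine piece hk hD (by omega) (by rw [← hQr]; exact hexp) B G X hX L ?_ hhom
    rw [← hQr, le_div_iff₀ (by positivity)]
    linarith) (32 * Q) (by linarith)
  have hout := outdeg hL G P hP1 hP2 α hα
  set Dg : ℝ := 4 * n / (D * α * L) with hDg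
  have hDg0 : 0 ≤ Dg := by positivity
  have hαD : 0 < α * D := by positivity
  have hDgb : (4 : ℝ) ^ m * Dg ≤ 4 * Q := by
    have : Dg ≤ 512 * Q / (α * D) := by
      rw [hDg, div_le_div_iff₀ (by positivity) hαD]
      have := mul_le_mul_of_nonneg_right hnLr hαD.le
      nlinarith
    calc (4 : ℝ) ^ m * Dg ≤ (α * D / 128) * (512 * Q / (α * D)) := by
          gcongr; linarith
      _ = 4 * Q := by field_simp; norm_num
  have h4m : (4 : ℝ) ^ m ≤ Q := by
    have : α * D ≤ D := by nlinarith
    have : (0 : ℝ) ≤ 4 ^ m := by positivity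
    linarith
  have hmain := ramsey_bad (fun i j => ¬ disU G (P i) (P j) ≤ α / 2 * (L : ℝ) ^ 3)
    (fun i j => i < 32 * Q → j < 32 * Q → 1 - α ≤ dens G (P i) (P j))
    (fun i j => i < 32 * Q → j < 32 * Q → dens G (P i) (P j) ≤ α) (by
      intro i j h1 h2
      push Not at h1 h2
      by_cases hi : i < 32 * Q
      · by_cases hj : j < 32 * Q
        · rcases hom_of_disU hL G (P i) (P j) (hP1 i hi).1 (hP1 j hj).1 α hα hα2 h1 h2 with h | h
          · left; exact fun _ _ => h
          · right; exact fun _ _ => h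
        · left; exact fun _ h => absurd h hj
      · left; exact fun h => absurd h hi) (by
      intro i j h hj hi
      have := h hi hj
      unfold _root_.dens at this ⊢
      rwa [SimpleGraph.edgeDensity_comm]) (by
      intro i j h hj hi
      have := h hi hj
      unfold _root_.dens at this ⊢
      rwa [SimpleGraph.edgeDensity_comm]) Dg hDg0 (range (32 * Q))
      (fun i hi => by convert hout i (mem_range.mp hi)) (m + m) m m rfl (range (32 * Q)) (Subset.refl _) (by
      rw [card_range]
      have : (2 : ℝ) ^ (m + m) = 4 ^ m := by
        rw [← two_mul, pow_mul]; norm_num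
      rw [this]
      push_cast
      nlinarith)
  have hfin : ∀ Y ⊆ range (32 * Q), ∀ hc : Y.card = m, 
      (∀ i j : Fin m, i ≠ j → Disjoint (P (Y.orderEmbOfFin hc i)) (P (Y.orderEmbOfFin hc j))) ∧
      (∀ i : Fin m, (n : ℝ) / (128 * (Q : ℝ)) ≤ ((P (Y.orderEmbOfFin hc i)).card : ℝ)) := by
    intro Y hY hc
    have hlt : ∀ i, Y.orderEmbOfFin hc i < 32 * Q := fun i =>
      mem_range.mp (hY (orderEmbOfFin_mem Y hc i))
    refine ⟨fun i j hij => hP2 _ (hlt i) _ (hlt j) fun h => hij ((Y.orderEmbOfFin hc).injective h),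
      fun i => ?_⟩
    rw [(hP1 _ (hlt i)).1, div_le_iff₀ (by positivity)]
    linarith
  rcases hmain with ⟨Y, hY, hc, hY2⟩ | ⟨Y, hY, hc, hY2⟩
  · refine ⟨fun i => P (Y.orderEmbOfFin hc i), (hfin Y hY hc).1, Or.inl ?_, (hfin Y hY hc).2⟩
    intro i j hij
    exact hY2 _ (orderEmbOfFin_mem Y hc i) _ (orderEmbOfFin_mem Y hc j)
      (fun h => hij.ne ((Y.orderEmbOfFin hc).injective h))
      (mem_range.mp (hY (orderEmbOfFin_mem Y hc i))) (mem_range.mp (hY (orderEmbOfFin_mem Y hc j)))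
  · refine ⟨fun i => P (Y.orderEmbOfFin hc i), (hfin Y hY hc).1, Or.inr ?_, (hfin Y hY hc).2⟩
    intro i j hij
    exact hY2 _ (orderEmbOfFin_mem Y hc i) _ (orderEmbOfFin_mem Y hc j)
      (fun h => hij.ne ((Y.orderEmbOfFin hc).injective h))
      (mem_range.mp (hY (orderEmbOfFin_mem Y hc i))) (mem_range.mp (hY (orderEmbOfFin_mem Y hc j)))

lemma exists_exp (k : ℕ) : ∃ e : ℕ, ∀ D : ℕ, 2 ^ e ≤ D →
    16 * (D : ℝ) ^ (4 * k) * Real.exp (-D) ≤ 1 / 4 := by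
  have h := (Real.tendsto_pow_mul_exp_neg_atTop_nhds_zero (4 * k)).comp
    (tendsto_natCast_atTop_atTop (R := ℝ))
  have h2 := h.eventually (gt_mem_nhds (show (0 : ℝ) < 1 / 64 by norm_num))
  obtain ⟨N, hN⟩ := Filter.eventually_atTop.mp h2
  refine ⟨N, fun D hD => ?_⟩
  have := hN D (Nat.lt_two_pow_self.le.trans hD)
  simp only [Function.comp] at this
  linarith

/-- Lemma 2.6 of the paper. -/
theorem almost_homogeneous_sets (k : ℕ) (hk : 1 ≤ k) :
    ∃ C : ℝ, 0 < C ∧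
      ∀ B : Fin k → Fin k → Prop, ∀ m : ℕ, 1 ≤ m → ∀ α : ℝ, 0 < α → α < 1 / 2 →
        ∃ n₀ : ℕ, ∀ n : ℕ, n₀ ≤ n → ∀ G : SimpleGraph (Fin n),
          α ^ C * (2 : ℝ) ^ (-(C * (m : ℝ))) * (n : ℝ) ^ (2 * k) ≤ (bipCopyCount B G : ℝ) ∨
          ∃ W : Fin m → Finset (Fin n),
            (∀ i j : Fin m, i ≠ j → Disjoint (W i) (W j)) ∧
            ((∀ i j : Fin m, i < j → 1 - α ≤ dens G (W i) (W j)) ∨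
              (∀ i j : Fin m, i < j → dens G (W i) (W j) ≤ α)) ∧
            (∀ i : Fin m, α ^ C * (2 : ℝ) ^ (-(C * (m : ℝ))) * (n : ℝ) ≤ ((W i).card : ℝ)) := by
  obtain ⟨e, he⟩ := exists_exp k
  obtain ⟨E, hE⟩ : ∃ E, E = 2 * k ^ 2 + 4 * k + 1 := ⟨_, rfl⟩
  have hEpos : 1 ≤ E := by omega
  refine ⟨(((e + 9) * E : ℕ) : ℝ), by positivity, ?_⟩
  intro B m hm α hα hα2
  obtain ⟨D, hDdef⟩ : ∃ D, D = 2 ^ (e + 7 + 2 * m) * ⌈1 / α⌉₊ := ⟨_, rfl⟩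
  have hceil : 1 ≤ ⌈1 / α⌉₊ := Nat.one_le_iff_ne_zero.mpr (Nat.ceil_pos.mpr (by positivity)).ne'
  have hDlow : 2 ^ (e + 7 + 2 * m) ≤ D := by rw [hDdef]; exact Nat.le_mul_of_pos_right _ hceil
  have hDe : 2 ^ e ≤ D := (Nat.pow_le_pow_right (by norm_num) (by omega)).trans hDlow
  have hD128 : 128 ≤ D := by
    calc 128 = 2 ^ 7 := by norm_num
      _ ≤ 2 ^ (e + 7 + 2 * m) := Nat.pow_le_pow_right (by norm_num) (by omega)
      _ ≤ D := hDlow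
  have hD128r : (128 : ℝ) ≤ D := by exact_mod_cast hD128
  have hD1 : (1 : ℝ) ≤ D := by linarith
  have hD0 : (0 : ℝ) < D := by linarith
  have hDr : (D : ℝ) = 2 ^ (e + 7 + 2 * m) * (⌈1 / α⌉₊ : ℝ) := by rw [hDdef]; push_cast; rfl
  have hc1 : 1 ≤ α * (⌈1 / α⌉₊ : ℝ) := by
    have := Nat.le_ceil (1 / α)
    calc 1 = α * (1 / α) := by field_simp
      _ ≤ _ := by gcongr
  have hDm : 128 * (4 : ℝ) ^ m ≤ α * D := by
    calc 128 * (4 : ℝ) ^ m = 2 ^ (7 + 2 * m) * 1 := by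
          rw [pow_add, pow_mul]; norm_num
      _ ≤ 2 ^ (e + 7 + 2 * m) * (α * (⌈1 / α⌉₊ : ℝ)) := by
          gcongr
          · norm_num
          · omega
      _ = _ := by rw [hDr]; ring
  have hDup : (D : ℝ) * α ^ 2 ≤ 2 ^ ((e + 9) * m) := by
    have h1 : (⌈1 / α⌉₊ : ℝ) * α ^ 2 ≤ 1 := by
      have h2 := (Nat.ceil_lt_add_one (show 0 ≤ 1 / α by positivity)).le
      calc (⌈1 / α⌉₊ : ℝ) * α ^ 2 ≤ (1 / α + 1) * α ^ 2 := by gcongr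
        _ = α + α ^ 2 := by field_simp
        _ ≤ 1 := by nlinarith
    calc (D : ℝ) * α ^ 2 = 2 ^ (e + 7 + 2 * m) * ((⌈1 / α⌉₊ : ℝ) * α ^ 2) := by rw [hDr]; ring
      _ ≤ 2 ^ (e + 7 + 2 * m) * 1 := by gcongr
      _ ≤ 2 ^ ((e + 9) * m) := by
        rw [mul_one]
        refine pow_le_pow_right₀ (by norm_num) ?_
        nlinarith
  have hcE : α ^ (((e + 9) * E : ℕ) : ℝ) * (2 : ℝ) ^ (-((((e + 9) * E : ℕ) : ℝ) * (m : ℝ))) ≤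
      1 / (D : ℝ) ^ E := by
    rw [Real.rpow_natCast, ← Nat.cast_mul, Real.rpow_neg (by norm_num), Real.rpow_natCast,
      ← div_eq_mul_inv, div_le_div_iff₀ (by positivity) (by positivity)]
    calc α ^ ((e + 9) * E) * (D : ℝ) ^ E ≤ α ^ (2 * E) * (D : ℝ) ^ E := by
          refine mul_le_mul_of_nonneg_right ?_ (by positivity)
          exact pow_le_pow_of_le_one hα.le (by linarith) (Nat.mul_le_mul_right _ (by omega))
      _ = (D * α ^ 2) ^ E := by rw [mul_pow, ← pow_mul]; ring
      _ ≤ (2 ^ ((e + 9) * m)) ^ E := by gcongr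
      _ = 1 * 2 ^ ((e + 9) * E * m) := by rw [← pow_mul, one_mul]; congr 1; ring
  obtain ⟨c, hcdef⟩ : ∃ c : ℝ, c = α ^ (((e + 9) * E : ℕ) : ℝ) *
    (2 : ℝ) ^ (-((((e + 9) * E : ℕ) : ℝ) * (m : ℝ))) := ⟨_, rfl⟩
  rw [← hcdef] at hcE ⊢
  refine ⟨64 * D ^ (4 * k) + (2 * k) ^ 2 * D ^ E, fun n hn G => ?_⟩
  by_cases hcop : c * (n : ℝ) ^ (2 * k) ≤ (bipCopyCount B G : ℝ)
  · exact Or.inl hcop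
  right
  push Not at hcop
  have hn1 : 64 * D ^ (4 * k) ≤ n := by omega
  have hn2 : ((2 * k) ^ 2 * D ^ E : ℝ) ≤ n := by
    have : (2 * k) ^ 2 * D ^ E ≤ n := by omega
    exact_mod_cast this
  have hDE : (0 : ℝ) < (D : ℝ) ^ E := by positivity
  have hhom : ((univ.filter fun φ : (Fin k ⊕ Fin k) → Fin n =>
      ∀ s t, B s t ↔ G.Adj (φ (Sum.inl s)) (φ (Sum.inr t))).card : ℝ) <
      (n : ℝ) ^ (2 * k) / (2 * 4 ^ k * (D : ℝ) ^ (2 * k + 2 * k ^ 2)) := by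
    have h1 : ((univ.filter fun φ : (Fin k ⊕ Fin k) → Fin n =>
      ∀ s t, B s t ↔ G.Adj (φ (Sum.inl s)) (φ (Sum.inr t))).card : ℝ) ≤
      bipCopyCount B G + ((2 * k) ^ 2 * n ^ (2 * k - 1) : ℝ) := by
      exact_mod_cast homs_le_s10 B G
    have h2 : ((2 * k) ^ 2 * n ^ (2 * k - 1) : ℝ) ≤ 1 / (D : ℝ) ^ E * (n : ℝ) ^ (2 * k) := by
      have e1 : (n : ℝ) ^ (2 * k) = n * (n : ℝ) ^ (2 * k - 1) := by
        rw [← pow_succ']; congr 1; omega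
      rw [e1, ← mul_assoc]
      refine mul_le_mul_of_nonneg_right ?_ (by positivity)
      rw [one_div, inv_mul_eq_div, le_div_iff₀ hDE]
      exact hn2
    have h3 : c * (n : ℝ) ^ (2 * k) ≤ 1 / (D : ℝ) ^ E * (n : ℝ) ^ (2 * k) := by gcongr
    have h4 : 2 / (D : ℝ) ^ E ≤ 1 / (2 * 4 ^ k * (D : ℝ) ^ (2 * k + 2 * k ^ 2)) := by
      rw [div_le_div_iff₀ hDE (by positivity)]
      have e2 : (D : ℝ) ^ E = (D : ℝ) ^ (2 * k + 1) * (D : ℝ) ^ (2 * k + 2 * k ^ 2) := by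
        rw [← pow_add, hE]; congr 1; ring
      have e3 : (4 : ℝ) ^ (k + 1) ≤ (D : ℝ) ^ (2 * k + 1) := by
        calc (4 : ℝ) ^ (k + 1) ≤ (D : ℝ) ^ (k + 1) := by gcongr; linarith
          _ ≤ _ := pow_le_pow_right₀ hD1 (by omega)
      rw [e2, one_mul]
      calc 2 * (2 * 4 ^ k * (D : ℝ) ^ (2 * k + 2 * k ^ 2))
          = 4 ^ (k + 1) * (D : ℝ) ^ (2 * k + 2 * k ^ 2) := by ring
        _ ≤ _ := by gcongr
    have h5 : 2 / (D : ℝ) ^ E * (n : ℝ) ^ (2 * k) ≤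
        1 / (2 * 4 ^ k * (D : ℝ) ^ (2 * k + 2 * k ^ 2)) * (n : ℝ) ^ (2 * k) := by gcongr
    have h6 : 2 / (D : ℝ) ^ E * (n : ℝ) ^ (2 * k) = 1 / (D : ℝ) ^ E * (n : ℝ) ^ (2 * k) +
      1 / (D : ℝ) ^ E * (n : ℝ) ^ (2 * k) := by ring
    rw [div_eq_mul_one_div, mul_comm]
    linarith
  obtain ⟨W, hW1, hW2, hW3⟩ := core hk (by omega) (he D hDe) α hα hα2 hDm hn1 B G hhom
  refine ⟨W, hW1, hW2, fun i => le_trans ?_ (hW3 i)⟩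
  rw [div_eq_mul_one_div, mul_comm]
  refine mul_le_mul_of_nonneg_left (hcE.trans ?_) (Nat.cast_nonneg _)
  refine one_div_le_one_div_of_le (by positivity) ?_
  calc 128 * (D : ℝ) ^ (4 * k) ≤ D * (D : ℝ) ^ (4 * k) := by gcongr
    _ = (D : ℝ) ^ (4 * k + 1) := by ring
    _ ≤ _ := pow_le_pow_right₀ hD1 (by rw [hE]; omega)

end
end

section
/- Let F be a graph with vertex set {1,…,r} and let λ ∈ (0,1). Let W₁,…,W_r be pairwise disjoint vertex sets in an n-vertex graph G with n ≥ 9r/λ, each of size at least λ·n, such that for every 1 ≤ i < j ≤ r: if (i,j) ∈ E(F) then d(W_i,W_j) ≥ 1 − 1/(2r²), and if (i,j) ∉ E(F) then d(W_i,W_j) ≤ 1/(2r²). Then at least a 2/3-fraction of the ⌈9r/λ⌉-element vertex subsets of G contain an induced copy of F. -/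
open scoped Classical
open Finset

noncomputable section

lemma choose_aux (a n : ℕ) (h : a ≤ n) (m : ℕ) : a.choose m * n ^ m ≤ n.choose m * a ^ m := by
  induction m with
  | zero => simp
  | succ k ih =>
    have h1 := Nat.choose_succ_right_eq a k
    have h2 := Nat.choose_succ_right_eq n k
    have h3 : (a - k) * n ≤ (n - k) * a := by
      rw [Nat.sub_mul, Nat.sub_mul, Nat.mul_comm a n]
      exact Nat.sub_le_sub_left (Nat.mul_le_mul_left k h) _
    have h4 : (a.choose (k+1) * n ^ (k+1)) * (k+1) ≤ (n.choose (k+1) * a ^ (k+1)) * (k+1) := by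
      calc (a.choose (k+1) * n ^ (k+1)) * (k+1)
          = (a.choose (k+1) * (k+1)) * n ^ (k+1) := by ring
        _ = (a.choose k * n ^ k) * ((a - k) * n) := by rw [h1]; ring
        _ ≤ (n.choose k * a ^ k) * ((n - k) * a) := Nat.mul_le_mul ih h3
        _ = (n.choose (k+1) * (k+1)) * a ^ (k+1) := by rw [h2]; ring
        _ = _ := by ring
    exact Nat.le_of_mul_le_mul_right h4 (Nat.succ_pos k)

lemma miss_aux {n m : ℕ} (lam : ℝ) (hl1 : lam < 1) (hn : 0 < n)
    (W : Finset (Fin n)) (hW : lam * (n : ℝ) ≤ (W.card : ℝ)) :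
    ((((Finset.univ : Finset (Fin n)).powersetCard m).filter fun Q => Disjoint Q W).card : ℝ)
      ≤ (1 - lam) ^ m * (((Finset.univ : Finset (Fin n)).powersetCard m).card : ℝ) := by
  have h1 : (((Finset.univ : Finset (Fin n)).powersetCard m).filter fun Q => Disjoint Q W)
      = (univ \ W).powersetCard m := by
    ext Q
    simp [mem_powersetCard, subset_sdiff, and_comm]
  rw [h1, card_powersetCard, card_powersetCard, card_sdiff_of_subset (subset_univ W), card_univ,
    Fintype.card_fin]
  have hWn : W.card ≤ n := by simpa using card_le_univ W
  have h2 := choose_aux (n - W.card) n (Nat.sub_le _ _) m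
  have h3 : (((n - W.card).choose m : ℕ) : ℝ) * (n : ℝ) ^ m
      ≤ (n.choose m : ℝ) * ((n - W.card : ℕ) : ℝ) ^ m := by exact_mod_cast h2
  have hn' : (0 : ℝ) < n := by exact_mod_cast hn
  have h4 : ((n - W.card : ℕ) : ℝ) ^ m ≤ ((1 - lam) * n) ^ m := by
    apply pow_le_pow_left₀ (by positivity)
    rw [Nat.cast_sub hWn]; linarith
  have h5 : (((n - W.card).choose m : ℕ) : ℝ) * (n : ℝ) ^ m
      ≤ ((1 - lam) ^ m * (n.choose m : ℝ)) * (n : ℝ) ^ m := by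
    calc _ ≤ _ := h3
      _ ≤ (n.choose m : ℝ) * ((1 - lam) * n) ^ m := by gcongr
      _ = _ := by rw [mul_pow]; ring
  exact le_of_mul_le_mul_right h5 (by positivity)

/-- weight of a pair -/
def wt {n : ℕ} (m : ℕ) (A B : Finset (Fin n)) (x y : Fin n) : ℝ :=
  ∑ Q ∈ (Finset.univ : Finset (Fin n)).powersetCard m,
    if x ∈ Q ∧ y ∈ Q then 1 / (((Q ∩ A).card : ℝ) * ((Q ∩ B).card : ℝ)) else 0

lemma wt_perm {n m : ℕ} (A B : Finset (Fin n)) (x y : Fin n) (σ : Equiv.Perm (Fin n))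
    (hA : A.map σ.toEmbedding = A) (hB : B.map σ.toEmbedding = B) :
    wt m A B (σ x) (σ y) = wt m A B x y := by
  unfold wt
  symm
  apply Finset.sum_equiv σ.finsetCongr
  · intro Q
    simp [mem_powersetCard]
  · intro Q _
    have e1 : ((Q.map σ.toEmbedding) ∩ A).card = (Q ∩ A).card := by
      conv_lhs => rw [← hA]
      rw [← map_inter, card_map]
    have e2 : ((Q.map σ.toEmbedding) ∩ B).card = (Q ∩ B).card := by
      conv_lhs => rw [← hB]
      rw [← map_inter, card_map]
    simp only [Equiv.finsetCongr_apply, e1, e2]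
    simp

lemma map_swap_self {n : ℕ} (A : Finset (Fin n)) (x x' : Fin n)
    (h : (x ∈ A ∧ x' ∈ A) ∨ (x ∉ A ∧ x' ∉ A)) :
    A.map (Equiv.swap x x').toEmbedding = A := by
  apply Finset.eq_of_subset_of_card_le
  · intro z hz
    rw [mem_map] at hz
    obtain ⟨w, hw, rfl⟩ := hz
    simp only [Equiv.coe_toEmbedding, Equiv.swap_apply_def]
    split_ifs <;> grind
  · simp

lemma wt_const {n m : ℕ} (A B : Finset (Fin n)) (hAB : Disjoint A B) (x x' y y' : Fin n)
    (hx : x ∈ A) (hx' : x' ∈ A) (hy : y ∈ B) (hy' : y' ∈ B) :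
    wt m A B x y = wt m A B x' y' := by
  have hd : ∀ z ∈ A, z ∉ B := fun z hz => Finset.disjoint_left.1 hAB hz
  have e1 : wt m A B x' y = wt m A B x y := by
    have := wt_perm (m := m) A B x y (Equiv.swap x x') (map_swap_self _ _ _ (Or.inl ⟨hx, hx'⟩))
      (map_swap_self _ _ _ (Or.inr ⟨hd _ hx, hd _ hx'⟩))
    rwa [Equiv.swap_apply_left, Equiv.swap_apply_of_ne_of_ne] at this
    · rintro rfl; exact hd _ hx hy
    · rintro rfl; exact hd _ hx' hy
  have e2 : wt m A B x' y' = wt m A B x' y := by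
    have := wt_perm (m := m) A B x' y (Equiv.swap y y')
      (map_swap_self _ _ _ (Or.inr ⟨fun h => hd _ h hy, fun h => hd _ h hy'⟩))
      (map_swap_self _ _ _ (Or.inl ⟨hy, hy'⟩))
    rwa [Equiv.swap_apply_left, Equiv.swap_apply_of_ne_of_ne] at this
    · rintro rfl; exact hd _ hx' hy
    · rintro rfl; exact hd _ hx' hy'
  rw [e2, e1]

lemma sum_wt {n m : ℕ} (A B : Finset (Fin n)) (S : Finset (Fin n × Fin n)) :
    ∑ p ∈ S, wt m A B p.1 p.2 = ∑ Q ∈ (Finset.univ : Finset (Fin n)).powersetCard m,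
      ((S.filter fun p => p.1 ∈ Q ∧ p.2 ∈ Q).card : ℝ) /
        (((Q ∩ A).card : ℝ) * ((Q ∩ B).card : ℝ)) := by
  unfold wt
  rw [sum_comm]
  apply sum_congr rfl
  intro Q _
  rw [← sum_filter, sum_const, nsmul_eq_mul, mul_one_div]

lemma pair_aux {n m : ℕ} (A B : Finset (Fin n)) (hAB : Disjoint A B) (hA : A.Nonempty)
    (hB : B.Nonempty) (S : Finset (Fin n × Fin n)) (hS : S ⊆ A ×ˢ B) (δ : ℝ)
    (hδ : (S.card : ℝ) ≤ δ * ((A.card : ℝ) * B.card)) :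
    ∑ Q ∈ (Finset.univ : Finset (Fin n)).powersetCard m,
      ((S.filter fun p => p.1 ∈ Q ∧ p.2 ∈ Q).card : ℝ) /
        (((Q ∩ A).card : ℝ) * ((Q ∩ B).card : ℝ))
    ≤ δ * (((Finset.univ : Finset (Fin n)).powersetCard m).card : ℝ) := by
  obtain ⟨a, ha⟩ := hA
  obtain ⟨b, hb⟩ := hB
  have hc : ∀ T ⊆ A ×ˢ B, ∑ p ∈ T, wt m A B p.1 p.2 = T.card * wt m A B a b := by
    intro T hT
    rw [← nsmul_eq_mul, ← sum_const]
    apply sum_congr rfl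
    intro p hp
    have := mem_product.1 (hT hp)
    exact wt_const A B hAB _ _ _ _ this.1 ha this.2 hb
  have hall : ((A.card : ℝ) * B.card) * wt m A B a b ≤
      (((Finset.univ : Finset (Fin n)).powersetCard m).card : ℝ) := by
    have h1 := hc (A ×ˢ B) (Subset.refl _)
    rw [card_product, Nat.cast_mul] at h1
    rw [← h1, sum_wt, card_eq_sum_ones, Nat.cast_sum]
    apply sum_le_sum
    intro Q _
    have : ((A ×ˢ B).filter fun p => p.1 ∈ Q ∧ p.2 ∈ Q) = (Q ∩ A) ×ˢ (Q ∩ B) := by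
      ext p; simp only [mem_filter, mem_product, mem_inter]; tauto
    rw [this, card_product, Nat.cast_mul, Nat.cast_one]
    exact div_self_le_one _
  have hw : 0 ≤ wt m A B a b := by
    unfold wt
    apply sum_nonneg
    intro Q _
    split_ifs <;> positivity
  have hδ0 : 0 ≤ δ := by
    have hA : 0 < A.card := card_pos.2 ⟨a, ha⟩
    have hB : 0 < B.card := card_pos.2 ⟨b, hb⟩
    have : (0 : ℝ) < (A.card : ℝ) * B.card := by positivity
    by_contra hneg
    push Not at hneg
    have := mul_neg_of_neg_of_pos hneg this
    have : (0 : ℝ) ≤ S.card := by positivity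
    linarith
  rw [← sum_wt, hc S hS]
  calc (S.card : ℝ) * wt m A B a b ≤ (δ * ((A.card : ℝ) * B.card)) * wt m A B a b := by gcongr
    _ = δ * (((A.card : ℝ) * B.card) * wt m A B a b) := by ring
    _ ≤ _ := by gcongr

lemma fiber_card_s11 {r n : ℕ} (A : Fin r → Finset (Fin n)) (i j : Fin r) (hij : i ≠ j)
    (x y : Fin n) (hx : x ∈ A i) (hy : y ∈ A j) :
    ((Fintype.piFinset A).filter fun t => t i = x ∧ t j = y).card * ((A i).card * (A j).card)
      = ∏ k, (A k).card := by
  have h1 : ((Fintype.piFinset A).filter fun t => t i = x ∧ t j = y)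
      = Fintype.piFinset (fun k => if k = i then {x} else if k = j then {y} else A k) := by
    ext t
    simp only [mem_filter, Fintype.mem_piFinset]
    constructor
    · rintro ⟨h, h2, h3⟩ k
      split_ifs with hk hk'
      · subst hk; simp [h2]
      · subst hk'; simp [h3]
      · exact h k
    · intro h
      have hi : t i = x := by simpa using h i
      have hj : t j = y := by simpa [hij.symm] using h j
      refine ⟨fun k => ?_, hi, hj⟩
      have hk := h k
      split_ifs at hk with h1 h2
      · subst h1; rw [hi]; exact hx
      · subst h2; rw [hj]; exact hy
      · exact hk
  have h2 : (A i).card * (A j).card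
      = ∏ k, ((if k = i then (A i).card else 1) * (if k = j then (A j).card else 1)) := by
    rw [prod_mul_distrib]; simp
  rw [h1, Fintype.card_piFinset, h2, ← prod_mul_distrib]
  apply prod_congr rfl
  intro k _
  by_cases hk : k = i
  · subst hk; simp [hij]
  · by_cases hk' : k = j
    · subst hk'; simp [hk]
    · simp [hk, hk']

lemma tuple_aux {r n : ℕ} (A : Fin r → Finset (Fin n)) (hA : ∀ i, (A i).Nonempty)
    (P : Finset (Fin r × Fin r)) (hP : ∀ p ∈ P, p.1 ≠ p.2)
    (S : Fin r × Fin r → Finset (Fin n × Fin n)) (hS : ∀ p ∈ P, S p ⊆ A p.1 ×ˢ A p.2)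
    (hbad : ∀ t ∈ Fintype.piFinset A, ∃ p ∈ P, (t p.1, t p.2) ∈ S p) :
    (1 : ℝ) ≤ ∑ p ∈ P, ((S p).card : ℝ) / (((A p.1).card : ℝ) * ((A p.2).card : ℝ)) := by
  have hpos : ∀ i, (0 : ℝ) < (A i).card := fun i => by exact_mod_cast card_pos.2 (hA i)
  have hprod : (0 : ℝ) < ∏ k, ((A k).card : ℝ) := prod_pos fun k _ => hpos k
  have hcard : ∀ p ∈ P, (((Fintype.piFinset A).filter fun t => (t p.1, t p.2) ∈ S p).card : ℝ)
      = ((S p).card : ℝ) / (((A p.1).card : ℝ) * ((A p.2).card : ℝ)) * ∏ k, ((A k).card : ℝ) := by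
    intro p hp
    rw [card_eq_sum_card_fiberwise (f := fun t => (t p.1, t p.2)) (t := S p)
      (by intro t ht; exact (mem_filter.1 ht).2)]
    push_cast
    rw [div_mul_eq_mul_div, mul_div_assoc, ← nsmul_eq_mul, ← sum_const]
    apply sum_congr rfl
    intro q hq
    have hq' := mem_product.1 (hS p hp hq)
    have := fiber_card_s11 A p.1 p.2 (hP p hp) q.1 q.2 hq'.1 hq'.2
    have h3 : (((Fintype.piFinset A).filter fun t => (t p.1, t p.2) ∈ S p).filter
        fun t => (t p.1, t p.2) = q)
        = ((Fintype.piFinset A).filter fun t => t p.1 = q.1 ∧ t p.2 = q.2) := by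
      ext t
      simp only [mem_filter, Prod.ext_iff]
      constructor
      · rintro ⟨⟨a, b⟩, c⟩; exact ⟨a, c⟩
      · rintro ⟨a, c⟩
        refine ⟨⟨a, ?_⟩, c⟩
        rw [c.1, c.2]; exact hq
    rw [h3, eq_div_iff (mul_pos (hpos _) (hpos _)).ne']
    exact_mod_cast this
  have h1 : Fintype.piFinset A ⊆
      P.biUnion fun p => (Fintype.piFinset A).filter fun t => (t p.1, t p.2) ∈ S p := by
    intro t ht
    obtain ⟨p, hp, h⟩ := hbad t ht
    exact mem_biUnion.2 ⟨p, hp, mem_filter.2 ⟨ht, h⟩⟩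
  have h2 : (((Fintype.piFinset A).card : ℕ) : ℝ) ≤
      ∑ p ∈ P, (((Fintype.piFinset A).filter fun t => (t p.1, t p.2) ∈ S p).card : ℝ) := by
    exact_mod_cast (card_le_card h1).trans card_biUnion_le
  rw [sum_congr rfl hcard, ← sum_mul, Fintype.card_piFinset] at h2
  push_cast at h2
  by_contra hlt
  push Not at hlt
  nlinarith

lemma pairs_card (r : ℕ) :
    2 * ((univ : Finset (Fin r × Fin r)).filter fun p => p.1 < p.2).card ≤ r ^ 2 := by
  have h1 : ((univ : Finset (Fin r × Fin r)).filter fun p => p.1 < p.2).card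
      = ((univ : Finset (Fin r × Fin r)).filter fun p => p.2 < p.1).card := by
    apply card_equiv (Equiv.prodComm _ _)
    intro p; simp
  have h2 : Disjoint ((univ : Finset (Fin r × Fin r)).filter fun p => p.1 < p.2)
      ((univ : Finset (Fin r × Fin r)).filter fun p => p.2 < p.1) := by
    rw [Finset.disjoint_left]
    intro p hp hp'
    simp only [mem_filter, mem_univ, true_and] at hp hp'
    exact lt_asymm hp hp'
  have h3 := card_le_univ (((univ : Finset (Fin r × Fin r)).filter fun p => p.1 < p.2) ∪
      ((univ : Finset (Fin r × Fin r)).filter fun p => p.2 < p.1))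
  rw [card_union_of_disjoint h2] at h3
  simp only [Fintype.card_prod, Fintype.card_fin] at h3
  nlinarith

lemma exp_aux (r : ℕ) (hr : 0 < r) (lam : ℝ) (hl0 : 0 < lam) (hl1 : lam < 1) :
    (r : ℝ) * (1 - lam) ^ ⌈(9 * r / lam : ℝ)⌉₊ ≤ 1 / 12 := by
  have hr' : (1 : ℝ) ≤ r := by exact_mod_cast hr
  set m := ⌈(9 * r / lam : ℝ)⌉₊ with hm
  have h0 : (9 * r / lam : ℝ) ≤ m := Nat.le_ceil _
  have h0' : (9 * r : ℝ) ≤ m * lam := by rwa [div_le_iff₀ hl0] at h0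
  have h1 : (1 - lam) ^ m ≤ Real.exp (-(9 * r)) := by
    calc (1 - lam) ^ m ≤ (Real.exp (-lam)) ^ m :=
          pow_le_pow_left₀ (by linarith) (Real.one_sub_le_exp_neg lam) _
      _ = Real.exp (m * (-lam)) := by rw [Real.exp_nat_mul]
      _ ≤ _ := Real.exp_le_exp.2 (by linarith)
  have h2 : (12 : ℝ) * r ≤ Real.exp (9 * r) := by
    have h3 := Real.add_one_le_exp ((9 : ℝ) / 2 * r)
    have h4 : Real.exp (9 * r) = Real.exp ((9 : ℝ) / 2 * r) * Real.exp ((9 : ℝ) / 2 * r) := by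
      rw [← Real.exp_add]; congr 1; ring
    rw [h4]
    nlinarith
  rw [Real.exp_neg] at h1
  calc (r : ℝ) * (1 - lam) ^ m ≤ r * (Real.exp (9 * r))⁻¹ := by gcongr
    _ ≤ (r : ℝ) * (12 * (r : ℝ))⁻¹ := by gcongr
    _ = 1 / 12 := by field_simp

/-- the counting lemma, Lemma 2.7 of the paper. -/
theorem counting_lemma {r n : ℕ} (F : SimpleGraph (Fin r)) (lam : ℝ)
    (hl0 : 0 < lam) (hl1 : lam < 1) (G : SimpleGraph (Fin n))
    (hn : (9 * r / lam : ℝ) ≤ (n : ℝ))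
    (W : Fin r → Finset (Fin n))
    (hdisj : ∀ i j : Fin r, i ≠ j → Disjoint (W i) (W j))
    (hsize : ∀ i : Fin r, lam * (n : ℝ) ≤ ((W i).card : ℝ))
    (hdens : ∀ i j : Fin r, i < j →
      (F.Adj i j → 1 - 1 / (2 * (r : ℝ) ^ 2) ≤ dens G (W i) (W j)) ∧
      (¬ F.Adj i j → dens G (W i) (W j) ≤ 1 / (2 * (r : ℝ) ^ 2))) :
    (2 / 3 : ℝ) * (((Finset.univ : Finset (Fin n)).powersetCard ⌈(9 * r / lam : ℝ)⌉₊).card : ℝ) ≤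
      ((((Finset.univ : Finset (Fin n)).powersetCard ⌈(9 * r / lam : ℝ)⌉₊).filter
        fun Q => ∃ f : F ↪g G, ∀ x : Fin r, f x ∈ Q).card : ℝ) := by
  rcases Nat.eq_zero_or_pos r with hr0 | hr
  · subst hr0
    rw [filter_true_of_mem]
    · have : (0 : ℝ) ≤ (((Finset.univ : Finset (Fin n)).powersetCard
        ⌈(9 * (0 : ℕ) / lam : ℝ)⌉₊).card : ℝ) := by positivity
      linarith
    · intro Q _
      exact ⟨⟨⟨fun x => x.elim0, fun x => x.elim0⟩, fun {x} => x.elim0⟩, fun x => x.elim0⟩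
  have hr' : (1 : ℝ) ≤ r := by exact_mod_cast hr
  have hnpos : (0 : ℝ) < n := lt_of_lt_of_le (by positivity) hn
  have hn0 : 0 < n := by exact_mod_cast hnpos
  have hexp := exp_aux r hr lam hl0 hl1
  set m := ⌈(9 * r / lam : ℝ)⌉₊ with hm
  set U := (Finset.univ : Finset (Fin n)).powersetCard m with hU
  have hWpos : ∀ i, (0 : ℝ) < (W i).card := fun i => lt_of_lt_of_le (by positivity) (hsize i)
  have hWne : ∀ i, (W i).Nonempty := fun i => card_pos.1 (by exact_mod_cast hWpos i)
  set P := (univ : Finset (Fin r × Fin r)).filter fun p => p.1 < p.2 with hP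
  set S : Fin r × Fin r → Finset (Fin n × Fin n) := fun p =>
    (W p.1 ×ˢ W p.2).filter fun q => ¬ (F.Adj p.1 p.2 ↔ G.Adj q.1 q.2) with hS
  have hScard : ∀ p ∈ P, ((S p).card : ℝ) ≤
      1 / (2 * (r : ℝ) ^ 2) * (((W p.1).card : ℝ) * (W p.2).card) := by
    intro p hp
    have hlt : p.1 < p.2 := (mem_filter.1 hp).2
    have hpp := mul_pos (hWpos p.1) (hWpos p.2)
    have hd : dens G (W p.1) (W p.2) =
        (((W p.1 ×ˢ W p.2).filter fun q => G.Adj q.1 q.2).card : ℝ) /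
          (((W p.1).card : ℝ) * (W p.2).card) := by
      unfold _root_.dens
      rw [SimpleGraph.edgeDensity_def]
      push_cast
      unfold SimpleGraph.interedges Rel.interedges
      congr!
    have hsum : (((W p.1 ×ˢ W p.2).filter fun q => G.Adj q.1 q.2).card : ℝ) +
        (((W p.1 ×ˢ W p.2).filter fun q => ¬ G.Adj q.1 q.2).card : ℝ) =
          ((W p.1).card : ℝ) * (W p.2).card := by
      rw [← Nat.cast_mul, ← card_product]
      exact_mod_cast card_filter_add_card_filter_not (s := W p.1 ×ˢ W p.2)
        (fun q => G.Adj q.1 q.2)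
    obtain ⟨h1, h2⟩ := hdens p.1 p.2 hlt
    by_cases hF : F.Adj p.1 p.2
    · have h := h1 hF
      rw [hd, le_div_iff₀ hpp] at h
      simp only [hS, hF, true_iff]
      linarith
    · have h := h2 hF
      rw [hd, div_le_iff₀ hpp] at h
      simp only [hS, hF, false_iff, not_not]
      exact h
  set good := U.filter fun Q => ∃ f : F ↪g G, ∀ x : Fin r, f x ∈ Q with hgood
  set bad := U.filter fun Q => ¬ ∃ f : F ↪g G, ∀ x : Fin r, f x ∈ Q with hbad
  have hgb : (good.card : ℝ) + bad.card = U.card := by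
    exact_mod_cast card_filter_add_card_filter_not (s := U)
      (fun Q => ∃ f : F ↪g G, ∀ x : Fin r, f x ∈ Q)
  set term : Finset (Fin n) → Fin r × Fin r → ℝ := fun Q p =>
    (((S p).filter fun q => q.1 ∈ Q ∧ q.2 ∈ Q).card : ℝ) /
        (((Q ∩ W p.1).card : ℝ) * ((Q ∩ W p.2).card : ℝ)) with hterm
  have hterm0 : ∀ Q p, 0 ≤ term Q p := fun Q p => by simp only [hterm]; positivity
  have key : ∀ Q ∈ bad, (1 : ℝ) ≤ (∑ i, if Disjoint Q (W i) then (1 : ℝ) else 0) +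
      ∑ p ∈ P, term Q p := by
    intro Q hQ
    have hno := (mem_filter.1 hQ).2
    by_cases hmiss : ∃ i, Disjoint Q (W i)
    · obtain ⟨i, hi⟩ := hmiss
      have h1 : (1 : ℝ) ≤ ∑ i, if Disjoint Q (W i) then (1 : ℝ) else 0 := by
        have := single_le_sum (f := fun i => if Disjoint Q (W i) then (1 : ℝ) else 0)
          (s := univ) (fun j _ => by positivity) (mem_univ i)
        simpa only [hi, if_true] using this
      have h2 : 0 ≤ ∑ p ∈ P, term Q p := sum_nonneg fun p _ => hterm0 Q p
      linarith
    · push Not at hmiss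
      have h1 : 0 ≤ ∑ i, if Disjoint Q (W i) then (1 : ℝ) else 0 :=
        sum_nonneg fun j _ => by positivity
      have h2 : 1 ≤ ∑ p ∈ P, term Q p := by
        apply tuple_aux (fun i => Q ∩ W i)
          (fun i => by
            rw [← Finset.not_disjoint_iff_nonempty_inter]; exact hmiss i) P
          (fun p hp => ((mem_filter.1 hp).2).ne)
          (fun p => (S p).filter fun q => q.1 ∈ Q ∧ q.2 ∈ Q)
        · intro p _ q hq
          simp only [hS, mem_filter, mem_product, mem_inter] at hq ⊢
          tauto
        · intro t ht
          by_contra hcon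
          push Not at hcon
          have htm : ∀ i, t i ∈ Q ∧ t i ∈ W i := fun i => by
            simpa using (Fintype.mem_piFinset.1 ht) i
          have hadj : ∀ i j, i < j → (F.Adj i j ↔ G.Adj (t i) (t j)) := by
            intro i j hij
            by_contra hne
            apply hcon (i, j) (by simp [hP, hij])
            simp only [hS, mem_filter, mem_product]
            exact ⟨⟨⟨(htm i).2, (htm j).2⟩, hne⟩, (htm i).1, (htm j).1⟩
          have hinj : Function.Injective t := by
            intro i j hij
            by_contra hne
            exact Finset.disjoint_left.1 (hdisj i j hne) (htm i).2 (hij ▸ (htm j).2)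
          apply hno
          refine ⟨⟨⟨t, hinj⟩, ?_⟩, fun x => (htm x).1⟩
          intro i j
          show G.Adj (t i) (t j) ↔ F.Adj i j
          rcases lt_trichotomy i j with h | h | h
          · exact (hadj i j h).symm
          · subst h; simp
          · rw [G.adj_comm, F.adj_comm]; exact (hadj j i h).symm
      linarith
  have hb : (bad.card : ℝ) ≤ ∑ Q ∈ U, ((∑ i, if Disjoint Q (W i) then (1 : ℝ) else 0) +
      ∑ p ∈ P, term Q p) := by
    calc (bad.card : ℝ) = ∑ Q ∈ bad, (1 : ℝ) := by simp
      _ ≤ ∑ Q ∈ bad, ((∑ i, if Disjoint Q (W i) then (1 : ℝ) else 0) +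
            ∑ p ∈ P, term Q p) := sum_le_sum key
      _ ≤ _ := by
        apply sum_le_sum_of_subset_of_nonneg (filter_subset _ _)
        intro Q _ _
        exact add_nonneg (sum_nonneg fun j _ => by positivity) (sum_nonneg fun p _ => hterm0 Q p)
  rw [sum_add_distrib, sum_comm, sum_comm (s := U) (t := P)] at hb
  have hm1 : ∑ i : Fin r, ∑ Q ∈ U, (if Disjoint Q (W i) then (1 : ℝ) else 0) ≤
      1 / 12 * U.card := by
    calc _ ≤ ∑ i : Fin r, (1 - lam) ^ m * (U.card : ℝ) := by
          apply sum_le_sum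
          intro i _
          have := miss_aux (m := m) lam hl1 hn0 (W i) (hsize i)
          rw [← sum_filter, sum_const, nsmul_eq_mul, mul_one]
          exact this
      _ = (r * (1 - lam) ^ m) * (U.card : ℝ) := by
          rw [sum_const, card_univ, Fintype.card_fin, nsmul_eq_mul]; ring
      _ ≤ _ := by gcongr
  have hm2 : ∑ p ∈ P, ∑ Q ∈ U, term Q p ≤ 1 / 4 * U.card := by
    calc _ ≤ ∑ p ∈ P, 1 / (2 * (r : ℝ) ^ 2) * (U.card : ℝ) := by
          apply sum_le_sum
          intro p hp
          exact pair_aux (m := m) (W p.1) (W p.2) (hdisj _ _ ((mem_filter.1 hp).2).ne)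
            (hWne _) (hWne _) (S p) (filter_subset _ _) _ (hScard p hp)
      _ = (P.card * (1 / (2 * (r : ℝ) ^ 2))) * (U.card : ℝ) := by
          rw [sum_const, nsmul_eq_mul]; ring
      _ ≤ _ := by
          have h := pairs_card r
          have h' : (2 : ℝ) * P.card ≤ (r : ℝ) ^ 2 := by exact_mod_cast h
          gcongr
          rw [mul_one_div, div_le_iff₀ (by positivity)]
          linarith
  linarith

end
end
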